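/- Let K be a number field, S a finite set of places of K containing all the archimedean ones, and φ an endomorphism of ℙ¹ defined over K of degree d ≥ 2 with good reduction outside S. If φ has a K-rational periodic point of period at least two, then |PrePer(φ,K)| ≤ max{ T(|S|) + CV(d,|S|), L₄(d,|S|) + 2L₂(d,|S|) + 3, 3L₃(d,|S|) + 3 }, where T(s) = 12·7^{4s}, CV(d,s) = (3B(s)+13)d + 27B(s) + C(5,s) + 6C(3,s) + 32, L₂(d,s) = max{ (2(C(3,s)+2)+1)d + 1, (d−1)(1 + B(s)(B(s) + C(3,s) + 3)) }, L₃(d,s) = ((1 + 3B(s))B(s) + 1)(d−1), L₄(d,s) = (C(3,s) + 3)(d−1), B(s) = 2^{16s} and C(n,s) = e^{(6n)^{3n}(ns+1−n)}. In particular |PrePer(φ,K)| is bounded by a linear polynomial in d whose coefficients depend only on |S|. -/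

import Mathlib

open NumberField IsDedekindDomain MvPolynomial
open scoped Classical nonZeroDivisors

set_option synthInstance.maxHeartbeats 1000000
set_option maxHeartbeats 1000000

noncomputable section

/-- The projective line over `K`. -/
abbrev P1 (K : Type*) [Field K] := Projectivization K (Fin 2 → K)

variable {K : Type*} [Field K] [NumberField K]

/-- The additive `v`-adic valuation (order) of `x ∈ K`, with junk value `0` at `x = 0`,
normalized so that it is surjective onto `ℤ`. -/
def ordAt (v : HeightOneSpectrum (𝓞 K)) (x : K) : ℤ :=
  if hx : x = 0 then 0
  else - Multiplicative.toAdd (WithZero.unzero ((v.valuation K).ne_zero_iff.mpr hx))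

/-- `min (v(x), v(y))` for a pair of coordinates, not both zero. -/
def minOrd (v : HeightOneSpectrum (𝓞 K)) (x y : K) : ℤ :=
  if x = 0 then ordAt v y else if y = 0 then ordAt v x else min (ordAt v x) (ordAt v y)

/-- The `v`-adic logarithmic distance between two points of `ℙ¹(K)`:
`δ_v(P,Q) = v(x₁y₂ - x₂y₁) - min(v x₁, v y₁) - min(v x₂, v y₂)`, with value `⊤` when `P = Q`
(it is independent of the choice of homogeneous coordinates, so we compute it on the chosen
representatives). -/
def logDist (v : HeightOneSpectrum (𝓞 K)) (P Q : P1 K) : WithTop ℤ :=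
  if P = Q then ⊤
  else ((ordAt v (P.rep 0 * Q.rep 1 - P.rep 1 * Q.rep 0)
        - minOrd v (P.rep 0) (P.rep 1) - minOrd v (Q.rep 0) (Q.rep 1) : ℤ) : WithTop ℤ)

/-- An endomorphism of `ℙ¹` of degree `d` defined over `K`, given by a pair of homogeneous
forms of degree `d` with no common zero over the algebraic closure, together with the induced
self-map of `ℙ¹(K)`. -/
structure P1Map (K : Type*) [Field K] (d : ℕ) where
  toFun : P1 K → P1 K
  F : MvPolynomial (Fin 2) K
  G : MvPolynomial (Fin 2) K
  homF : F.IsHomogeneous d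
  homG : G.IsHomogeneous d
  coprime : ∀ x y : AlgebraicClosure K,
    aeval ![x, y] F = 0 → aeval ![x, y] G = 0 → x = 0 ∧ y = 0
  compat : ∀ (x y : K) (hxy : ![x, y] ≠ 0)
    (h : ![eval ![x, y] F, eval ![x, y] G] ≠ 0),
    toFun (Projectivization.mk K ![x, y] hxy) =
      Projectivization.mk K ![eval ![x, y] F, eval ![x, y] G] h

variable {d : ℕ}

/-- `φ` has good reduction at the finite place `v`: some representing pair of forms has
coefficients in the valuation ring at `v`, not all in the maximal ideal, and the reductions
of the two forms modulo `v` have no common zero in `ℙ¹` of the algebraic closure of the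
residue field. -/
def GoodReductionAt (φ : P1Map K d) (v : HeightOneSpectrum (𝓞 K)) : Prop :=
  ∃ c : K, c ≠ 0 ∧
    ∃ F₀ G₀ : MvPolynomial (Fin 2) (v.valuation (K := K)).valuationSubring,
      MvPolynomial.map ((v.valuation (K := K)).valuationSubring.subtype) F₀ = C c * φ.F ∧
      MvPolynomial.map ((v.valuation (K := K)).valuationSubring.subtype) G₀ = C c * φ.G ∧
      ((∃ m, F₀.coeff m ∉ IsLocalRing.maximalIdeal (v.valuation (K := K)).valuationSubring) ∨
        (∃ m, G₀.coeff m ∉ IsLocalRing.maximalIdeal (v.valuation (K := K)).valuationSubring)) ∧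
      ∀ x y : AlgebraicClosure
          (IsLocalRing.ResidueField (v.valuation (K := K)).valuationSubring),
        eval ![x, y] (MvPolynomial.map
          ((algebraMap (IsLocalRing.ResidueField (v.valuation (K := K)).valuationSubring)
              (AlgebraicClosure _)).comp
            (IsLocalRing.residue _)) F₀) = 0 →
        eval ![x, y] (MvPolynomial.map
          ((algebraMap (IsLocalRing.ResidueField (v.valuation (K := K)).valuationSubring)
              (AlgebraicClosure _)).comp
            (IsLocalRing.residue _)) G₀) = 0 →
        x = 0 ∧ y = 0

/-- `φ` has good reduction outside `S`, where `S` consists of all archimedean places together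
with the finite places in `T`. -/
def GoodReductionOutside (φ : P1Map K d) (T : Finset (HeightOneSpectrum (𝓞 K))) : Prop :=
  ∀ v ∉ T, GoodReductionAt φ v

/-- `P` is a periodic point of `φ`. -/
def IsPeriodicPoint (φ : P1Map K d) (P : P1 K) : Prop :=
  ∃ n, 0 < n ∧ φ.toFun^[n] P = P

/-- `P` is a preperiodic point of `φ`. -/
def IsPreperiodicPoint (φ : P1Map K d) (P : P1 K) : Prop :=
  ∃ m, IsPeriodicPoint φ (φ.toFun^[m] P)

/-- `P` is a tail point of `φ`: preperiodic but not periodic. -/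
def IsTailPoint (φ : P1Map K d) (P : P1 K) : Prop :=
  IsPreperiodicPoint φ P ∧ ¬ IsPeriodicPoint φ P

/-- The set `Tail(φ,K,P)` of `K`-rational tail points of `P`: non-periodic points having `P`
in their forward orbit. -/
def TailOf (φ : P1Map K d) (P : P1 K) : Set (P1 K) :=
  {Q | ¬ IsPeriodicPoint φ Q ∧ ∃ n, φ.toFun^[n] Q = P}

/-- `P = [a:b]` is a critical point of `φ = [F:G]`: the algebraic condition
`φ([x:y]) = φ([a:b])`, i.e. the form `G(a,b)·F(X,Y) - F(a,b)·G(X,Y)`, vanishes to order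
at least `2` at `[a:b]`. -/
def IsCriticalPt (φ : P1Map K d) (P : P1 K) : Prop :=
  ∃ (a b : K) (hab : ![a, b] ≠ 0), P = Projectivization.mk K ![a, b] hab ∧
    (C b * X 0 - C a * X 1) ^ 2 ∣
      (C (eval ![a, b] φ.G) * φ.F - C (eval ![a, b] φ.F) * φ.G)

/-- `P` belongs to a critical cycle of `φ`: it lies in the orbit of a critical periodic
point. -/
def InCriticalCycle (φ : P1Map K d) (P : P1 K) : Prop :=
  ∃ Q, IsCriticalPt φ Q ∧ IsPeriodicPoint φ Q ∧ ∃ n, φ.toFun^[n] Q = P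

/-- The cardinality `|S|` of the set of places `S` consisting of all archimedean places
together with the finite places in `T`. -/
def sCard (K : Type*) [Field K] [NumberField K] (T : Finset (HeightOneSpectrum (𝓞 K))) : ℕ :=
  T.card + Fintype.card (InfinitePlace K)

/-- `B(s) = 2^{16 s}`. -/
def Bconst (s : ℕ) : ℕ := 2 ^ (16 * s)

/-- `C(n,s) = e^{(6n)^{3n} (n s + 1 - n)}`. -/
def Cconst (n s : ℕ) : ℝ := Real.exp ((6 * n : ℝ) ^ (3 * n) * (n * s + 1 - n))

/-- `CV(d,s) = (3B(s)+13)d + 27B(s) + C(5,s) + 6C(3,s) + 32`. -/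
def CVconst (d s : ℕ) : ℝ :=
  (3 * (Bconst s : ℝ) + 13) * d + 27 * (Bconst s : ℝ) + Cconst 5 s + 6 * Cconst 3 s + 32

/-- `L₁(d,s) = (d-1)(1 + d(1 + B(s)))`. -/
def L1const (d s : ℕ) : ℕ := (d - 1) * (1 + d * (1 + Bconst s))

/-- `L₂(d,s) = max{(2(C(3,s)+2)+1)d + 1, (d-1)(1 + B(s)(B(s) + C(3,s) + 3))}`. -/
def L2const (d s : ℕ) : ℝ :=
  max ((2 * (Cconst 3 s + 2) + 1) * d + 1)
    (((d : ℝ) - 1) * (1 + (Bconst s : ℝ) * ((Bconst s : ℝ) + Cconst 3 s + 3)))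

/-- `L₃(d,s) = ((1 + 3B(s))B(s) + 1)(d-1)`. -/
def L3const (d s : ℕ) : ℕ := ((1 + 3 * Bconst s) * Bconst s + 1) * (d - 1)

/-- `L₄(d,s) = (C(3,s) + 3)(d-1)`. -/
def L4const (d s : ℕ) : ℝ := (Cconst 3 s + 3) * ((d : ℝ) - 1)

end

/-- The `v`-adic absolute value. -/
noncomputable abbrev av {K : Type*} [Field K] [NumberField K] (v : HeightOneSpectrum (𝓞 K)) :
    AbsoluteValue K ℝ := NumberField.HeightOneSpectrum.adicAbv K v

/-- The index type of the places in `S`. -/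
abbrev Pl {K : Type*} [Field K] [NumberField K] (T : Finset (HeightOneSpectrum (𝓞 K))) :=
  InfinitePlace K ⊕ {v // v ∈ T}

/-- absolute value attached to a place in `S`. -/
noncomputable def pav {K : Type*} [Field K] [NumberField K] {T : Finset (HeightOneSpectrum (𝓞 K))} :
    Pl T → AbsoluteValue K ℝ
  | Sum.inl w => w.1
  | Sum.inr v => av v.1

/-- multiplicity of a place in `S`. -/
noncomputable def pmu {K : Type*} [Field K] [NumberField K] {T : Finset (HeightOneSpectrum (𝓞 K))} :
    Pl T → ℝ
  | Sum.inl w => w.mult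
  | Sum.inr _ => 1

/-- local log. -/
noncomputable def lv {K : Type*} [Field K] [NumberField K] {T : Finset (HeightOneSpectrum (𝓞 K))}
    (p : Pl T) (x : K) : ℝ := pmu p * Real.log (pav p x)

section places
variable {K : Type*} [Field K] [NumberField K] (T : Finset (HeightOneSpectrum (𝓞 K)))

lemma card_Pl : Fintype.card (Pl T) = sCard K T := by
  simp [Pl, sCard, add_comm]

lemma pmu_pos {T : Finset (HeightOneSpectrum (𝓞 K))} (p : Pl T) : 1 ≤ pmu p := by
  rcases p with w | v
  · simp only [pmu]
    exact_mod_cast w.mult_pos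
  · simp [pmu]

lemma pmu_le {T : Finset (HeightOneSpectrum (𝓞 K))} (p : Pl T) : pmu p ≤ 2 := by
  rcases p with w | v
  · simp only [pmu, InfinitePlace.mult]
    split_ifs <;> norm_num
  · simp [pmu]

lemma lv_mul {T : Finset (HeightOneSpectrum (𝓞 K))} (p : Pl T) {x y : K} (hx : x ≠ 0) (hy : y ≠ 0) :
    lv p (x * y) = lv p x + lv p y := by
  simp only [lv, map_mul]
  rw [Real.log_mul (by simpa using hx) (by simpa using hy)]
  ring

lemma lv_inv {T : Finset (HeightOneSpectrum (𝓞 K))} (p : Pl T) {x : K} :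
    lv p (x⁻¹) = - lv p x := by
  simp only [lv, map_inv₀, Real.log_inv]
  ring

lemma lv_div {T : Finset (HeightOneSpectrum (𝓞 K))} (p : Pl T) {x y : K} (hx : x ≠ 0) (hy : y ≠ 0) :
    lv p (x / y) = lv p x - lv p y := by
  rw [div_eq_mul_inv, lv_mul p hx (inv_ne_zero hy), lv_inv]; ring

lemma lv_neg {T : Finset (HeightOneSpectrum (𝓞 K))} (p : Pl T) (x : K) :
    lv p (-x) = lv p x := by
  simp only [lv]
  rw [AbsoluteValue.map_neg]

lemma av_finite {x : K} (hx : x ≠ 0) :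
    (Function.mulSupport fun v : HeightOneSpectrum (𝓞 K) => av v x).Finite := by
  have h := FinitePlace.hasFiniteMulSupport hx
  rw [Function.HasFiniteMulSupport] at h
  have := h.preimage (f := fun v : HeightOneSpectrum (𝓞 K) => FinitePlace.mk v)
    (fun a _ b _ hab => FinitePlace.mk_eq_iff.mp hab)
  refine this.subset ?_
  intro v hv
  simpa [FinitePlace.mk_apply, FinitePlace.norm_embedding] using hv

lemma prodform {x : K} (hx : x ≠ 0) :
    (∏ w : InfinitePlace K, w x ^ w.mult) * ∏ᶠ v : HeightOneSpectrum (𝓞 K), av v x = 1 := by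
  rw [← NumberField.prod_abs_eq_one hx]
  congr 1
  rw [← finprod_comp_equiv FinitePlace.equivHeightOneSpectrum.symm]
  apply finprod_congr
  intro v
  rw [FinitePlace.equivHeightOneSpectrum_symm_apply, FinitePlace.norm_embedding]

/-- split of the product formula -/
lemma prodform' {x : K} (hx : x ≠ 0) :
    Real.exp (∑ p : Pl T, lv p x) * ∏ᶠ v : HeightOneSpectrum (𝓞 K), (if v ∈ T then 1 else av v x) = 1 := by
  have hpos : ∀ v : HeightOneSpectrum (𝓞 K), 0 < av v x := fun v => (av v).pos hx
  refine Eq.trans ?_ (prodform hx)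
  rw [Real.exp_sum, Fintype.prod_sum_type, mul_assoc]
  congr 1
  · apply Finset.prod_congr rfl
    intro w _
    simp only [lv, pmu, pav]
    rw [← Real.log_pow, Real.exp_log]
    · rfl
    · exact pow_pos (w.1.pos hx) _
  · have e1 : (∏ p : {v // v ∈ T}, Real.exp (lv (T := T) (Sum.inr p) x)) = ∏ v ∈ T, av v x := by
      rw [← Finset.prod_coe_sort T (fun v => av v x)]
      apply Finset.prod_congr rfl
      intro v _
      simp only [lv, pmu, pav, one_mul]
      rw [Real.exp_log (hpos _)]
    have e2 : ∏ v ∈ T, av v x = ∏ᶠ v : HeightOneSpectrum (𝓞 K), (if v ∈ T then av v x else 1) := by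
      rw [finprod_eq_prod_of_mulSupport_subset (s := T)]
      · apply Finset.prod_congr rfl
        intro v hv
        simp [hv]
      · intro v hv
        by_contra h
        simp at h
        simp [h] at hv
    rw [e1, e2, ← finprod_mul_distrib]
    · apply finprod_congr
      intro v
      by_cases h : v ∈ T <;> simp [h]
    · refine T.finite_toSet.subset ?_
      intro v hv
      by_contra h
      simp at h
      simp [h] at hv
    · refine (av_finite hx).subset ?_
      intro v hv
      by_contra h
      apply hv
      simp at h
      simp [h]

lemma PF {x : K} (hx : x ≠ 0) (h : ∀ v ∉ T, av v x ≤ 1) : 0 ≤ ∑ p : Pl T, lv p x := by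
  have h1 := prodform' T hx
  have h2 : ∏ᶠ v : HeightOneSpectrum (𝓞 K), (if v ∈ T then 1 else av v x) ≤ 1 := by
    apply finprod_induction (p := fun r : ℝ => 0 ≤ r ∧ r ≤ 1) (by norm_num) _ _ |>.2
    · rintro a b ⟨ha, ha'⟩ ⟨hb, hb'⟩
      exact ⟨mul_nonneg ha hb, mul_le_one₀ ha' hb hb'⟩
    · intro v
      by_cases hv : v ∈ T
      · simp [hv]
      · simp only [hv, if_false]
        exact ⟨(av v).nonneg _, h v hv⟩
  by_contra hneg
  push Not at hneg
  have h3 : Real.exp (∑ p : Pl T, lv p x) < 1 := by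
    rwa [Real.exp_lt_one_iff]
  have h4 := Real.exp_pos (∑ p : Pl T, lv p x)
  nlinarith

lemma PFeq {x : K} (hx : x ≠ 0) (h : ∀ v ∉ T, av v x = 1) : ∑ p : Pl T, lv p x = 0 := by
  apply le_antisymm
  · have := PF T (inv_ne_zero hx) (fun v hv => by rw [map_inv₀, h v hv]; norm_num)
    simp only [lv_inv, Finset.sum_neg_distrib] at this
    linarith
  · exact PF T hx (fun v hv => (h v hv).le)

lemma av_add (v : HeightOneSpectrum (𝓞 K)) (x y : K) : av v (x + y) ≤ max (av v x) (av v y) :=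
  NumberField.HeightOneSpectrum.adicAbv_add_le_max K v x y

lemma av_sub (v : HeightOneSpectrum (𝓞 K)) (x y : K) : av v (x - y) ≤ max (av v x) (av v y) := by
  rw [sub_eq_add_neg, ← (av v).map_neg y]
  exact av_add v _ _

lemma av_sub_comm (v : HeightOneSpectrum (𝓞 K)) (x y : K) : av v (x - y) = av v (y - x) := by
  rw [← neg_sub, (av v).map_neg]

/-- Lemma U -/
lemma eq_one_of_close {w : K} (hf : ∀ v, av v (w - 1) ≤ 1) (hi : ∀ p : InfinitePlace K, p (w - 1) < 1) :
    w = 1 := by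
  by_contra hne
  have h0 : w - 1 ≠ 0 := sub_ne_zero.mpr hne
  have h := PF ∅ h0 (fun v _ => hf v)
  have : ∑ p : Pl (∅ : Finset (HeightOneSpectrum (𝓞 K))), lv p (w - 1) < 0 := by
    apply Finset.sum_neg
    · rintro (p | p) _
      · simp only [lv, pmu, pav]
        have h1 : Real.log (p.1 (w - 1)) < 0 := Real.log_neg (p.1.pos h0) (hi p)
        have h2 : (0:ℝ) < p.mult := by exact_mod_cast p.mult_pos
        nlinarith
      · exact absurd p.2 (Finset.notMem_empty _)
    · obtain ⟨p⟩ : Nonempty (InfinitePlace K) := inferInstance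
      exact ⟨Sum.inl p, Finset.mem_univ _⟩
  linarith

lemma av_discrete (v : HeightOneSpectrum (𝓞 K)) {x : K} (hx : x ≠ 0)
    (h : |Real.log (av v x)| < Real.log 2) : av v x = 1 := by
  have hN : (1:ℕ) < Ideal.absNorm v.asIdeal := NumberField.HeightOneSpectrum.one_lt_absNorm v
  have hN2 : (2:ℝ) ≤ (Ideal.absNorm v.asIdeal : ℝ) := by exact_mod_cast hN
  have hv : v.valuation K x ≠ 0 := (v.valuation K).ne_zero_iff.mpr hx
  have e : av v x = (Ideal.absNorm v.asIdeal : ℝ) ^ (Multiplicative.toAdd (WithZero.unzero hv)) := by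
    rw [NumberField.HeightOneSpectrum.adicAbv_def, WithZeroMulInt.toNNReal_neg_apply _ hv]
    push_cast
    rfl
  set n := Multiplicative.toAdd (WithZero.unzero hv)
  rw [e] at h ⊢
  rw [Real.log_zpow, abs_mul] at h
  have hl : Real.log 2 ≤ Real.log (Ideal.absNorm v.asIdeal : ℝ) := Real.log_le_log (by norm_num) hN2
  have hl0 : 0 < Real.log 2 := Real.log_pos (by norm_num)
  have hn : n = 0 := by
    by_contra hn
    have : (1:ℝ) ≤ |(n:ℝ)| := by exact_mod_cast Int.one_le_abs hn
    rw [abs_of_pos (hl0.trans_le hl)] at h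
    nlinarith
  rw [hn]; simp

end places

section dist
variable {K : Type*} [Field K] [NumberField K]

/-- size of a representative -/
noncomputable def mx (v : HeightOneSpectrum (𝓞 K)) (a : Fin 2 → K) : ℝ := max (av v (a 0)) (av v (a 1))

/-- chordal distance -/
noncomputable def dd (v : HeightOneSpectrum (𝓞 K)) (P Q : P1 K) : ℝ :=
  av v (P.rep 0 * Q.rep 1 - P.rep 1 * Q.rep 0) / (mx v P.rep * mx v Q.rep)

lemma mx_pos (v : HeightOneSpectrum (𝓞 K)) {a : Fin 2 → K} (ha : a ≠ 0) : 0 < mx v a := by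
  by_contra h
  push Not at h
  apply ha
  have h0 : av v (a 0) = 0 := le_antisymm ((le_max_left _ _).trans h) ((av v).nonneg _)
  have h1 : av v (a 1) = 0 := le_antisymm ((le_max_right _ _).trans h) ((av v).nonneg _)
  ext i
  fin_cases i
  · simpa using h0
  · simpa using h1

lemma mx_smul (v : HeightOneSpectrum (𝓞 K)) (c : K) (a : Fin 2 → K) : mx v (c • a) = av v c * mx v a := by
  simp only [mx, Pi.smul_apply, smul_eq_mul, map_mul]
  rw [mul_max_of_nonneg _ _ ((av v).nonneg _)]

lemma dd_mk (v : HeightOneSpectrum (𝓞 K)) {a b : Fin 2 → K} (ha : a ≠ 0) (hb : b ≠ 0) :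
    dd v (Projectivization.mk K a ha) (Projectivization.mk K b hb) =
      av v (a 0 * b 1 - a 1 * b 0) / (mx v a * mx v b) := by
  obtain ⟨c, hc⟩ := Projectivization.exists_smul_eq_mk_rep K a ha
  obtain ⟨e, he⟩ := Projectivization.exists_smul_eq_mk_rep K b hb
  have hc0 : av v (c:K) ≠ 0 := by simp
  have he0 : av v (e:K) ≠ 0 := by simp
  simp only [dd, ← hc, ← he]
  have h1 : c • a = (c:K) • a := rfl
  have h2 : e • b = (e:K) • b := rfl
  rw [h1, h2, mx_smul, mx_smul]
  simp only [Pi.smul_apply, smul_eq_mul]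
  have : (c:K) * a 0 * (e * b 1) - c * a 1 * (e * b 0) = c * e * (a 0 * b 1 - a 1 * b 0) := by ring
  rw [this, map_mul, map_mul]
  have := (mx_pos v ha).ne'
  have := (mx_pos v hb).ne'
  field_simp

lemma mk_eq_iff_det {a b : Fin 2 → K} (ha : a ≠ 0) (hb : b ≠ 0) :
    Projectivization.mk K a ha = Projectivization.mk K b hb ↔ a 0 * b 1 - a 1 * b 0 = 0 := by
  rw [Projectivization.mk_eq_mk_iff']
  constructor
  · rintro ⟨c, rfl⟩
    simp; ring
  · intro h
    by_cases hb0 : b 0 = 0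
    · have hb1 : b 1 ≠ 0 := by
        intro hb1; apply hb; ext i; fin_cases i <;> simp [hb0, hb1]
      refine ⟨a 1 / b 1, ?_⟩
      have ha0 : a 0 = 0 := by
        rw [hb0] at h
        simpa [hb1] using h
      ext i; fin_cases i
      · simp [ha0, hb0]
      · simp [hb1]
    · refine ⟨a 0 / b 0, ?_⟩
      ext i; fin_cases i
      · simp [hb0]
      · simp
        field_simp
        linear_combination h

lemma dd_self (v : HeightOneSpectrum (𝓞 K)) (P : P1 K) : dd v P P = 0 := by
  simp [dd, mul_comm]

lemma dd_comm (v : HeightOneSpectrum (𝓞 K)) (P Q : P1 K) : dd v P Q = dd v Q P := by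
  simp only [dd]
  rw [mul_comm (mx v P.rep), av_sub_comm]
  congr 2
  ring

lemma dd_nonneg (v : HeightOneSpectrum (𝓞 K)) (P Q : P1 K) : 0 ≤ dd v P Q := by
  have := mx_pos v P.rep_nonzero
  have := mx_pos v Q.rep_nonzero
  simp only [dd]
  positivity

lemma dd_le_one (v : HeightOneSpectrum (𝓞 K)) (P Q : P1 K) : dd v P Q ≤ 1 := by
  have h1 := mx_pos v P.rep_nonzero
  have h2 := mx_pos v Q.rep_nonzero
  simp only [dd]
  rw [div_le_one (by positivity)]
  refine (av_sub v _ _).trans (max_le ?_ ?_)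
  · rw [map_mul]
    exact mul_le_mul (le_max_left _ _) (le_max_right _ _) ((av v).nonneg _) h1.le
  · rw [map_mul]
    exact mul_le_mul (le_max_right _ _) (le_max_left _ _) ((av v).nonneg _) h1.le

lemma dd_eq_zero (v : HeightOneSpectrum (𝓞 K)) {P Q : P1 K} (h : dd v P Q = 0) : P = Q := by
  have h1 := mx_pos v P.rep_nonzero
  have h2 := mx_pos v Q.rep_nonzero
  simp only [dd] at h
  rw [div_eq_zero_iff] at h
  rcases h with h | h
  · rw [← P.mk_rep, ← Q.mk_rep, mk_eq_iff_det]
    exact (av v).eq_zero.mp h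
  · nlinarith

lemma dd_pos (v : HeightOneSpectrum (𝓞 K)) {P Q : P1 K} (h : P ≠ Q) : 0 < dd v P Q :=
  lt_of_le_of_ne (dd_nonneg v P Q) (fun h' => h (dd_eq_zero v h'.symm))

lemma dd_ultra (v : HeightOneSpectrum (𝓞 K)) (P Q R : P1 K) : dd v P R ≤ max (dd v P Q) (dd v Q R) := by
  have h1 := mx_pos v P.rep_nonzero
  have h2 := mx_pos v Q.rep_nonzero
  have h3 := mx_pos v R.rep_nonzero
  simp only [dd]
  set p := P.rep
  set q := Q.rep
  set r := R.rep
  have key : ∀ i, av v (q i) * av v (p 0 * r 1 - p 1 * r 0) ≤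
      max (av v (p 0 * q 1 - p 1 * q 0) * mx v r) (av v (q 0 * r 1 - q 1 * r 0) * mx v p) := by
    intro i
    rw [← map_mul]
    have e : q i * (p 0 * r 1 - p 1 * r 0) = (p 0 * q 1 - p 1 * q 0) * r i
        + (q 0 * r 1 - q 1 * r 0) * p i := by
      fin_cases i <;> simp <;> ring
    rw [e]
    refine (av_add v _ _).trans (max_le_max ?_ ?_)
    · rw [map_mul]
      refine mul_le_mul_of_nonneg_left ?_ ((av v).nonneg _)
      fin_cases i
      · exact le_max_left _ _
      · exact le_max_right _ _
    · rw [map_mul]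
      refine mul_le_mul_of_nonneg_left ?_ ((av v).nonneg _)
      fin_cases i
      · exact le_max_left _ _
      · exact le_max_right _ _
  have key2 : mx v q * av v (p 0 * r 1 - p 1 * r 0) ≤
      max (av v (p 0 * q 1 - p 1 * q 0) * mx v r) (av v (q 0 * r 1 - q 1 * r 0) * mx v p) := by
    rw [mx, max_mul_of_nonneg _ _ ((av v).nonneg _)]
    exact max_le (key 0) (key 1)
  rw [div_le_iff₀ (by positivity), max_mul_of_nonneg _ _ (by positivity)]
  have e1 : av v (p 0 * q 1 - p 1 * q 0) / (mx v p * mx v q) * (mx v p * mx v r) =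
     (av v (p 0 * q 1 - p 1 * q 0) * mx v r) / mx v q := by field_simp
  have e2 : av v (q 0 * r 1 - q 1 * r 0) / (mx v q * mx v r) * (mx v p * mx v r) =
     (av v (q 0 * r 1 - q 1 * r 0) * mx v p) / mx v q := by field_simp
  rw [e1, e2]
  rcases le_max_iff.mp key2 with h | h
  · apply le_max_of_le_left
    rw [le_div_iff₀ h2]; linarith
  · apply le_max_of_le_right
    rw [le_div_iff₀ h2]; linarith

/-- isosceles: if `d(P,Q) < d(Q,R)` then `d(P,R) = d(Q,R)` -/
lemma dd_isos (v : HeightOneSpectrum (𝓞 K)) {P Q R : P1 K} (h : dd v P Q < dd v Q R) :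
    dd v P R = dd v Q R := by
  apply le_antisymm
  · exact (dd_ultra v P Q R).trans (max_le h.le le_rfl)
  · have := dd_ultra v Q P R
    rw [dd_comm v Q P] at this
    rcases le_max_iff.mp this with h' | h'
    · linarith
    · exact h'

end dist

section sumlemma
variable {K : Type*} [Field K] [NumberField K]

/-- the local ring -/
noncomputable abbrev Ov (v : HeightOneSpectrum (𝓞 K)) := (v.valuation (K := K)).valuationSubring

lemma mem_Ov (v : HeightOneSpectrum (𝓞 K)) (x : K) : x ∈ Ov v ↔ av v x ≤ 1 := by
  rw [Valuation.mem_valuationSubring_iff, NumberField.HeightOneSpectrum.adicAbv_def]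
  have := WithZeroMulInt.toNNReal_le_one_iff (m := v.valuation K x)
    (NumberField.HeightOneSpectrum.one_lt_absNorm_nnreal v)
  rw [← this]
  norm_cast

lemma Ov_le (v : HeightOneSpectrum (𝓞 K)) (x : Ov v) : av v (x : K) ≤ 1 := (mem_Ov v x).mp x.2

lemma residue_zero (v : HeightOneSpectrum (𝓞 K)) (x : Ov v) (h : av v (x : K) < 1) :
    IsLocalRing.residue (Ov v) x = 0 := by
  rw [IsLocalRing.residue_eq_zero_iff, IsLocalRing.mem_maximalIdeal, mem_nonunits_iff]
  intro hu
  obtain ⟨y, hy⟩ := hu.exists_right_inv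
  have h1 := Ov_le v y
  have h2 : av v ((x : K) * y) = 1 := by
    have : (x : K) * (y : K) = 1 := by exact_mod_cast congrArg Subtype.val hy
    rw [this, map_one]
  rw [map_mul] at h2
  have h3 := (av v).nonneg (x : K)
  have h4 := (av v).nonneg (y : K)
  nlinarith

variable {d : ℕ}

lemma FG_ne (φ : P1Map K d) {a : Fin 2 → K} (ha : a ≠ 0) :
    ![eval a φ.F, eval a φ.G] ≠ 0 := by
  intro h
  have hF : eval a φ.F = 0 := by simpa using congrFun h 0
  have hG : eval a φ.G = 0 := by simpa using congrFun h 1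
  have e : ∀ H : MvPolynomial (Fin 2) K,
      aeval ![algebraMap K (AlgebraicClosure K) (a 0), algebraMap K (AlgebraicClosure K) (a 1)] H
        = algebraMap K (AlgebraicClosure K) (eval a H) := by
    intro H
    have : (![algebraMap K (AlgebraicClosure K) (a 0), algebraMap K (AlgebraicClosure K) (a 1)]) =
        (algebraMap K (AlgebraicClosure K)) ∘ a := by
      ext i; fin_cases i <;> simp
    rw [this, aeval_algebraMap_apply]
    rfl
  have := φ.coprime _ _ (by rw [e, hF, map_zero]) (by rw [e, hG, map_zero])
  apply ha
  ext i; fin_cases i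
  · simpa using this.1
  · simpa using this.2

lemma toFun_mk (φ : P1Map K d) {a : Fin 2 → K} (ha : a ≠ 0) :
    φ.toFun (Projectivization.mk K a ha) = Projectivization.mk K ![eval a φ.F, eval a φ.G] (FG_ne φ ha) := by
  have e : a = ![a 0, a 1] := by ext i; fin_cases i <;> simp
  have h := φ.compat (a 0) (a 1) (by rw [← e]; exact ha) (by rw [← e]; exact FG_ne φ ha)
  simp only [← e] at h
  exact h

/-- consequence of good reduction -/
lemma gr_data (φ : P1Map K d) {v : HeightOneSpectrum (𝓞 K)} (h : GoodReductionAt φ v) :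
    ∃ F₀ G₀ : MvPolynomial (Fin 2) (Ov v),
      ∀ a : Fin 2 → Ov v, (a 0 = 1 ∨ a 1 = 1) → ∀ ha : (fun i => (a i : K)) ≠ 0,
        ∃ hb : ![((eval a F₀ : Ov v) : K), ((eval a G₀ : Ov v) : K)] ≠ 0,
          φ.toFun (Projectivization.mk K (fun i => (a i : K)) ha) =
            Projectivization.mk K ![((eval a F₀ : Ov v) : K), ((eval a G₀ : Ov v) : K)] hb ∧
          mx v ![((eval a F₀ : Ov v) : K), ((eval a G₀ : Ov v) : K)] = 1 := by
  obtain ⟨c, hc, F₀, G₀, hF, hG, -, hres⟩ := h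
  refine ⟨F₀, G₀, fun a ha1 ha => ?_⟩
  have ev : ∀ H : MvPolynomial (Fin 2) (Ov v), ((eval a H : Ov v) : K) =
      eval (fun i => (a i : K)) (MvPolynomial.map (Ov v).subtype H) := by
    intro H
    rw [eval_map]
    have := (MvPolynomial.eval₂_comp_left (Ov v).subtype (RingHom.id _) a H)
    simp only [RingHom.comp_id] at this
    exact this
  have eF : ((eval a F₀ : Ov v) : K) = c * eval (fun i => (a i : K)) φ.F := by
    rw [ev, hF]; simp
  have eG : ((eval a G₀ : Ov v) : K) = c * eval (fun i => (a i : K)) φ.G := by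
    rw [ev, hG]; simp
  have hsm : ![((eval a F₀ : Ov v) : K), ((eval a G₀ : Ov v) : K)] =
      c • ![eval (fun i => (a i : K)) φ.F, eval (fun i => (a i : K)) φ.G] := by
    rw [eF, eG]; ext i; fin_cases i <;> simp
  have hb : ![((eval a F₀ : Ov v) : K), ((eval a G₀ : Ov v) : K)] ≠ 0 := by
    rw [hsm]
    exact smul_ne_zero hc (FG_ne φ ha)
  refine ⟨hb, ?_, ?_⟩
  · rw [toFun_mk φ ha, Projectivization.mk_eq_mk_iff']
    refine ⟨c⁻¹, ?_⟩
    rw [hsm, smul_smul, inv_mul_cancel₀ hc, one_smul]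
  · apply le_antisymm
    · exact max_le (by simpa using Ov_le v _) (by simpa using Ov_le v _)
    · by_contra hlt
      push Not at hlt
      have h0 : av v ((eval a F₀ : Ov v) : K) < 1 := by
        have := (le_max_left _ _).trans_lt hlt; simpa using this
      have h1 : av v ((eval a G₀ : Ov v) : K) < 1 := by
        have := (le_max_right _ _).trans_lt hlt; simpa using this
      set ρ := ((algebraMap (IsLocalRing.ResidueField (Ov v)) (AlgebraicClosure
        (IsLocalRing.ResidueField (Ov v)))).comp (IsLocalRing.residue (Ov v))) with hρ
      have ev2 : ∀ H : MvPolynomial (Fin 2) (Ov v),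
          eval ![ρ (a 0), ρ (a 1)] (MvPolynomial.map ρ H) = ρ (eval a H) := by
        intro H
        have e : ![ρ (a 0), ρ (a 1)] = ρ ∘ a := by ext i; fin_cases i <;> simp
        rw [e, eval_map]
        have := (MvPolynomial.eval₂_comp_left ρ (RingHom.id _) a H)
        simp only [RingHom.comp_id] at this
        exact this.symm
      have hz := hres (ρ (a 0)) (ρ (a 1))
        (by rw [ev2, hρ, RingHom.comp_apply, residue_zero v _ h0, map_zero])
        (by rw [ev2, hρ, RingHom.comp_apply, residue_zero v _ h1, map_zero])
      rcases ha1 with h | h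
      · rw [h, map_one] at hz
        exact one_ne_zero hz.1
      · rw [h, map_one] at hz
        exact one_ne_zero hz.2

lemma roots_factor {R ι : Type*} [CommRing R] [IsDomain R] (p : Polynomial R) (s : Finset ι) (t : ι → R)
    (hinj : Set.InjOn t s) (hr : ∀ i ∈ s, p.eval (t i) = 0) (α : R) :
    ∃ c, p.eval α = (∏ i ∈ s, (α - t i)) * c := by
  by_cases hp : p = 0
  · exact ⟨0, by simp [hp]⟩
  have h1 : (s.image t).val ≤ p.roots := by
    rw [Multiset.le_iff_subset (s.image t).nodup]
    intro x hx
    have hx' : x ∈ s.image t := hx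
    obtain ⟨i, hi, rfl⟩ := Finset.mem_image.mp hx'
    rw [Polynomial.mem_roots hp]
    exact hr i hi
  rw [← Multiset.prod_X_sub_C_dvd_iff_le_roots hp] at h1
  obtain ⟨q, hq⟩ := h1
  refine ⟨q.eval α, ?_⟩
  have h2 : (Multiset.map (fun a => Polynomial.X - Polynomial.C a) (s.image t).val).prod =
      ∏ i ∈ s, (Polynomial.X - Polynomial.C (t i)) := by
    rw [← Finset.prod_image (f := fun a => Polynomial.X - Polynomial.C a) hinj]
    rfl
  rw [h2] at hq
  conv_lhs => rw [hq]
  rw [Polynomial.eval_mul, Polynomial.eval_prod]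
  simp

/-- the two affine charts -/
noncomputable def chart {R : Type*} [CommRing R] (b : Bool) (t : R) : Fin 2 → R :=
  if b then ![t, 1] else ![1, t]

lemma chart_ne {F : Type*} [Field F] (b : Bool) (t : F) : chart b t ≠ 0 := by
  intro h
  cases b
  · simpa [chart] using congrFun h 0
  · simpa [chart] using congrFun h 1

lemma exists_chart (v : HeightOneSpectrum (𝓞 K)) (P : P1 K) :
    ∃ b, ∃ t : K, av v t ≤ 1 ∧ P = Projectivization.mk K (chart b t) (chart_ne b t) := by
  have hne := P.rep_nonzero
  rcases le_total (av v (P.rep 0)) (av v (P.rep 1)) with h | h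
  · have h1 : P.rep 1 ≠ 0 := by
      intro h1
      rw [h1, map_zero] at h
      apply hne
      have h0 : P.rep 0 = 0 := (av v).eq_zero.mp (le_antisymm h ((av v).nonneg _))
      ext i; fin_cases i <;> simp [h0, h1]
    refine ⟨true, P.rep 0 / P.rep 1, ?_, ?_⟩
    · rw [map_div₀]
      exact div_le_one_of_le₀ h ((av v).nonneg _)
    · conv_lhs => rw [← P.mk_rep]
      rw [mk_eq_iff_det]
      simp [chart]
      field_simp
      ring
  · have h1 : P.rep 0 ≠ 0 := by
      intro h1
      rw [h1, map_zero] at h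
      apply hne
      have h0 : P.rep 1 = 0 := (av v).eq_zero.mp (le_antisymm h ((av v).nonneg _))
      ext i; fin_cases i <;> simp [h0, h1]
    refine ⟨false, P.rep 1 / P.rep 0, ?_, ?_⟩
    · rw [map_div₀]
      exact div_le_one_of_le₀ h ((av v).nonneg _)
    · conv_lhs => rw [← P.mk_rep]
      rw [mk_eq_iff_det]
      simp [chart]
      field_simp
      ring

lemma mx_chart (v : HeightOneSpectrum (𝓞 K)) (b : Bool) {t : K} (ht : av v t ≤ 1) : mx v (chart b t) = 1 := by
  cases b <;> simp [chart, mx, ht]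

lemma dd_chart (v : HeightOneSpectrum (𝓞 K)) (b : Bool) {s t : K} (hs : av v s ≤ 1) (ht : av v t ≤ 1) :
    dd v (Projectivization.mk K (chart b s) (chart_ne b s)) (Projectivization.mk K (chart b t) (chart_ne b t))
      = av v (s - t) := by
  rw [dd_mk, mx_chart v b hs, mx_chart v b ht]
  cases b
  · simp [chart]
    rw [av_sub_comm]
  · simp [chart]

/-- points close to a point in a chart are in the same chart -/
lemma chart_close (v : HeightOneSpectrum (𝓞 K)) (b : Bool) {s : K} (hs : av v s ≤ 1) (z : P1 K)
    (hz : dd v (Projectivization.mk K (chart b s) (chart_ne b s)) z < 1) :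
    ∃ t : K, av v t ≤ 1 ∧ z = Projectivization.mk K (chart b t) (chart_ne b t) := by
  obtain ⟨b', t, ht, rfl⟩ := exists_chart v z
  by_cases hbb : b' = b
  · subst hbb
    exact ⟨t, ht, rfl⟩
  rw [dd_mk, mx_chart v b hs, mx_chart v b' ht] at hz
  have hst : av v (s * t - 1) < 1 := by
    cases b <;> cases b' <;> simp [chart] at hz hbb ⊢
    · rw [av_sub_comm]; exact hz
    · exact hz
  have ht1 : av v t = 1 := by
    by_contra hne
    have hlt : av v t < 1 := lt_of_le_of_ne ht hne
    have h1 : av v ((s * t) - (s * t - 1)) ≤ max (av v (s * t)) (av v (s * t - 1)) := av_sub v _ _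
    have h2 : av v (s * t) < 1 := by
      rw [map_mul]
      have := (av v).nonneg s
      have := (av v).nonneg t
      nlinarith
    have h3 : av v ((s * t) - (s * t - 1)) = 1 := by
      rw [sub_sub_cancel, map_one]
    rw [h3] at h1
    exact absurd h1 (not_le.mpr (max_lt h2 hst))
  have ht0 : t ≠ 0 := by rintro rfl; simp at ht1
  refine ⟨t⁻¹, by rw [map_inv₀, ht1]; norm_num, ?_⟩
  rw [mk_eq_iff_det]
  cases b <;> cases b' <;> simp [chart, ht0] at hbb ⊢

/-- SUM lemma -/
lemma sum_lemma (φ : P1Map K d) {v : HeightOneSpectrum (𝓞 K)} (hg : GoodReductionAt φ v)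
    (Z : Finset (P1 K)) (p : P1 K) (hZ : ∀ z ∈ Z, φ.toFun z = p) (A : P1 K) :
    dd v (φ.toFun A) p ≤ ∏ z ∈ Z, dd v A z := by
  obtain ⟨F₀, G₀, hFG⟩ := gr_data φ hg
  obtain ⟨b, α, hα, rfl⟩ := exists_chart v A
  set A := Projectivization.mk K (chart b α) (chart_ne b α) with hA
  have hprod : ∏ z ∈ Z, dd v A z = ∏ z ∈ Z with dd v A z < 1, dd v A z := by
    rw [Finset.prod_filter_of_ne]
    intro z _ hz
    exact lt_of_le_of_ne (dd_le_one v A z) hz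
  rw [hprod]
  have hch : ∀ z : P1 K, ∃ t : Ov v, dd v A z < 1 →
      z = Projectivization.mk K (chart b (t : K)) (chart_ne b (t : K)) := by
    intro z
    by_cases hz : dd v A z < 1
    · obtain ⟨t, ht, hzt⟩ := chart_close v b hα z hz
      exact ⟨⟨t, (mem_Ov v t).mpr ht⟩, fun _ => hzt⟩
    · exact ⟨0, fun h => absurd h hz⟩
  choose t ht using hch
  obtain ⟨b', π, hπ, rfl⟩ := exists_chart v p
  let π' : Ov v := ⟨π, (mem_Ov v π).mpr hπ⟩
  let α' : Ov v := ⟨α, (mem_Ov v α).mpr hα⟩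
  -- the polynomial
  let E : Fin 2 → Polynomial (Ov v) := chart b Polynomial.X
  let h : Polynomial (Ov v) := eval₂ Polynomial.C E (C (chart b' π' 1) * F₀ - C (chart b' π' 0) * G₀)
  have hev : ∀ τ : Ov v, h.eval τ = chart b' π' 1 * eval (chart b τ) F₀ - chart b' π' 0 * eval (chart b τ) G₀ := by
    intro τ
    have e1 : ∀ H : MvPolynomial (Fin 2) (Ov v), (eval₂ Polynomial.C E H).eval τ = eval (chart b τ) H := by
      intro H
      have := MvPolynomial.eval₂_comp_left (Polynomial.evalRingHom τ) Polynomial.C E H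
      simp only [Polynomial.coe_evalRingHom] at this
      rw [this]
      have e2 : (Polynomial.evalRingHom τ).comp Polynomial.C = RingHom.id (Ov v) := by
        ext x; simp
      have e3 : (Polynomial.eval τ ∘ E) = chart b τ := by
        ext i
        cases b <;> fin_cases i <;> simp [E, chart]
      rw [e2, e3]
      rfl
    simp only [h]
    rw [e1]
    simp
  have hco : ∀ τ : Ov v, (fun i => ((chart b τ i : Ov v) : K)) = chart b (τ : K) := by
    intro τ; ext i; cases b <;> fin_cases i <;> simp [chart]
  have hone : ∀ τ : Ov v, chart b τ 0 = 1 ∨ chart b τ 1 = 1 := by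
    intro τ; cases b <;> simp [chart]
  have hπ0 : ((chart b' π' 0 : Ov v) : K) = chart b' π 0 := by cases b' <;> simp [chart, π']
  have hπ1 : ((chart b' π' 1 : Ov v) : K) = chart b' π 1 := by cases b' <;> simp [chart, π']
  have hval : ∀ τ : Ov v, dd v (φ.toFun (Projectivization.mk K (chart b (τ : K)) (chart_ne b (τ : K))))
      (Projectivization.mk K (chart b' π) (chart_ne b' π)) = av v ((h.eval τ : Ov v) : K) := by
    intro τ
    have hne : (fun i => ((chart b τ i : Ov v) : K)) ≠ 0 := by rw [hco]; exact chart_ne b (τ : K)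
    obtain ⟨hb, h1, h2⟩ := hFG (chart b τ) (hone τ) hne
    have h3 : Projectivization.mk K (chart b (τ : K)) (chart_ne b (τ : K)) =
        Projectivization.mk K (fun i => ((chart b τ i : Ov v) : K)) hne := by
      congr 1
      exact (hco τ).symm
    rw [h3, h1, dd_mk, h2, mx_chart v b' hπ, hev]
    push_cast
    rw [hπ0, hπ1]
    simp
    congr 1
    ring
  have hroot : ∀ z ∈ Z.filter (fun z => dd v A z < 1), h.eval (t z) = 0 := by
    intro z hz
    rw [Finset.mem_filter] at hz
    have h1 := hval (t z)
    rw [← ht z hz.2, hZ z hz.1, dd_self] at h1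
    have h2 := (av v).eq_zero.mp h1.symm
    exact_mod_cast h2
  have hinj : Set.InjOn t (Z.filter (fun z => dd v A z < 1) : Finset (P1 K)) := by
    intro z hz z' hz' hzz
    rw [Finset.mem_coe, Finset.mem_filter] at hz hz'
    rw [ht z hz.2, ht z' hz'.2, hzz]
  obtain ⟨c, hc⟩ := roots_factor h _ t hinj hroot α'
  have h1 := hval α'
  rw [hc] at h1
  have hAe : Projectivization.mk K (chart b (α' : K)) (chart_ne b (α' : K)) = A := rfl
  rw [hAe] at h1
  rw [h1]
  push_cast
  rw [map_mul, map_prod]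
  have h2 : ∏ i ∈ Z.filter (fun z => dd v A z < 1), av v ((α' : K) - (t i : K)) =
      ∏ z ∈ Z.filter (fun z => dd v A z < 1), dd v A z := by
    apply Finset.prod_congr rfl
    intro z hz
    rw [Finset.mem_filter] at hz
    conv_rhs => rw [ht z hz.2]
    rw [hA, dd_chart v b hα (Ov_le v _)]
  rw [h2]
  have h3 : 0 ≤ ∏ z ∈ Z.filter (fun z => dd v A z < 1), dd v A z :=
    Finset.prod_nonneg (fun z _ => dd_nonneg v _ _)
  exact mul_le_of_le_one_right h3 (Ov_le v c)

end sumlemma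

section dynabs
variable {α : Type*} (f : α → α)

/-- `Q` has level `l` and class `P`. -/
def Rl (Q : α) (l : ℕ) (P : α) : Prop :=
  P ∈ Function.periodicPts f ∧ f^[l] Q = f^[l] P ∧ ∀ k < l, f^[k] Q ∉ Function.periodicPts f

variable {f}

lemma per_iter {P : α} (h : P ∈ Function.periodicPts f) (n : ℕ) : f^[n] P ∈ Function.periodicPts f := by
  obtain ⟨k, hk, hP⟩ := h
  exact ⟨k, hk, hP.apply_iterate n⟩

lemma per_inj {P R : α} (hP : P ∈ Function.periodicPts f) (hR : R ∈ Function.periodicPts f) (n : ℕ)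
    (h : f^[n] P = f^[n] R) : P = R := by
  obtain ⟨k, hk, hPk⟩ := hP
  obtain ⟨l, hl, hRl⟩ := hR
  have h1 : f^[k * l * n] P = P := (hPk.mul_const l |>.mul_const n)
  have h2 : f^[k * l * n] R = R := by
    have := (hRl.mul_const k |>.mul_const n)
    rw [mul_comm k l]; exact this
  have hkl : 1 ≤ k * l := Nat.mul_pos hk hl
  have e : k * l * n = (k * l * n - n) + n := by
    have : n ≤ k * l * n := Nat.le_mul_of_pos_left n hkl
    omega
  rw [e, Function.iterate_add_apply] at h1 h2
  rw [← h1, ← h2, h]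

lemma Rl_exists {Q : α} (h : ∃ m, f^[m] Q ∈ Function.periodicPts f) : ∃ l P, Rl f Q l P := by
  let l := Nat.find h
  have hl : f^[l] Q ∈ Function.periodicPts f := Nat.find_spec h
  obtain ⟨k, hk, hP⟩ := id hl
  refine ⟨l, f^[k * l - l] (f^[l] Q), per_iter hl _, ?_, fun j hj => Nat.find_min h hj⟩
  rw [← Function.iterate_add_apply f l]
  have : l + (k * l - l) = k * l := by
    have : l ≤ k * l := Nat.le_mul_of_pos_left l hk
    omega
  rw [this]
  exact (hP.mul_const l).symm

lemma Rl_unique {Q : α} {l l' : ℕ} {P P' : α} (h : Rl f Q l P) (h' : Rl f Q l' P') : l = l' ∧ P = P' := by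
  have hl : l = l' := by
    rcases lt_trichotomy l l' with hlt | heq | hlt
    · exact absurd (h.2.1 ▸ per_iter h.1 l) (h'.2.2 l hlt)
    · exact heq
    · exact absurd (h'.2.1 ▸ per_iter h'.1 l') (h.2.2 l' hlt)
  subst hl
  exact ⟨rfl, per_inj h.1 h'.1 l (h.2.1.symm.trans h'.2.1)⟩

lemma Rl_iter {Q : α} {l : ℕ} {P : α} (n : ℕ) (h : Rl f Q (l + n) P) : Rl f (f^[n] Q) l (f^[n] P) := by
  refine ⟨per_iter h.1 n, ?_, ?_⟩
  · rw [← Function.iterate_add_apply, ← Function.iterate_add_apply]; exact h.2.1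
  · intro k hk
    rw [← Function.iterate_add_apply]
    exact h.2.2 _ (by omega)

lemma Rl_zero {Q P : α} : Rl f Q 0 P ↔ P ∈ Function.periodicPts f ∧ Q = P := by
  simp [Rl]

lemma Rl_nonper {Q : α} {l : ℕ} {P : α} (h : Rl f Q (l + 1) P) : Q ∉ Function.periodicPts f := by
  have := h.2.2 0 (by omega)
  simpa using this

end dynabs

section dyn
variable {K : Type*} [Field K] [NumberField K] {d : ℕ}

lemma isPer_iff (φ : P1Map K d) (P : P1 K) : IsPeriodicPoint φ P ↔ P ∈ Function.periodicPts φ.toFun := by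
  rfl

variable (φ : P1Map K d) {v : HeightOneSpectrum (𝓞 K)}

lemma iter_sum (hg : GoodReductionAt φ v) (a : ℕ) (Z : Finset (P1 K)) (p : P1 K) (hZ : ∀ z ∈ Z, φ.toFun^[a] z = p) (A : P1 K) :
    dd v (φ.toFun^[a] A) p ≤ ∏ z ∈ Z, dd v A z := by
  induction a generalizing Z A with
  | zero =>
    simp only [Function.iterate_zero, id] at hZ ⊢
    rcases Z.eq_empty_or_nonempty with rfl | ⟨z, hz⟩
    · simpa using dd_le_one v A p
    · have : Z = {p} := by
        ext w
        constructor
        · intro hw; simp [hZ w hw]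
        · intro hw
          rw [Finset.mem_singleton] at hw
          rw [hw, ← hZ z hz]; exact hz
      rw [this]; simp
  | succ a ih =>
    rw [Function.iterate_succ_apply]
    refine (ih (Z.image φ.toFun) ?_ (φ.toFun A)).trans ?_
    · intro w hw
      obtain ⟨z, hz, rfl⟩ := Finset.mem_image.mp hw
      rw [← Function.iterate_succ_apply]
      exact hZ z hz
    · rw [← Finset.prod_fiberwise_of_maps_to (s := Z) (t := Z.image φ.toFun) (g := φ.toFun)
        (fun z hz => Finset.mem_image_of_mem _ hz)]
      apply Finset.prod_le_prod
      · intro w _; exact dd_nonneg v _ _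
      · intro w _
        apply sum_lemma φ hg
        intro z hz
        exact (Finset.mem_filter.mp hz).2

lemma dd_mono (hg : GoodReductionAt φ v) (a : ℕ) (A B : P1 K) : dd v (φ.toFun^[a] A) (φ.toFun^[a] B) ≤ dd v A B := by
  have := iter_sum φ hg a {B} (φ.toFun^[a] B) (by simp) A
  simpa using this

lemma dd_isom (hg : GoodReductionAt φ v) (a : ℕ) {A B : P1 K} (hA : A ∈ Function.periodicPts φ.toFun)
    (hB : B ∈ Function.periodicPts φ.toFun) : dd v (φ.toFun^[a] A) (φ.toFun^[a] B) = dd v A B := by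
  apply le_antisymm (dd_mono φ hg a A B)
  obtain ⟨k, hk, hPk⟩ := hA
  obtain ⟨l, hl, hRl⟩ := hB
  have h1 : φ.toFun^[k * l * a] A = A := (hPk.mul_const l |>.mul_const a)
  have h2 : φ.toFun^[k * l * a] B = B := by
    have := (hRl.mul_const k |>.mul_const a)
    rw [mul_comm k l]; exact this
  have hkl : 1 ≤ k * l := Nat.mul_pos hk hl
  have e : k * l * a = (k * l * a - a) + a := by
    have : a ≤ k * l * a := Nat.le_mul_of_pos_left a hkl
    omega
  rw [e, Function.iterate_add_apply] at h1 h2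
  conv_lhs => rw [← h1, ← h2]
  exact dd_mono φ hg _ _ _

lemma lemmaA (hg : GoodReductionAt φ v) {Q P R : P1 K} {l : ℕ} (hQ : Rl φ.toFun Q (l + 1) P) (hR : R ∈ Function.periodicPts φ.toFun)
    (hne : R ≠ P) : dd v Q R = 1 := by
  set f := φ.toFun
  have h1 : Rl f (f^[l] Q) 1 (f^[l] P) := Rl_iter l (by rw [add_comm]; exact hQ)
  have hper := per_iter hQ.1 l
  have hne2 : f^[l] Q ≠ f^[l] P := by
    intro h
    exact Rl_nonper h1 (h ▸ hper)
  have h2 := sum_lemma φ hg {f^[l] Q, f^[l] P} (f (f^[l] P)) (by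
    intro z hz
    simp only [Finset.mem_insert, Finset.mem_singleton] at hz
    rcases hz with rfl | rfl
    · exact h1.2.1
    · rfl) (f^[l] R)
  rw [Finset.prod_pair hne2] at h2
  have h3 := dd_isom φ hg 1 (per_iter hR l) hper
  simp only [Function.iterate_one] at h3
  rw [h3] at h2
  have h4 : 0 < dd v (f^[l] R) (f^[l] P) := by
    apply dd_pos
    intro h
    exact hne (per_inj hR hQ.1 l h)
  have h5 : 1 ≤ dd v (f^[l] R) (f^[l] Q) := by
    by_contra hlt
    push Not at hlt
    nlinarith
  apply le_antisymm (dd_le_one v _ _)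
  rw [dd_comm]
  exact h5.trans (dd_mono φ hg l R Q)

lemma lemmaA2 (hg : GoodReductionAt φ v) {Q P Q' P' : P1 K} {l l' : ℕ} (hQ : Rl φ.toFun Q l P) (hQ' : Rl φ.toFun Q' l' P')
    (hne : P ≠ P') (hl : l ≠ l') : dd v Q Q' = 1 := by
  wlog hlt : l < l' generalizing Q P Q' P' l l'
  · rw [dd_comm]
    exact this hQ' hQ hne.symm hl.symm (by omega)
  apply le_antisymm (dd_le_one v _ _)
  obtain ⟨k, rfl⟩ : ∃ k, l' = k + 1 + l := ⟨l' - l - 1, by omega⟩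
  have h1 := Rl_iter l hQ'
  have h2 := lemmaA φ hg h1 (per_iter hQ.1 l) (fun h => hne (per_inj hQ.1 hQ'.1 l h))
  rw [← h2, ← hQ.2.1, dd_comm]
  exact dd_mono φ hg l Q Q'

end dyn

section sep

lemma min_radius {ι : Type*} (δ : ι → ι → ℝ) (A : Finset ι) (k : ℕ) (hk : 1 ≤ k) (hA : k ≤ A.card) :
    ∃ x ∈ A, ∃ r : ℝ, k ≤ (A.filter (fun y => δ x y ≤ r)).card ∧
      ∀ y ∈ A, (A.filter (fun z => δ y z < r)).card < k := by
  classical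
  let V : Finset (ι × ι) := (A ×ˢ A).filter
    (fun p => k ≤ (A.filter (fun z => δ p.1 z ≤ δ p.1 p.2)).card)
  have hAne : A.Nonempty := Finset.card_pos.mp (by omega)
  have hV : V.Nonempty := by
    obtain ⟨x, hx⟩ := hAne
    obtain ⟨y, hy, hmax⟩ := Finset.exists_max_image A (δ x) ⟨x, hx⟩
    refine ⟨(x, y), ?_⟩
    simp only [V, Finset.mem_filter, Finset.mem_product]
    refine ⟨⟨hx, hy⟩, ?_⟩
    rw [Finset.filter_true_of_mem (fun z hz => hmax z hz)]
    exact hA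
  obtain ⟨⟨x, y⟩, hxy, hmin⟩ := Finset.exists_min_image V (fun p => δ p.1 p.2) hV
  simp only [V, Finset.mem_filter, Finset.mem_product] at hxy
  refine ⟨x, hxy.1.1, δ x y, hxy.2, ?_⟩
  intro u hu
  by_contra hcon
  push Not at hcon
  have hne : (A.filter (fun z => δ u z < δ x y)).Nonempty := Finset.card_pos.mp (by omega)
  obtain ⟨w, hw, hmax⟩ := Finset.exists_max_image _ (δ u) hne
  rw [Finset.mem_filter] at hw
  have : (u, w) ∈ V := by
    simp only [V, Finset.mem_filter, Finset.mem_product]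
    refine ⟨⟨hu, hw.1⟩, hcon.trans (Finset.card_le_card ?_)⟩
    intro z hz
    have := hmax z hz
    rw [Finset.mem_filter] at hz ⊢
    exact ⟨hz.1, this⟩
  have := hmin _ this
  simp only at this
  linarith [hw.2]

/-- the finite-place separation lemma -/
lemma sep_ultra {ι : Type*} (δ : ι → ι → ℝ) (hs : ∀ x y, δ x y = δ y x) (h0 : ∀ x, δ x x = 0)
    (hnn : ∀ x y, 0 ≤ δ x y) (hz : ∀ x y, δ x y = 0 → x = y)
    (hu : ∀ x y z, δ x z ≤ max (δ x y) (δ y z))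
    (A B : Finset ι) (k : ℕ) (hk : 2 ≤ k) (hA : 4 * k ≤ A.card) (hB : 4 * k ≤ B.card) :
    ∃ A' ⊆ A, ∃ B' ⊆ B, k ≤ A'.card ∧ k ≤ B'.card ∧
      ∀ a ∈ A', ∀ a' ∈ A', ∀ b ∈ B', ∀ b' ∈ B', δ a b * δ a' b' = δ a b' * δ a' b := by
  classical
  have iso : ∀ x y z, δ x y < δ y z → δ x z = δ y z := by
    intro x y z h
    apply le_antisymm
    · exact (hu x y z).trans (max_le h.le le_rfl)
    · rcases le_max_iff.mp (hu y x z) with h' | h'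
      · rw [hs y x] at h'; linarith
      · exact h'
  obtain ⟨x, hx, r, hr, hcl⟩ := min_radius δ A k (by omega) (by omega)
  have hrpos : 0 < r := by
    by_contra hneg
    push Not at hneg
    have : (A.filter (fun y => δ x y ≤ r)) ⊆ {x} := by
      intro y hy
      rw [Finset.mem_filter] at hy
      rw [Finset.mem_singleton]
      exact (hz x y (le_antisymm (hy.2.trans hneg) (hnn x y))).symm
    have := Finset.card_le_card this
    simp at this
    omega
  set Ain := A.filter (fun y => δ x y ≤ r) with hAin
  set Aout := A.filter (fun y => ¬ δ x y ≤ r) with hAout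
  set Bin := B.filter (fun y => δ x y ≤ r) with hBin
  set Bout := B.filter (fun y => ¬ δ x y ≤ r) with hBout
  have cA : Ain.card + Aout.card = A.card := Finset.card_filter_add_card_filter_not _
  have cB : Bin.card + Bout.card = B.card := Finset.card_filter_add_card_filter_not _
  have inout : ∀ p q, δ x p ≤ r → ¬ δ x q ≤ r → δ p q = δ x q := by
    intro p q hp hq
    apply iso p x q
    rw [hs p x]; push Not at hq; linarith
  by_cases h1 : k ≤ Bout.card
  · refine ⟨Ain, Finset.filter_subset _ _, Bout, Finset.filter_subset _ _, hr, h1, ?_⟩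
    intro a ha a' ha' b hb b' hb'
    rw [Finset.mem_filter] at ha ha' hb hb'
    rw [inout a b ha.2 hb.2, inout a' b' ha'.2 hb'.2, inout a b' ha.2 hb'.2, inout a' b ha'.2 hb.2]
    ring
  by_cases h2 : k ≤ Aout.card
  · refine ⟨Aout, Finset.filter_subset _ _, Bin, Finset.filter_subset _ _, h2, by omega, ?_⟩
    intro a ha a' ha' b hb b' hb'
    rw [Finset.mem_filter] at ha ha' hb hb'
    rw [hs a b, hs a' b', hs a b', hs a' b]
    rw [inout b a hb.2 ha.2, inout b' a' hb'.2 ha'.2, inout b' a hb'.2 ha.2, inout b a' hb.2 ha'.2]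
  let 𝒰 := Ain.powerset.filter (fun U => k ≤ U.card ∧ ∀ y ∈ U, ∀ z ∈ Ain, δ y z < r → z ∈ U)
  have h𝒰 : 𝒰.Nonempty := ⟨Ain, by
    simp only [𝒰, Finset.mem_filter, Finset.mem_powerset]
    exact ⟨Finset.Subset.refl _, hr, fun _ _ z hz _ => hz⟩⟩
  obtain ⟨U, hU, hUmin⟩ := Finset.exists_min_image 𝒰 Finset.card h𝒰
  simp only [𝒰, Finset.mem_filter, Finset.mem_powerset] at hU
  obtain ⟨hUA, hUk, hUcl⟩ := hU
  have hU2 : U.card < 2 * k := by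
    by_contra hcon
    push Not at hcon
    obtain ⟨u, hu'⟩ : U.Nonempty := Finset.card_pos.mp (by omega)
    have huA : u ∈ A := (Finset.mem_filter.mp (hUA hu')).1
    set W := U.filter (fun z => ¬ δ u z < r) with hW
    have hWc : (U.filter (fun z => δ u z < r)).card + W.card = U.card :=
      Finset.card_filter_add_card_filter_not _
    have hc1 : (U.filter (fun z => δ u z < r)).card < k := by
      refine lt_of_le_of_lt (Finset.card_le_card ?_) (hcl u huA)
      intro z hz
      rw [Finset.mem_filter] at hz ⊢
      exact ⟨(Finset.mem_filter.mp (hUA hz.1)).1, hz.2⟩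
    have hc2 : 0 < (U.filter (fun z => δ u z < r)).card := by
      apply Finset.card_pos.mpr
      exact ⟨u, by rw [Finset.mem_filter, h0]; exact ⟨hu', hrpos⟩⟩
    have hWm : W ∈ 𝒰 := by
      simp only [𝒰, Finset.mem_filter, Finset.mem_powerset]
      refine ⟨(Finset.filter_subset _ _).trans hUA, by omega, ?_⟩
      intro y hy z hz hyz
      rw [hW, Finset.mem_filter] at hy ⊢
      refine ⟨hUcl y hy.1 z hz hyz, fun hcon2 => hy.2 ?_⟩
      have := hu u z y
      rw [hs z y] at this
      exact lt_of_le_of_lt this (max_lt hcon2 hyz)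
    have := hUmin W hWm
    omega
  have inin : ∀ p q, δ x p ≤ r → δ x q ≤ r → δ p q ≤ r := by
    intro p q hp hq
    refine (hu p x q).trans (max_le ?_ hq)
    rw [hs]; exact hp
  set V := Ain \ U with hV
  have hVc : V.card + U.card = Ain.card := Finset.card_sdiff_add_card_eq_card hUA
  set B1 := Bin.filter (fun b => ∃ u ∈ U, δ u b < r) with hB1
  set B2 := Bin.filter (fun b => ¬ ∃ u ∈ U, δ u b < r) with hB2
  have cB12 : B1.card + B2.card = Bin.card := Finset.card_filter_add_card_filter_not _
  by_cases h3 : k ≤ B2.card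
  · refine ⟨U, hUA.trans (Finset.filter_subset _ _), B2,
      (Finset.filter_subset _ _).trans (Finset.filter_subset _ _), hUk, h3, ?_⟩
    have : ∀ a ∈ U, ∀ b ∈ B2, δ a b = r := by
      intro a ha b hb
      rw [hB2, Finset.mem_filter] at hb
      apply le_antisymm
      · exact inin a b (Finset.mem_filter.mp (hUA ha)).2 (Finset.mem_filter.mp hb.1).2
      · by_contra hcon
        push Not at hcon
        exact hb.2 ⟨a, ha, hcon⟩
    intro a ha a' ha' b hb b' hb'
    rw [this a ha b hb, this a' ha' b' hb', this a ha b' hb', this a' ha' b hb]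
  · refine ⟨V, Finset.sdiff_subset.trans (Finset.filter_subset _ _), B1,
      (Finset.filter_subset _ _).trans (Finset.filter_subset _ _), by omega, by omega, ?_⟩
    have : ∀ a ∈ V, ∀ b ∈ B1, δ a b = r := by
      intro a ha b hb
      rw [hB1, Finset.mem_filter] at hb
      rw [hV, Finset.mem_sdiff] at ha
      obtain ⟨hb1, u, hu', hub⟩ := hb
      apply le_antisymm
      · exact inin a b (Finset.mem_filter.mp ha.1).2 (Finset.mem_filter.mp hb1).2
      · by_contra hcon
        push Not at hcon
        apply ha.2
        apply hUcl u hu' a ha.1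
        have := hu u b a
        rw [hs b a] at this
        exact lt_of_le_of_lt this (max_lt hub hcon)
    intro a ha a' ha' b hb b' hb'
    rw [this a ha b hb, this a' ha' b' hb', this a ha b' hb', this a' ha' b hb]

lemma arch_est (x e e' g g' : ℂ) (ρ : ℝ) (hρ : 0 ≤ ρ) (he : ‖e - x‖ ≤ ρ) (he' : ‖e' - x‖ ≤ ρ)
    (hg : 20 * ρ ≤ ‖g - x‖) (hg' : 20 * ρ ≤ ‖g' - x‖) :
    ‖e - e'‖ * ‖g - g'‖ ≤ 1 / 4 * (‖e - g‖ * ‖e' - g'‖) := by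
  have h1 : ‖e - e'‖ ≤ 2 * ρ := by
    have : e - e' = (e - x) - (e' - x) := by ring
    rw [this]
    exact (norm_sub_le _ _).trans (by linarith)
  have hp : 19 * ρ ≤ ‖e - g‖ := by
    have : g - x = (e - x) - (e - g) := by ring
    have h := norm_sub_le (e - x) (e - g)
    rw [← this] at h
    linarith
  have hq : 19 * ρ ≤ ‖e' - g'‖ := by
    have : g' - x = (e' - x) - (e' - g') := by ring
    have h := norm_sub_le (e' - x) (e' - g')
    rw [← this] at h
    linarith
  have h2 : ‖g - g'‖ ≤ ‖e - g‖ + ‖e' - g'‖ + 2 * ρ := by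
    have : g - g' = ((e - e') - (e - g)) + (e' - g') := by ring
    rw [this]
    refine (norm_add_le _ _).trans ?_
    have := norm_sub_le (e - e') (e - g)
    linarith
  set p := ‖e - g‖
  set q := ‖e' - g'‖
  calc ‖e - e'‖ * ‖g - g'‖ ≤ (2 * ρ) * (p + q + 2 * ρ) :=
        mul_le_mul h1 h2 (norm_nonneg _) (by linarith)
    _ ≤ 1 / 4 * (p * q) := by
        nlinarith [mul_nonneg (sub_nonneg.mpr hp) (sub_nonneg.mpr hq),
          mul_nonneg hρ (sub_nonneg.mpr hp), mul_nonneg hρ (sub_nonneg.mpr hq)]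

lemma grid_count {ι : Type*} (g : ι → ℂ) (A : Finset ι) (k : ℕ) (x : ℂ) (r : ℝ) (hr : 0 < r)
    (hcl : ∀ y ∈ A, (A.filter (fun z => ‖g y - g z‖ < r)).card < k) :
    (A.filter (fun y => ‖g y - x‖ < 400 * r)).card ≤ 1601 ^ 2 * k := by
  classical
  set A1 := A.filter (fun y => ‖g y - x‖ < 400 * r) with hA1
  let cell : ι → ℤ × ℤ := fun y => (⌊(g y - x).re / (r / 2)⌋, ⌊(g y - x).im / (r / 2)⌋)
  obtain ⟨I, hIdef⟩ : ∃ I : Finset (ℤ × ℤ), I = Finset.Icc (-800) 800 ×ˢ Finset.Icc (-800) 800 := ⟨_, rfl⟩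
  have hfl : ∀ s : ℝ, |s| < 400 * r → ⌊s / (r / 2)⌋ ∈ Finset.Icc (-800 : ℤ) 800 := by
    intro s hs
    rw [abs_lt] at hs
    rw [Finset.mem_Icc]
    constructor
    · rw [Int.le_floor, le_div_iff₀ (by positivity)]
      push_cast; nlinarith [hs.1]
    · apply Int.le_of_lt_add_one
      rw [Int.floor_lt, div_lt_iff₀ (by positivity)]
      push_cast; nlinarith [hs.2]
  have hmap : ∀ y ∈ A1, cell y ∈ I := by
    intro y hy
    rw [hA1, Finset.mem_filter] at hy
    rw [hIdef, Finset.mem_product]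
    exact ⟨hfl _ (lt_of_le_of_lt (Complex.abs_re_le_norm _) hy.2),
      hfl _ (lt_of_le_of_lt (Complex.abs_im_le_norm _) hy.2)⟩
  have hfib : ∀ c ∈ I, (A1.filter (fun y => cell y = c)).card ≤ k := by
    intro c _
    rcases (A1.filter (fun y => cell y = c)).eq_empty_or_nonempty with he | ⟨y, hy⟩
    · rw [he]; simp
    · rw [Finset.mem_filter] at hy
      have hyA : y ∈ A := (Finset.mem_filter.mp hy.1).1
      refine (Finset.card_le_card ?_).trans (hcl y hyA).le
      intro z hz
      rw [Finset.mem_filter] at hz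
      rw [Finset.mem_filter]
      refine ⟨(Finset.mem_filter.mp hz.1).1, ?_⟩
      have hc : cell y = cell z := hy.2.trans hz.2.symm
      simp only [cell, Prod.mk.injEq] at hc
      have hdiff : ∀ s t : ℝ, ⌊s / (r / 2)⌋ = ⌊t / (r / 2)⌋ → |s - t| < r / 2 := by
        intro s t hst
        have := Int.abs_sub_lt_one_of_floor_eq_floor hst
        rw [← sub_div, abs_div, abs_of_pos (by positivity : (0:ℝ) < r / 2), div_lt_one (by positivity)] at this
        exact this
      have h1 := hdiff _ _ hc.1
      have h2 := hdiff _ _ hc.2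
      have h3 := Complex.norm_le_abs_re_add_abs_im (g y - g z)
      have e1 : (g y - g z).re = (g y - x).re - (g z - x).re := by simp
      have e2 : (g y - g z).im = (g y - x).im - (g z - x).im := by simp
      rw [e1, e2] at h3
      linarith
  have := Finset.card_le_mul_card_image_of_maps_to hmap k hfib
  have hI : I.card = 1601 ^ 2 := by
    rw [hIdef, Finset.card_product, Int.card_Icc, show ((800 : ℤ) + 1 - -800).toNat = 1601 from rfl]
    norm_num
  rw [hI] at this
  linarith

/-- the archimedean separation lemma -/
lemma sep_arch {ι : Type*} (g : ι → ℂ) (hg : Function.Injective g)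
    (A B : Finset ι) (k : ℕ) (hk : 2 ≤ k) (hA : 2 ^ 22 * k ≤ A.card) (hB : 2 ^ 22 * k ≤ B.card) :
    ∃ A' ⊆ A, ∃ B' ⊆ B, k ≤ A'.card ∧ k ≤ B'.card ∧
      ∀ a ∈ A', ∀ a' ∈ A', ∀ b ∈ B', ∀ b' ∈ B',
        ‖g a - g a'‖ * ‖g b - g b'‖ ≤ 1 / 4 * (‖g a - g b‖ * ‖g a' - g b'‖) := by
  classical
  obtain ⟨x, hx, r, hr, hcl⟩ := min_radius (fun y z => ‖g y - g z‖) A k (by omega) (by omega)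
  have hrpos : 0 < r := by
    by_contra hneg
    push Not at hneg
    have : (A.filter (fun y => ‖g x - g y‖ ≤ r)) ⊆ {x} := by
      intro y hy
      rw [Finset.mem_filter] at hy
      rw [Finset.mem_singleton]
      have h := le_antisymm (hy.2.trans hneg) (norm_nonneg _)
      rw [norm_eq_zero, sub_eq_zero] at h
      exact (hg h).symm
    have := Finset.card_le_card this
    simp at this
    omega
  have hgrid := grid_count g A k (g x) r hrpos hcl
  have cA : (A.filter (fun y => ‖g y - g x‖ < 400 * r)).card +
    (A.filter (fun y => ¬ ‖g y - g x‖ < 400 * r)).card = A.card := Finset.card_filter_add_card_filter_not _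
  have cB : (B.filter (fun y => ‖g y - g x‖ < 20 * r)).card +
    (B.filter (fun y => ¬ ‖g y - g x‖ < 20 * r)).card = B.card := Finset.card_filter_add_card_filter_not _
  by_cases h1 : k ≤ (B.filter (fun y => ¬ ‖g y - g x‖ < 20 * r)).card
  · refine ⟨A.filter (fun y => ‖g x - g y‖ ≤ r), Finset.filter_subset _ _, _, Finset.filter_subset _ _, hr, h1, ?_⟩
    intro a ha a' ha' b hb b' hb'
    rw [Finset.mem_filter] at ha ha' hb hb'
    push Not at hb hb'
    rw [norm_sub_rev] at ha ha'
    exact arch_est (g x) (g a) (g a') (g b) (g b') r hrpos.le ha.2 ha'.2 hb.2 hb'.2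
  · refine ⟨A.filter (fun y => ¬ ‖g y - g x‖ < 400 * r), Finset.filter_subset _ _,
      B.filter (fun y => ‖g y - g x‖ < 20 * r), Finset.filter_subset _ _, by omega, by omega, ?_⟩
    intro a ha a' ha' b hb b' hb'
    rw [Finset.mem_filter] at ha ha' hb hb'
    push Not at ha ha'
    have := arch_est (g x) (g b) (g b') (g a) (g a') (20 * r) (by positivity) hb.2.le hb'.2.le
      (by linarith [ha.2]) (by linarith [ha'.2])
    rw [norm_sub_rev (g b) (g a), norm_sub_rev (g b') (g a')] at this
    linarith

/-- iteration of separation -/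
lemma sep_iter {ι I : Type*} (R : I → ι → ι → ι → ι → Prop) (m : ℕ) (hm : 1 ≤ m)
    (hR : ∀ i, ∀ A B : Finset ι, ∀ k, 2 ≤ k → m * k ≤ A.card → m * k ≤ B.card →
      ∃ A' ⊆ A, ∃ B' ⊆ B, k ≤ A'.card ∧ k ≤ B'.card ∧
        ∀ a ∈ A', ∀ a' ∈ A', ∀ b ∈ B', ∀ b' ∈ B', R i a a' b b')
    (s : Finset I) (A B : Finset ι) (hA : 2 * m ^ s.card ≤ A.card) (hB : 2 * m ^ s.card ≤ B.card) :
    ∃ A' ⊆ A, ∃ B' ⊆ B, 2 ≤ A'.card ∧ 2 ≤ B'.card ∧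
        ∀ i ∈ s, ∀ a ∈ A', ∀ a' ∈ A', ∀ b ∈ B', ∀ b' ∈ B', R i a a' b b' := by
  classical
  induction s using Finset.induction_on generalizing A B with
  | empty =>
    exact ⟨A, Finset.Subset.refl _, B, Finset.Subset.refl _, by simpa using hA, by simpa using hB, by simp⟩
  | insert i s hi ih =>
    rw [Finset.card_insert_of_notMem hi, pow_succ] at hA hB
    have hpos : 1 ≤ m ^ s.card := Nat.one_le_pow _ _ hm
    obtain ⟨A1, hA1, B1, hB1, cA1, cB1, h1⟩ := hR i A B (2 * m ^ s.card) (by omega)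
      (by linarith) (by linarith)
    obtain ⟨A2, hA2, B2, hB2, cA2, cB2, h2⟩ := ih A1 B1 cA1 cB1
    refine ⟨A2, hA2.trans hA1, B2, hB2.trans hB1, cA2, cB2, ?_⟩
    intro j hj
    rw [Finset.mem_insert] at hj
    rcases hj with rfl | hj
    · intro a ha a' ha' b hb b' hb'
      exact h1 a (hA2 ha) a' (hA2 ha') b (hB2 hb) b' (hB2 hb')
    · exact h2 j hj

end sep

section sepK
variable {K : Type*} [Field K] [NumberField K] (T : Finset (HeightOneSpectrum (𝓞 K)))

lemma sep_final {ι J : Type*} [Fintype J] (c : J → ι → K) (hc : ∀ j, Function.Injective (c j))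
    (A B : Finset ι)
    (hA : 2 * (2 ^ 22) ^ (Fintype.card J * sCard K T) ≤ A.card)
    (hB : 2 * (2 ^ 22) ^ (Fintype.card J * sCard K T) ≤ B.card) :
    ∃ a ∈ A, ∃ a' ∈ A, ∃ b ∈ B, ∃ b' ∈ B, a ≠ a' ∧ b ≠ b' ∧ ∀ j,
      (∀ v ∈ T, av v (c j a - c j b) * av v (c j a' - c j b') = av v (c j a - c j b') * av v (c j a' - c j b)) ∧
      (∀ w : InfinitePlace K, w (c j a - c j a') * w (c j b - c j b') ≤
        1 / 4 * (w (c j a - c j b) * w (c j a' - c j b'))) := by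
  classical
  let R : (InfinitePlace K × J) ⊕ ({v // v ∈ T} × J) → ι → ι → ι → ι → Prop := fun i a a' b b' =>
    Sum.elim
      (fun p => p.1 (c p.2 a - c p.2 a') * p.1 (c p.2 b - c p.2 b') ≤
        1 / 4 * (p.1 (c p.2 a - c p.2 b) * p.1 (c p.2 a' - c p.2 b')))
      (fun p => av p.1.1 (c p.2 a - c p.2 b) * av p.1.1 (c p.2 a' - c p.2 b') =
        av p.1.1 (c p.2 a - c p.2 b') * av p.1.1 (c p.2 a' - c p.2 b)) i
  have hcard : (Finset.univ : Finset ((InfinitePlace K × J) ⊕ ({v // v ∈ T} × J))).card =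
      Fintype.card J * sCard K T := by
    rw [Finset.card_univ]
    simp [sCard]
    ring
  have key := sep_iter R (2 ^ 22) (by norm_num) ?_ Finset.univ A B (by rw [hcard]; exact hA)
    (by rw [hcard]; exact hB)
  · obtain ⟨A', hA', B', hB', cA', cB', h⟩ := key
    obtain ⟨a, ha, a', ha', haa⟩ := Finset.one_lt_card.mp (show 1 < A'.card by omega)
    obtain ⟨b, hb, b', hb', hbb⟩ := Finset.one_lt_card.mp (show 1 < B'.card by omega)
    refine ⟨a, hA' ha, a', hA' ha', b, hB' hb, b', hB' hb', haa, hbb, fun j => ⟨?_, ?_⟩⟩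
    · intro v hv
      exact h (Sum.inr (⟨v, hv⟩, j)) (Finset.mem_univ _) a ha a' ha' b hb b' hb'
    · intro w
      exact h (Sum.inl (w, j)) (Finset.mem_univ _) a ha a' ha' b hb b' hb'
  · rintro (⟨w, j⟩ | ⟨v, j⟩) A B k hk hA hB
    · have hinj : Function.Injective (fun i => w.embedding (c j i)) :=
        fun i i' h => hc j (w.embedding.injective h)
      obtain ⟨A', hA', B', hB', cA', cB', h⟩ := sep_arch _ hinj A B k hk hA hB
      refine ⟨A', hA', B', hB', cA', cB', ?_⟩
      intro a ha a' ha' b hb b' hb'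
      have := h a ha a' ha' b hb b' hb'
      simp only [← map_sub, InfinitePlace.norm_embedding_eq] at this
      exact this
    · obtain ⟨A', hA', B', hB', cA', cB', h⟩ := sep_ultra (fun i i' => av v.1 (c j i - c j i'))
        (fun i i' => av_sub_comm _ _ _) (fun i => by simp) (fun i i' => (av v.1).nonneg _)
        (fun i i' h => hc j (sub_eq_zero.mp ((av v.1).eq_zero.mp h)))
        (fun x y z => by
          have := av_add v.1 (c j x - c j y) (c j y - c j z)
          simpa using this) A B k hk (by omega) (by omega)
      exact ⟨A', hA', B', hB', cA', cB', h⟩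

/-- coincidence of cross ratios -/
lemma IC {ι : Type*} (c c' : ι → K) (hc : Function.Injective c) (hc' : Function.Injective c')
    (hiso : ∀ v ∉ T, ∀ a a' b b' : ι, a ≠ b → a ≠ b' → a' ≠ b → a' ≠ b' →
      av v (c a - c b') * av v (c a' - c b) * (av v (c' a - c' b) * av v (c' a' - c' b')) =
      av v (c' a - c' b') * av v (c' a' - c' b) * (av v (c a - c b) * av v (c a' - c b')))
    (Y : Finset ι) (hY : 4 * (2 ^ 22) ^ (2 * sCard K T) ≤ Y.card) :
    ∃ a ∈ Y, ∃ a' ∈ Y, ∃ b ∈ Y, ∃ b' ∈ Y, a ≠ a' ∧ b ≠ b' ∧ a ≠ b ∧ a ≠ b' ∧ a' ≠ b ∧ a' ≠ b' ∧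
      (c a - c b') * (c a' - c b) * ((c' a - c' b) * (c' a' - c' b')) =
      (c' a - c' b') * (c' a' - c' b) * ((c a - c b) * (c a' - c b')) := by
  classical
  obtain ⟨A, hAY, hAc⟩ := Finset.exists_subset_card_eq (s := Y) (n := 2 * (2 ^ 22) ^ (2 * sCard K T)) (by omega)
  have hBc : 2 * (2 ^ 22) ^ (2 * sCard K T) ≤ (Y \ A).card := by
    rw [Finset.card_sdiff_of_subset hAY]; omega
  obtain ⟨a, ha, a', ha', b, hb, b', hb', haa, hbb, h⟩ := sep_final T (J := Bool)
    (fun j => if j then c else c') (by intro j; cases j <;> simp [hc, hc']) A (Y \ A)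
    (by simpa using hAc.ge) (by simpa using hBc)
  have hd : ∀ p ∈ A, ∀ q ∈ Y \ A, p ≠ q := by
    rintro p hp q hq rfl
    exact (Finset.mem_sdiff.mp hq).2 hp
  have hab := hd a ha b hb
  have hab' := hd a ha b' hb'
  have ha'b := hd a' ha' b hb
  have ha'b' := hd a' ha' b' hb'
  refine ⟨a, hAY ha, a', hAY ha', b, (Finset.mem_sdiff.mp hb).1, b', (Finset.mem_sdiff.mp hb').1,
    haa, hbb, hab, hab', ha'b, ha'b', ?_⟩
  have h1 := h true
  have h2 := h false
  simp only [if_true, Bool.false_eq_true, if_false] at h1 h2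
  have ne : ∀ {p q : ι}, p ≠ q → c p - c q ≠ 0 := fun hpq h => hpq (hc (sub_eq_zero.mp h))
  have ne' : ∀ {p q : ι}, p ≠ q → c' p - c' q ≠ 0 := fun hpq h => hpq (hc' (sub_eq_zero.mp h))
  set X := (c a - c b') * (c a' - c b) * ((c' a - c' b) * (c' a' - c' b')) with hX
  set Z := (c' a - c' b') * (c' a' - c' b) * ((c a - c b) * (c a' - c b')) with hZ
  have hX0 : X ≠ 0 := mul_ne_zero (mul_ne_zero (ne hab') (ne ha'b)) (mul_ne_zero (ne' hab) (ne' ha'b'))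
  have hZ0 : Z ≠ 0 := mul_ne_zero (mul_ne_zero (ne' hab') (ne' ha'b)) (mul_ne_zero (ne hab) (ne ha'b'))
  have hw : Z / X = 1 := by
    apply eq_one_of_close
    · intro v
      have hXZ : av v X = av v Z := by
        simp only [hX, hZ, map_mul]
        by_cases hv : v ∈ T
        · rw [← h1.1 v hv, ← h2.1 v hv]; ring
        · exact hiso v hv a a' b b' hab hab' ha'b ha'b'
      refine (av_sub v _ _).trans (max_le ?_ ?_)
      · rw [map_div₀, ← hXZ, div_self]
        simpa using hX0
      · simp
    · intro w
      have e1 : Z / X - 1 = (Z - X) / X := by field_simp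
      rw [e1, map_div₀, div_lt_one (InfinitePlace.pos_iff.mpr hX0)]
      -- in terms of lambda
      set D := (c a - c b) * (c a' - c b') with hD
      set D' := (c' a - c' b) * (c' a' - c' b') with hD'
      set N := (c a - c a') * (c b - c b') with hN
      set N' := (c' a - c' a') * (c' b - c' b') with hN'
      have eX : X = (D - N) * D' := by simp only [hX, hD, hN, hD']; ring
      have eZ : Z = (D' - N') * D := by simp only [hZ, hD, hN', hD']; ring
      have eZX : Z - X = N * D' - N' * D := by rw [eX, eZ]; ring
      have hNb : w N ≤ 1 / 4 * w D := by simpa only [hN, hD, map_mul] using h1.2 w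
      have hNb' : w N' ≤ 1 / 4 * w D' := by simpa only [hN', hD', map_mul] using h2.2 w
      have hDpos : 0 < w D := InfinitePlace.pos_iff.mpr (mul_ne_zero (ne hab) (ne ha'b'))
      have hDpos' : 0 < w D' := InfinitePlace.pos_iff.mpr (mul_ne_zero (ne' hab) (ne' ha'b'))
      have t1 : w (Z - X) ≤ w N * w D' + w N' * w D := by
        have h3 := w.1.add_le (N * D') (-(N' * D))
        rw [w.1.map_neg, ← sub_eq_add_neg, ← eZX, w.1.map_mul N D', w.1.map_mul N' D] at h3
        exact h3
      have t2 : w D ≤ w (D - N) + w N := by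
        have := w.1.add_le (D - N) N
        rw [sub_add_cancel] at this
        exact this
      have eWX : w X = w (D - N) * w D' := by rw [eX, map_mul]
      refine lt_of_le_of_lt t1 ?_
      rw [eWX]
      have u1 : w N * w D' ≤ 1 / 4 * w D * w D' := mul_le_mul_of_nonneg_right hNb hDpos'.le
      have u2 : w N' * w D ≤ 1 / 4 * w D' * w D := mul_le_mul_of_nonneg_right hNb' hDpos.le
      have u3 : (3 / 4 * w D) * w D' ≤ w (D - N) * w D' :=
        mul_le_mul_of_nonneg_right (by linarith) hDpos'.le
      nlinarith [mul_pos hDpos hDpos']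
  rw [div_eq_one_iff_eq hX0] at hw
  exact hw.symm

/-- affine coordinate -/
noncomputable def aff (P : P1 K) : K := P.rep 0 / P.rep 1

lemma aff_sub {P Q : P1 K} (hP : P.rep 1 ≠ 0) (hQ : Q.rep 1 ≠ 0) :
    aff P - aff Q = (P.rep 0 * Q.rep 1 - P.rep 1 * Q.rep 0) / (P.rep 1 * Q.rep 1) := by
  simp only [aff]
  field_simp

lemma av_aff_sub (v : HeightOneSpectrum (𝓞 K)) {P Q : P1 K} (hP : P.rep 1 ≠ 0) (hQ : Q.rep 1 ≠ 0) :
    av v (aff P - aff Q) = dd v P Q * (mx v P.rep / av v (P.rep 1)) * (mx v Q.rep / av v (Q.rep 1)) := by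
  rw [aff_sub hP hQ, map_div₀, map_mul, dd]
  have h1 := (mx_pos v P.rep_nonzero).ne'
  have h2 := (mx_pos v Q.rep_nonzero).ne'
  have h3 : av v (P.rep 1) ≠ 0 := by simpa using hP
  have h4 : av v (Q.rep 1) ≠ 0 := by simpa using hQ
  field_simp

lemma aff_inj {P Q : P1 K} (hP : P.rep 1 ≠ 0) (hQ : Q.rep 1 ≠ 0) (h : aff P = aff Q) : P = Q := by
  have := aff_sub hP hQ
  rw [h, sub_self, eq_comm, div_eq_zero_iff] at this
  rcases this with h | h
  · rw [← P.mk_rep, ← Q.mk_rep, mk_eq_iff_det]; exact h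
  · exact absurd h (mul_ne_zero hP hQ)

lemma inf_unique {P Q : P1 K} (hP : P.rep 1 = 0) (hQ : Q.rep 1 = 0) : P = Q := by
  rw [← P.mk_rep, ← Q.mk_rep, mk_eq_iff_det, hP, hQ]; ring

lemma card_inf (A : Finset (P1 K)) : A.card ≤ (A.filter (fun P => P.rep 1 ≠ 0)).card + 1 := by
  have h := Finset.card_filter_add_card_filter_not (s := A) (fun P => P.rep 1 ≠ 0)
  have h2 : (A.filter (fun P => ¬ P.rep 1 ≠ 0)).card ≤ 1 := by
    rw [Finset.card_le_one]
    intro P hP Q hQ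
    rw [Finset.mem_filter] at hP hQ
    push Not at hP hQ
    exact inf_unique hP.2 hQ.2
  omega

/-- bipartite zero lemma -/
lemma BZ (A B : Finset (P1 K)) (hAB : ∀ v ∉ T, ∀ a ∈ A, ∀ b ∈ B, dd v a b = 1)
    (hdis : ∀ a ∈ A, ∀ b ∈ B, a ≠ b)
    (hA : 2 * (2 ^ 22) ^ (sCard K T) + 1 ≤ A.card) (hB : 2 * (2 ^ 22) ^ (sCard K T) + 1 ≤ B.card) : False := by
  classical
  set A0 := A.filter (fun P => P.rep 1 ≠ 0)
  set B0 := B.filter (fun P => P.rep 1 ≠ 0)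
  have cA := card_inf A
  have cB := card_inf B
  let ι := {P : P1 K // P.rep 1 ≠ 0}
  have cs : ∀ C : Finset (P1 K), (C.subtype (fun P => P.rep 1 ≠ 0)).card = (C.filter (fun P => P.rep 1 ≠ 0)).card :=
    fun C => by rw [← Finset.card_subtype]
  obtain ⟨a, ha, a', ha', b, hb, b', hb', haa, hbb, h⟩ := sep_final T (J := Unit)
    (fun _ (P : ι) => aff P.1) (by
      intro _ P Q h
      exact Subtype.ext (aff_inj P.2 Q.2 h)) (A.subtype (fun P => P.rep 1 ≠ 0)) (B.subtype (fun P => P.rep 1 ≠ 0))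
    (by rw [cs]; simp only [Fintype.card_unit, one_mul]; omega)
    (by rw [cs]; simp only [Fintype.card_unit, one_mul]; omega)
  rw [Finset.mem_subtype] at ha ha' hb hb'
  obtain ⟨hf, hi⟩ := h ()
  have ne : ∀ {p q : ι}, p.1 ≠ q.1 → aff p.1 - aff q.1 ≠ 0 :=
    fun {p q} hpq h => hpq (aff_inj p.2 q.2 (sub_eq_zero.mp h))
  have hab := ne (hdis _ ha _ hb)
  have hab' := ne (hdis _ ha _ hb')
  have ha'b := ne (hdis _ ha' _ hb)
  have ha'b' := ne (hdis _ ha' _ hb')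
  set D := (aff a.1 - aff b.1) * (aff a'.1 - aff b'.1) with hD
  set E := (aff a.1 - aff b'.1) * (aff a'.1 - aff b.1) with hE
  set N := (aff a.1 - aff a'.1) * (aff b.1 - aff b'.1) with hN
  have hD0 : D ≠ 0 := mul_ne_zero hab ha'b'
  have eN : D - E = N := by simp only [hD, hE, hN]; ring
  have hw : E / D = 1 := by
    apply eq_one_of_close
    · intro v
      have hDE : av v E = av v D := by
        simp only [hE, hD, map_mul]
        by_cases hv : v ∈ T
        · exact (hf v hv).symm
        · rw [av_aff_sub v a.2 b.2, av_aff_sub v a.2 b'.2, av_aff_sub v a'.2 b.2, av_aff_sub v a'.2 b'.2,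
            hAB v hv _ ha _ hb, hAB v hv _ ha' _ hb, hAB v hv _ ha _ hb', hAB v hv _ ha' _ hb']
          ring
      refine (av_sub v _ _).trans (max_le ?_ ?_)
      · rw [map_div₀, hDE, div_self]
        simpa using hD0
      · simp
    · intro w
      have e1 : E / D - 1 = - (N / D) := by
        rw [← eN]; field_simp; ring
      rw [e1]
      have e2 : w (-(N / D)) = w N / w D := by
        have : w (-(N / D)) = w.1 (-(N / D)) := rfl
        rw [this, w.1.map_neg, map_div₀]
        rfl
      have hDpos : 0 < w D := InfinitePlace.pos_iff.mpr hD0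
      rw [e2, div_lt_one hDpos]
      have : w N ≤ 1 / 4 * w D := by simpa only [hN, hD, map_mul] using hi w
      linarith
  rw [div_eq_one_iff_eq hD0] at hw
  rw [hw, sub_self, eq_comm, hN, mul_eq_zero] at eN
  rcases eN with h | h
  · exact ne (fun h' => haa (Subtype.ext h')) h
  · exact ne (fun h' => hbb (Subtype.ext h')) h

end sepK

section polys
variable {K : Type*} [Field K] [NumberField K] {d : ℕ}

/-- dehomogenization -/
noncomputable def dh (H : MvPolynomial (Fin 2) K) : Polynomial K :=
  MvPolynomial.aeval ![Polynomial.X, 1] H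

lemma dh_eval (H : MvPolynomial (Fin 2) K) (x : K) : (dh H).eval x = eval ![x, 1] H := by
  have h := MvPolynomial.map_aeval (![Polynomial.X, 1] : Fin 2 → Polynomial K) (Polynomial.evalRingHom x) H
  rw [dh, ← Polynomial.coe_evalRingHom, h]
  have e1 : (Polynomial.evalRingHom x).comp (algebraMap K (Polynomial K)) = RingHom.id K := by
    ext y; simp
  have e2 : (fun i => (Polynomial.evalRingHom x) ((![Polynomial.X, 1] : Fin 2 → Polynomial K) i)) = ![x, 1] := by
    funext i; fin_cases i <;> simp
  rw [e1, e2]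
  rfl

lemma dh_aeval (H : MvPolynomial (Fin 2) K) (x : AlgebraicClosure K) :
    Polynomial.aeval x (dh H) = MvPolynomial.aeval ![x, 1] H := by
  rw [dh, ← AlgHom.comp_apply, MvPolynomial.comp_aeval]
  congr 2
  funext i; fin_cases i <;> simp

lemma dh_sum (H : MvPolynomial (Fin 2) K) : dh H = ∑ m ∈ H.support, Polynomial.C (H.coeff m) * Polynomial.X ^ (m 0) := by
  rw [dh, MvPolynomial.aeval_def, MvPolynomial.eval₂_eq']
  apply Finset.sum_congr rfl
  intro m _
  simp [Fin.prod_univ_two]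

lemma hom_deg {H : MvPolynomial (Fin 2) K} (hH : H.IsHomogeneous d) {m : Fin 2 →₀ ℕ} (hm : m ∈ H.support) :
    m 0 + m 1 = d := by
  have h := hH (MvPolynomial.mem_support_iff.mp hm)
  rw [← h]
  simp [Finsupp.weight_apply, Finsupp.sum_fintype, Fin.sum_univ_two]

lemma dh_deg {H : MvPolynomial (Fin 2) K} (hH : H.IsHomogeneous d) : (dh H).natDegree ≤ d := by
  rw [dh_sum]
  apply Polynomial.natDegree_sum_le_of_forall_le
  intro m hm
  refine (Polynomial.natDegree_C_mul_X_pow_le _ _).trans ?_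
  have := hom_deg hH hm
  omega

lemma dh_coeff {H : MvPolynomial (Fin 2) K} (hH : H.IsHomogeneous d) : (dh H).coeff d = eval ![1, 0] H := by
  rw [dh_sum, Polynomial.finsetSum_coeff, MvPolynomial.eval_eq']
  apply Finset.sum_congr rfl
  intro m hm
  have := hom_deg hH hm
  simp only [Polynomial.coeff_C_mul, Polynomial.coeff_X_pow, Fin.prod_univ_two, Matrix.cons_val_zero,
    Matrix.cons_val_one, one_pow, one_mul]
  congr 1
  by_cases h : m 1 = 0
  · rw [h, if_pos (by omega), pow_zero]
  · rw [if_neg (by omega), zero_pow h]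

variable (φ : P1Map K d)

lemma dh_coprime : IsCoprime (dh φ.F) (dh φ.G) := by
  rw [Polynomial.isCoprime_iff_aeval_ne_zero_of_isAlgClosed K (AlgebraicClosure K)]
  intro x
  rw [dh_aeval, dh_aeval]
  by_contra h
  push Not at h
  have := φ.coprime x 1 h.1 h.2
  simpa using this.2

lemma dh_top : (dh φ.F).coeff d ≠ 0 ∨ (dh φ.G).coeff d ≠ 0 := by
  rw [dh_coeff φ.homF, dh_coeff φ.homG]
  by_contra h
  push Not at h
  refine FG_ne φ (a := ![1, 0]) (by intro h; simpa using congrFun h 0) ?_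
  rw [h.1, h.2]
  funext i; fin_cases i <;> simp

lemma form_ne (hd : 2 ≤ d) (l1 l2 : Polynomial K) (h1 : l1.natDegree ≤ 1) (h2 : l2.natDegree ≤ 1)
    (h : l1 ≠ 0 ∨ l2 ≠ 0) : dh φ.F * l1 - dh φ.G * l2 ≠ 0 := by
  intro h0
  rw [sub_eq_zero] at h0
  have hc := dh_coprime φ
  have key : ∀ {f g a b : Polynomial K}, IsCoprime f g → f * a = g * b → b.natDegree ≤ 1 → b ≠ 0 → f.coeff d = 0 := by
    intro f g a b hc he hb hb0
    have hdv : f ∣ b := hc.dvd_of_dvd_mul_left (he ▸ dvd_mul_right f a)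
    have := Polynomial.natDegree_le_of_dvd hdv hb0
    exact Polynomial.coeff_eq_zero_of_natDegree_lt (by omega)
  have hboth : l1 ≠ 0 ∧ l2 ≠ 0 := by
    by_contra hne
    have hz : ∀ {f g b : Polynomial K}, IsCoprime f g → g * b = 0 → b ≠ 0 → f.coeff d = 0 ∧ g.coeff d = 0 := by
      intro f g b hc he hb
      have hg : g = 0 := by rcases mul_eq_zero.mp he with h | h; exact h; exact absurd h hb
      subst hg
      rw [isCoprime_zero_right] at hc
      refine ⟨?_, by simp⟩
      have := Polynomial.natDegree_eq_zero_of_isUnit hc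
      exact Polynomial.coeff_eq_zero_of_natDegree_lt (by omega)
    rcases dh_top φ with ht | ht
    · rcases h with h | h
      · have : l2 = 0 := by by_contra h'; exact hne ⟨h, h'⟩
        rw [this, mul_zero] at h0
        exact ht (hz hc.symm h0 h).2
      · have : l1 = 0 := by by_contra h'; exact hne ⟨h', h⟩
        rw [this, mul_zero] at h0
        exact ht (hz hc h0.symm h).1
    · rcases h with h | h
      · have : l2 = 0 := by by_contra h'; exact hne ⟨h, h'⟩
        rw [this, mul_zero] at h0
        exact ht (hz hc.symm h0 h).1
      · have : l1 = 0 := by by_contra h'; exact hne ⟨h', h⟩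
        rw [this, mul_zero] at h0
        exact ht (hz hc h0.symm h).2
  rcases dh_top φ with ht | ht
  · exact ht (key hc h0 h2 hboth.2)
  · exact ht (key hc.symm h0.symm h1 hboth.1)

lemma form_count (hd : 2 ≤ d) (l1 l2 : Polynomial K) (h1 : l1.natDegree ≤ 1) (h2 : l2.natDegree ≤ 1)
    (h : l1 ≠ 0 ∨ l2 ≠ 0) (A : Finset (P1 K))
    (hA : ∀ R ∈ A, R.rep 1 ≠ 0 ∧ (dh φ.F).eval (aff R) * l1.eval (aff R) = (dh φ.G).eval (aff R) * l2.eval (aff R)) :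
    A.card ≤ d + 1 := by
  have hne := form_ne φ hd l1 l2 h1 h2 h
  have hdeg : (dh φ.F * l1 - dh φ.G * l2).natDegree ≤ d + 1 := by
    refine (Polynomial.natDegree_sub_le _ _).trans (max_le ?_ ?_)
    · exact Polynomial.natDegree_mul_le.trans (add_le_add (dh_deg φ.homF) h1)
    · exact Polynomial.natDegree_mul_le.trans (add_le_add (dh_deg φ.homG) h2)
  have hc : A.card ≤ (dh φ.F * l1 - dh φ.G * l2).roots.toFinset.card := by
    apply Finset.card_le_card_of_injOn aff
    · intro R hR
      simp only [Finset.mem_coe] at hR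
      simp only [Finset.mem_coe, Multiset.mem_toFinset, Polynomial.mem_roots hne, Polynomial.IsRoot.def,
        Polynomial.eval_sub, Polynomial.eval_mul, (hA R hR).2, sub_self]
    · intro R hR R' hR' he
      exact aff_inj (hA R hR).1 (hA R' hR').1 he
  exact hc.trans ((Multiset.toFinset_card_le _).trans ((Polynomial.card_roots' _).trans hdeg))

lemma aff_mk (P : P1 K) (h : P.rep 1 ≠ 0) :
    ∃ hx : ![aff P, 1] ≠ 0, P = Projectivization.mk K ![aff P, 1] hx := by
  have hx : (![aff P, 1] : Fin 2 → K) ≠ 0 := by intro h; simpa using congrFun h 1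
  refine ⟨hx, ?_⟩
  nth_rewrite 1 [← P.mk_rep]
  rw [mk_eq_iff_det]
  simp only [aff, Matrix.cons_val_zero, Matrix.cons_val_one]
  field_simp
  ring

lemma toFun_aff (R : P1 K) (h : R.rep 1 ≠ 0) :
    ∃ hx, φ.toFun R = Projectivization.mk K ![(dh φ.F).eval (aff R), (dh φ.G).eval (aff R)] hx := by
  obtain ⟨hx, e⟩ := aff_mk R h
  have h2 := toFun_mk φ hx
  rw [← e] at h2
  simp only [dh_eval]
  exact ⟨FG_ne φ hx, h2⟩

lemma toFun_det (R p : P1 K) (h : R.rep 1 ≠ 0) (hp : φ.toFun R = p) :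
    (dh φ.F).eval (aff R) * p.rep 1 = (dh φ.G).eval (aff R) * p.rep 0 := by
  obtain ⟨hx, e⟩ := toFun_aff φ R h
  rw [e, ← p.mk_rep, mk_eq_iff_det] at hp
  simp only [Matrix.cons_val_zero, Matrix.cons_val_one] at hp
  rw [sub_eq_zero] at hp
  exact hp

lemma pre_count (hd : 2 ≤ d) (p : P1 K) (A : Finset (P1 K)) (hA : ∀ R ∈ A, φ.toFun R = p) : A.card ≤ d + 2 := by
  have h1 := card_inf A
  have h2 := form_count φ hd (Polynomial.C (p.rep 1)) (Polynomial.C (p.rep 0)) (by simp) (by simp) (by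
    by_contra h
    push Not at h
    simp only [Polynomial.C_eq_zero] at h
    apply p.rep_nonzero
    funext i; fin_cases i
    · exact h.2
    · exact h.1) (A.filter (fun P => P.rep 1 ≠ 0)) (by
      intro R hR
      rw [Finset.mem_filter] at hR
      refine ⟨hR.2, ?_⟩
      simp only [Polynomial.eval_C]
      exact toFun_det φ R p hR.2 (hA R hR.1))
  omega

/-- coincidence -/
def Coin (c c' : P1 K → K) (R x y z : P1 K) : Prop :=
  (c R - c z) * (c x - c y) * ((c' R - c' y) * (c' x - c' z)) =
      (c' R - c' z) * (c' x - c' y) * ((c R - c y) * (c x - c z))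

lemma coin_count (hd : 2 ≤ d) (x y z : P1 K) (hxy : aff x ≠ aff y) (hyz : aff y ≠ aff z)
    (hxz' : aff (φ.toFun x) ≠ aff (φ.toFun z)) (A : Finset (P1 K))
    (hA : ∀ R ∈ A, R.rep 1 ≠ 0 ∧ (φ.toFun R).rep 1 ≠ 0 ∧ Coin aff (fun P => aff (φ.toFun P)) R x y z) : A.card ≤ d + 1 := by
  set α := (aff x - aff y) * (aff (φ.toFun x) - aff (φ.toFun z)) with hα
  set β := (aff (φ.toFun x) - aff (φ.toFun y)) * (aff x - aff z) with hβ
  have hα0 : α ≠ 0 := mul_ne_zero (sub_ne_zero.mpr hxy) (sub_ne_zero.mpr hxz')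
  have lin : ∀ a b p q : K, (Polynomial.C a * (Polynomial.X - Polynomial.C b) - Polynomial.C p * (Polynomial.X - Polynomial.C q)).natDegree ≤ 1 := by
    intro a b p q
    refine (Polynomial.natDegree_sub_le _ _).trans (max_le ?_ ?_) <;>
    · refine (Polynomial.natDegree_C_mul_le _ _).trans ?_
      simp
  apply form_count φ hd (Polynomial.C α * (Polynomial.X - Polynomial.C (aff z)) - Polynomial.C β * (Polynomial.X - Polynomial.C (aff y)))
    (Polynomial.C (α * aff (φ.toFun y)) * (Polynomial.X - Polynomial.C (aff z)) - Polynomial.C (β * aff (φ.toFun z)) * (Polynomial.X - Polynomial.C (aff y)))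
    (lin _ _ _ _) (lin _ _ _ _)
  · left
    intro h0
    have e1 := congrArg (Polynomial.eval (aff y)) h0
    simp only [Polynomial.eval_sub, Polynomial.eval_mul, Polynomial.eval_C, Polynomial.eval_X, sub_self, mul_zero,
      sub_zero, Polynomial.eval_zero] at e1
    exact mul_ne_zero hα0 (sub_ne_zero.mpr hyz) e1
  · intro R hR
    obtain ⟨h1, h2, h3⟩ := hA R hR
    refine ⟨h1, ?_⟩
    have h4 := toFun_det φ R _ h1 rfl
    have h5 : (dh φ.F).eval (aff R) = (dh φ.G).eval (aff R) * aff (φ.toFun R) := by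
      rw [show aff (φ.toFun R) = (φ.toFun R).rep 0 / (φ.toFun R).rep 1 from rfl, mul_div_assoc', eq_div_iff h2, h4]
    simp only [Polynomial.eval_sub, Polynomial.eval_mul, Polynomial.eval_C, Polynomial.eval_X]
    rw [h5]
    unfold Coin at h3
    simp only at h3
    linear_combination (dh φ.G).eval (aff R) * h3

end polys

section perbound
variable {K : Type*} [Field K] [NumberField K] {d : ℕ} (T : Finset (HeightOneSpectrum (𝓞 K))) (φ : P1Map K d)

/-- periodic points, bounded count -/
lemma per_bound (hd : 2 ≤ d) (hgr : GoodReductionOutside φ T) (Y : Finset (P1 K))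
    (hY : ∀ P ∈ Y, P ∈ Function.periodicPts φ.toFun) (hY1 : ∀ P ∈ Y, P.rep 1 ≠ 0)
    (hY2 : ∀ P ∈ Y, (φ.toFun P).rep 1 ≠ 0) :
    Y.card ≤ 4 * (2 ^ 22) ^ (2 * sCard K T) + (4 * (2 ^ 22) ^ (2 * sCard K T)) ^ 3 * (d + 1) := by
  classical
  set A := 4 * (2 ^ 22) ^ (2 * sCard K T) with hAdef
  let c : P1 K → K := aff
  let c' : P1 K → K := fun P => aff (φ.toFun P)
  have ci : ∀ P ∈ Y, ∀ Q ∈ Y, P ≠ Q → c P ≠ c Q := fun P hP Q hQ h h' => h (aff_inj (hY1 P hP) (hY1 Q hQ) h')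
  have ci' : ∀ P ∈ Y, ∀ Q ∈ Y, P ≠ Q → c' P ≠ c' Q := fun P hP Q hQ h h' => h
    (per_inj (hY P hP) (hY Q hQ) 1 (aff_inj (hY2 P hP) (hY2 Q hQ) h'))
  have big : ∀ Z ⊆ Y, A ≤ Z.card → ∃ a ∈ Z, ∃ a' ∈ Z, ∃ b ∈ Z, ∃ b' ∈ Z, a ≠ a' ∧ b ≠ b' ∧ a ≠ b ∧ a ≠ b' ∧ a' ≠ b ∧ a' ≠ b' ∧
      Coin c c' a a' b b' := by
    intro Z hZ hc
    obtain ⟨a, ha, a', ha', b, hb, b', hb', h⟩ := IC T (ι := {P // P ∈ Z}) (fun P => c P.1) (fun P => c' P.1)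
      (fun P Q h => by
        by_contra hne
        exact ci _ (hZ P.2) _ (hZ Q.2) (fun h => hne (Subtype.ext h)) h)
      (fun P Q h => by
        by_contra hne
        exact ci' _ (hZ P.2) _ (hZ Q.2) (fun h => hne (Subtype.ext h)) h)
      (by
        intro v hv a a' b b' _ _ _ _
        have key : ∀ P Q : {P // P ∈ Z}, dd v (φ.toFun P.1) (φ.toFun Q.1) = dd v P.1 Q.1 :=
          fun P Q => dd_isom φ (hgr v hv) 1 (hY _ (hZ P.2)) (hY _ (hZ Q.2))
        have e1 := fun P Q : {P // P ∈ Z} => av_aff_sub v (hY1 P.1 (hZ P.2)) (hY1 Q.1 (hZ Q.2))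
        have e2 := fun P Q : {P // P ∈ Z} => av_aff_sub v (hY2 P.1 (hZ P.2)) (hY2 Q.1 (hZ Q.2))
        simp only [c, c', e1, e2, key]
        ring) Finset.univ (by rw [Finset.card_univ, Fintype.card_coe]; exact hc)
    have ne : ∀ {p q : {P // P ∈ Z}}, p ≠ q → p.1 ≠ q.1 := fun h h' => h (Subtype.ext h')
    exact ⟨a.1, a.2, a'.1, a'.2, b.1, b.2, b'.1, b'.2, ne h.1, ne h.2.1, ne h.2.2.1, ne h.2.2.2.1, ne h.2.2.2.2.1,
      ne h.2.2.2.2.2.1, h.2.2.2.2.2.2⟩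
  let good : Finset (P1 K) → Prop := fun Z => ∀ a ∈ Z, ∀ x ∈ Z, ∀ y ∈ Z, ∀ z ∈ Z, a ≠ x → y ≠ z → a ≠ y → a ≠ z → x ≠ y → x ≠ z →
      ¬ Coin c c' a x y z
  obtain ⟨G, hG, hmax⟩ := (Y.powerset.filter good).exists_max_image Finset.card
    ⟨∅, by simp [good]⟩
  rw [Finset.mem_filter, Finset.mem_powerset] at hG
  have hGc : G.card ≤ A := by
    by_contra hlt
    obtain ⟨a, ha, a', ha', b, hb, b', hb', h⟩ := big G hG.1 (by omega)
    exact hG.2 a ha a' ha' b hb b' hb' h.1 h.2.1 h.2.2.1 h.2.2.2.1 h.2.2.2.2.1 h.2.2.2.2.2.1 h.2.2.2.2.2.2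
  have hcov : ∀ R ∈ Y \ G, ∃ x ∈ G, ∃ y ∈ G, ∃ z ∈ G, x ≠ y ∧ y ≠ z ∧ x ≠ z ∧ Coin c c' R x y z := by
    intro R hR
    rw [Finset.mem_sdiff] at hR
    by_contra hno
    push Not at hno
    have : insert R G ∈ Y.powerset.filter good := by
      rw [Finset.mem_filter, Finset.mem_powerset]
      refine ⟨Finset.insert_subset hR.1 hG.1, ?_⟩
      intro a ha x hx y hy z hz hax hyz hay haz hxy hxz hco
      rw [Finset.mem_insert] at ha hx hy hz
      have mem : ∀ {p q : P1 K}, (p = R ∨ p ∈ G) → p ≠ q → q = R → p ∈ G := by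
        intro p q h hne hq
        rcases h with h | h
        · exact absurd (h.trans hq.symm) hne
        · exact h
      by_cases h1 : a = R
      · subst h1
        exact hno x (mem hx hax.symm rfl) y (mem hy hay.symm rfl) z (mem hz haz.symm rfl) hxy hyz hxz hco
      by_cases h2 : x = R
      · subst h2
        refine hno a (mem ha hax rfl) z (mem hz hxz.symm rfl) y (mem hy hxy.symm rfl) haz hyz.symm hay ?_
        unfold Coin at hco ⊢
        linear_combination hco
      by_cases h3 : y = R
      · subst h3
        refine hno z (mem hz hyz.symm rfl) a (mem ha hay rfl) x (mem hx hxy rfl) haz.symm hax hxz.symm ?_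
        unfold Coin at hco ⊢
        linear_combination hco
      by_cases h4 : z = R
      · subst h4
        refine hno y (mem hy hyz rfl) x (mem hx hxz rfl) a (mem ha haz rfl) hxy.symm hax.symm hay.symm ?_
        unfold Coin at hco ⊢
        linear_combination hco
      exact hG.2 a (ha.resolve_left h1) x (hx.resolve_left h2) y (hy.resolve_left h3) z (hz.resolve_left h4)
        hax hyz hay haz hxy hxz hco
    have h2 := hmax _ this
    rw [Finset.card_insert_of_notMem hR.2] at h2
    omega
  let Bad : P1 K × P1 K × P1 K → Finset (P1 K) := fun t =>
    Y.filter (fun R => t.1 ≠ t.2.1 ∧ t.2.1 ≠ t.2.2 ∧ t.1 ≠ t.2.2 ∧ Coin c c' R t.1 t.2.1 t.2.2)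
  have hsub : Y \ G ⊆ (G ×ˢ G ×ˢ G).biUnion Bad := by
    intro R hR
    obtain ⟨x, hx, y, hy, z, hz, h⟩ := hcov R hR
    rw [Finset.mem_biUnion]
    refine ⟨(x, y, z), by simp [hx, hy, hz], ?_⟩
    simp only [Bad, Finset.mem_filter]
    exact ⟨(Finset.mem_sdiff.mp hR).1, h⟩
  have hbad : ∀ t ∈ G ×ˢ G ×ˢ G, (Bad t).card ≤ d + 1 := by
    rintro ⟨x, y, z⟩ ht
    simp only [Finset.mem_product] at ht
    by_cases hne : x ≠ y ∧ y ≠ z ∧ x ≠ z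
    · apply coin_count φ hd x y z (ci _ (hG.1 ht.1) _ (hG.1 ht.2.1) hne.1) (ci _ (hG.1 ht.2.1) _ (hG.1 ht.2.2) hne.2.1)
        (ci' _ (hG.1 ht.1) _ (hG.1 ht.2.2) hne.2.2)
      intro R hR
      simp only [Bad, Finset.mem_filter] at hR
      exact ⟨hY1 R hR.1, hY2 R hR.1, hR.2.2.2.2⟩
    · have : Bad (x, y, z) = ∅ := by
        simp only [Bad, Finset.filter_eq_empty_iff]
        intro R _ h
        exact hne ⟨h.1, h.2.1, h.2.2.1⟩
      rw [this]; simp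
  have h1 : (Y \ G).card ≤ G.card ^ 3 * (d + 1) := by
    refine (Finset.card_le_card hsub).trans ((Finset.card_biUnion_le_card_mul _ _ _ hbad).trans ?_)
    rw [Finset.card_product, Finset.card_product]
    apply le_of_eq; ring
  have h2 : Y.card = (Y \ G).card + G.card := (Finset.card_sdiff_add_card_eq_card hG.1).symm
  have h3 : G.card ^ 3 * (d + 1) ≤ A ^ 3 * (d + 1) := Nat.mul_le_mul_right _ (Nat.pow_le_pow_left hGc 3)
  omega

lemma per_bound' (hd : 2 ≤ d) (hgr : GoodReductionOutside φ T) (Y : Finset (P1 K))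
    (hY : ∀ P ∈ Y, P ∈ Function.periodicPts φ.toFun) :
    Y.card ≤ 4 * (2 ^ 22) ^ (2 * sCard K T) + (4 * (2 ^ 22) ^ (2 * sCard K T)) ^ 3 * (d + 1) + 2 := by
  classical
  have h1 := card_inf Y
  set Y1 := Y.filter (fun P => P.rep 1 ≠ 0) with hY1
  have h := Finset.card_filter_add_card_filter_not (s := Y1) (fun P => (φ.toFun P).rep 1 ≠ 0)
  have h2 : (Y1.filter (fun P => ¬ (φ.toFun P).rep 1 ≠ 0)).card ≤ 1 := by
    rw [Finset.card_le_one]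
    intro P hP Q hQ
    rw [Finset.mem_filter, hY1, Finset.mem_filter] at hP hQ
    push Not at hP hQ
    exact per_inj (hY P hP.1.1) (hY Q hQ.1.1) 1 (inf_unique hP.2 hQ.2)
  have h3 := per_bound T φ hd hgr (Y1.filter (fun P => (φ.toFun P).rep 1 ≠ 0)) (by
    intro P hP; rw [Finset.mem_filter, hY1, Finset.mem_filter] at hP; exact hY P hP.1.1) (by
    intro P hP; rw [Finset.mem_filter, hY1, Finset.mem_filter] at hP; exact hP.1.2) (by
    intro P hP; rw [Finset.mem_filter, hY1, Finset.mem_filter] at hP; exact hP.2)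
  omega

end perbound

section PHsec

lemma half_sum (K : ℕ) : ∑ k ∈ Finset.range (K + 1), (1 / 2 : ℝ) ^ k ≤ 2 := by
  rw [geom_sum_eq (by norm_num)]
  have : (0:ℝ) < (1 / 2) ^ (K + 1) := by positivity
  rw [div_le_iff_of_neg (by norm_num)]
  linarith

lemma int_half_sum (K : ℕ) : ∑ n ∈ Finset.Icc (-(K:ℤ)) K, (1 / 2 : ℝ) ^ n.natAbs ≤ 4 := by
  have hsub : Finset.Icc (-(K:ℤ)) K ⊆ (Finset.range (K + 1)).image (fun k : ℕ => (k : ℤ)) ∪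
      (Finset.range (K + 1)).image (fun k : ℕ => -(k : ℤ)) := by
    intro n hn
    rw [Finset.mem_Icc] at hn
    rw [Finset.mem_union, Finset.mem_image, Finset.mem_image]
    rcases le_total 0 n with h | h
    · left; exact ⟨n.toNat, by rw [Finset.mem_range]; omega, by omega⟩
    · right; exact ⟨(-n).toNat, by rw [Finset.mem_range]; omega, by omega⟩
  have h1 := half_sum K
  calc ∑ n ∈ Finset.Icc (-(K:ℤ)) K, (1 / 2 : ℝ) ^ n.natAbs
      ≤ ∑ n ∈ (Finset.range (K + 1)).image (fun k : ℕ => (k : ℤ)) ∪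
      (Finset.range (K + 1)).image (fun k : ℕ => -(k : ℤ)), (1 / 2 : ℝ) ^ n.natAbs :=
        Finset.sum_le_sum_of_subset_of_nonneg hsub (fun _ _ _ => by positivity)
    _ ≤ ∑ n ∈ (Finset.range (K + 1)).image (fun k : ℕ => (k : ℤ)), (1 / 2 : ℝ) ^ n.natAbs +
      ∑ n ∈ (Finset.range (K + 1)).image (fun k : ℕ => -(k : ℤ)), (1 / 2 : ℝ) ^ n.natAbs := by
        rw [← Finset.sum_union_inter]
        have : 0 ≤ ∑ n ∈ (Finset.range (K + 1)).image (fun k : ℕ => (k : ℤ)) ∩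
            (Finset.range (K + 1)).image (fun k : ℕ => -(k : ℤ)), (1 / 2 : ℝ) ^ n.natAbs :=
          Finset.sum_nonneg (fun _ _ => by positivity)
        linarith
    _ ≤ 4 := by
        rw [Finset.sum_image (by intro a _ b _ h; simpa using h), Finset.sum_image (by intro a _ b _ h; simpa using h)]
        simp only [Int.natAbs_neg, Int.natAbs_natCast]
        linarith

lemma vec_count {m : Type*} [Fintype m] (K : ℕ) (V : Finset (m → ℤ)) (hV : ∀ f ∈ V, ∑ p, (f p).natAbs ≤ K) :
    V.card ≤ 4 ^ (Fintype.card m) * 2 ^ K := by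
  classical
  have hsub : V ⊆ Fintype.piFinset (fun _ : m => Finset.Icc (-(K:ℤ)) K) := by
    intro f hf
    rw [Fintype.mem_piFinset]
    intro p
    have h1 : (f p).natAbs ≤ ∑ p, (f p).natAbs :=
      Finset.single_le_sum (f := fun p => (f p).natAbs) (fun _ _ => Nat.zero_le _) (Finset.mem_univ p)
    have := hV f hf
    rw [Finset.mem_Icc]; omega
  have h1 : (V.card : ℝ) * (1 / 2) ^ K ≤ ∑ f ∈ V, ∏ p, (1 / 2 : ℝ) ^ (f p).natAbs := by
    rw [← nsmul_eq_mul]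
    apply Finset.card_nsmul_le_sum
    intro f hf
    rw [Finset.prod_pow_eq_pow_sum]
    exact pow_le_pow_of_le_one (by norm_num) (by norm_num) (hV f hf)
  have h2 : ∑ f ∈ V, ∏ p, (1 / 2 : ℝ) ^ (f p).natAbs ≤ 4 ^ (Fintype.card m) := by
    refine (Finset.sum_le_sum_of_subset_of_nonneg hsub (fun _ _ _ => by positivity)).trans ?_
    rw [← Finset.prod_univ_sum (fun _ : m => Finset.Icc (-(K:ℤ)) K) (fun _ n => (1 / 2 : ℝ) ^ n.natAbs)]
    refine (Finset.prod_le_prod (fun _ _ => Finset.sum_nonneg fun _ _ => by positivity) (fun _ _ => int_half_sum K)).trans ?_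
    simp
  have h3 : (V.card : ℝ) ≤ 4 ^ (Fintype.card m) * 2 ^ K := by
    have h4 := h1.trans h2
    rw [one_div, inv_pow, ← div_eq_mul_inv, div_le_iff₀ (by positivity)] at h4
    exact h4
  exact_mod_cast h3

/-- pigeonhole on cells -/
lemma PH {ι m : Type*} [Fintype m] (f : ι → m → ℝ) (k M : ℕ) {g R : ℝ} (hg : 0 < g) (I : Finset ι)
    (hR : ∀ i ∈ I, ∑ p, |f i p| ≤ R) (hRk : R ≤ k * Fintype.card m * g)
    (hI : 2 ^ ((k + 3) * Fintype.card m) * M < I.card) :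
    ∃ J ⊆ I, M < J.card ∧ ∀ i ∈ J, ∀ j ∈ J, ∀ p, |f i p - f j p| ≤ g := by
  classical
  let F : ι → m → ℤ := fun i p => ⌊f i p / g⌋
  have hV := vec_count ((k + 1) * Fintype.card m) (I.image F) (by
    intro n hn
    rw [Finset.mem_image] at hn
    obtain ⟨i, hi, rfl⟩ := hn
    have hb : ∀ p, ((F i p).natAbs : ℝ) ≤ |f i p| / g + 1 := by
      intro p
      rw [Nat.cast_natAbs, Int.cast_abs]
      have h1 := Int.floor_le (f i p / g)
      have h2 := Int.lt_floor_add_one (f i p / g)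
      rw [← abs_of_pos hg, ← abs_div]
      have h3 := le_abs_self (f i p / g)
      have h4 := neg_abs_le (f i p / g)
      rw [abs_le]
      constructor <;> simp only [F] <;> linarith
    have h1 : ((∑ p, (F i p).natAbs : ℕ) : ℝ) ≤ ((k + 1) * Fintype.card m : ℕ) := by
      push_cast
      refine (Finset.sum_le_sum (fun p _ => hb p)).trans ?_
      rw [Finset.sum_add_distrib, ← Finset.sum_div]
      have h2 : (∑ p, |f i p|) / g ≤ k * Fintype.card m := by
        rw [div_le_iff₀ hg]; exact (hR i hi).trans hRk
      simp only [Finset.sum_const, Finset.card_univ, nsmul_eq_mul, mul_one]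
      linarith
    exact_mod_cast h1)
  have hc : (I.image F).card * M < I.card := by
    refine lt_of_le_of_lt (Nat.mul_le_mul_right _ hV) (lt_of_le_of_lt (le_of_eq ?_) hI)
    congr 1
    rw [show (4:ℕ) = 2 ^ 2 by norm_num, ← pow_mul, ← pow_add]
    congr 1; ring
  obtain ⟨y, hy, hJ⟩ := Finset.exists_lt_card_fiber_of_mul_lt_card_of_maps_to
    (fun i hi => Finset.mem_image_of_mem F hi) hc
  refine ⟨_, Finset.filter_subset _ _, hJ, ?_⟩
  intro i hi j hj p
  rw [Finset.mem_filter] at hi hj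
  have e : F i p = F j p := by rw [hi.2, hj.2]
  have h1 := Int.abs_sub_lt_one_of_floor_eq_floor e
  rw [← sub_div, abs_div, abs_of_pos hg, div_lt_one hg] at h1
  exact h1.le

/-- `ℓ¹` version -/
lemma PH1 {ι m : Type*} [Fintype m] [Nonempty m] (f : ι → m → ℝ) (k M : ℕ) {r R : ℝ} (hr : 0 < r) (I : Finset ι)
    (hR : ∀ i ∈ I, ∑ p, |f i p| ≤ R) (hRk : R ≤ k * r)
    (hI : 2 ^ ((k + 3) * Fintype.card m) * M < I.card) :
    ∃ J ⊆ I, M < J.card ∧ ∀ i ∈ J, ∀ j ∈ J, ∑ p, |f i p - f j p| ≤ r := by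
  have hm : (0:ℝ) < Fintype.card m := by exact_mod_cast Fintype.card_pos
  obtain ⟨J, hJ, hM, h⟩ := PH f k M (g := r / Fintype.card m) (by positivity) I hR (by
    refine hRk.trans (le_of_eq ?_); field_simp) hI
  refine ⟨J, hJ, hM, fun i hi j hj => ?_⟩
  refine (Finset.sum_le_sum (fun p _ => h i hi j hj p)).trans (le_of_eq ?_)
  simp only [Finset.sum_const, Finset.card_univ, nsmul_eq_mul]
  field_simp

end PHsec

section units
variable {K : Type*} [Field K] [NumberField K] (T : Finset (HeightOneSpectrum (𝓞 K)))

/-- `S`-units -/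
def SU (x : K) : Prop := x ≠ 0 ∧ ∀ v ∉ T, av v x = 1

variable {T}
lemma SU.div {x y : K} (hx : SU T x) (hy : SU T y) : SU T (x / y) :=
  ⟨div_ne_zero hx.1 hy.1, fun v hv => by rw [map_div₀, hx.2 v hv, hy.2 v hv, div_one]⟩

lemma SU.inv {x : K} (hx : SU T x) : SU T (x⁻¹) :=
  ⟨inv_ne_zero hx.1, fun v hv => by rw [map_inv₀, hx.2 v hv, inv_one]⟩

lemma SU.one : SU T (1 : K) := ⟨one_ne_zero, fun v _ => by simp⟩

variable (T)
/-- height -/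
noncomputable def hh (u : K) : ℝ := ∑ p : Pl T, max (lv p u) 0
/-- sum of logs of `1-u` -/
noncomputable def OO (u : K) : ℝ := ∑ p : Pl T, lv p (1 - u)
/-- negative part -/
noncomputable def ng (u : K) : ℝ := ∑ p : Pl T, max (-lv p (1 - u)) 0
/-- positive part -/
noncomputable def po (u : K) : ℝ := ∑ p : Pl T, max (lv p (1 - u)) 0
/-- constant -/
noncomputable def CC (K : Type*) [Field K] [NumberField K] (T : Finset (HeightOneSpectrum (𝓞 K))) : ℝ :=
  ∑ p : Pl T, pmu p * Real.log 2

lemma CC_le : CC K T ≤ 2 * Real.log 2 * sCard K T := by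
  rw [CC, ← card_Pl T, ← Finset.card_univ (α := Pl T), mul_comm, ← nsmul_eq_mul]
  apply Finset.sum_le_card_nsmul
  intro p _
  exact mul_le_mul_of_nonneg_right (pmu_le p) (Real.log_nonneg (by norm_num))

lemma CC_pos : 0 ≤ CC K T :=
  Finset.sum_nonneg fun p _ => mul_nonneg (by linarith [pmu_pos p]) (Real.log_nonneg (by norm_num))

lemma po_ng (u : K) : po T u - ng T u = OO T u := by
  rw [po, ng, OO, ← Finset.sum_sub_distrib]
  apply Finset.sum_congr rfl
  intro p _
  rcases le_total (lv p (1 - u)) 0 with h | h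
  · rw [max_eq_right h, max_eq_left (by linarith)]; ring
  · rw [max_eq_left h, max_eq_right (by linarith)]; ring

lemma po_add_ng (u : K) : po T u + ng T u = ∑ p : Pl T, |lv p (1 - u)| := by
  rw [po, ng, ← Finset.sum_add_distrib]
  apply Finset.sum_congr rfl
  intro p _
  rcases le_total (lv p (1 - u)) 0 with h | h
  · rw [max_eq_right h, max_eq_left (by linarith), abs_of_nonpos h]; ring
  · rw [max_eq_left h, max_eq_right (by linarith), abs_of_nonneg h]; ring

lemma ng_nonneg (u : K) : 0 ≤ ng T u := Finset.sum_nonneg fun _ _ => le_max_right _ _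
lemma po_nonneg (u : K) : 0 ≤ po T u := Finset.sum_nonneg fun _ _ => le_max_right _ _
lemma hh_nonneg (u : K) : 0 ≤ hh T u := Finset.sum_nonneg fun _ _ => le_max_right _ _

/-- local triangle inequality -/
lemma lv_sub {T : Finset (HeightOneSpectrum (𝓞 K))} (p : Pl T) {x y : K} {c : ℝ} (hxy : x - y ≠ 0)
    (hx : x ≠ 0 → lv p x ≤ c) (hy : y ≠ 0 → lv p y ≤ c) :
    lv p (x - y) ≤ pmu p * Real.log 2 + c := by
  have hmu := pmu_pos p
  have hmu0 : 0 < pmu p := by linarith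
  have hb : ∀ z : K, (z ≠ 0 → lv p z ≤ c) → pav p z ≤ Real.exp (c / pmu p) := by
    intro z hz
    by_cases h0 : z = 0
    · rw [h0, map_zero]; positivity
    · have h1 := hz h0
      have h2 : 0 < pav p z := (pav p).pos h0
      rw [← Real.log_le_iff_le_exp h2, le_div_iff₀ hmu0]
      rw [lv] at h1; linarith
  have h1 : pav p (x - y) ≤ 2 * Real.exp (c / pmu p) := by
    refine ((pav p).sub_le_add x y).trans ?_
    linarith [hb x hx, hb y hy]
  have h2 : Real.log (pav p (x - y)) ≤ Real.log 2 + c / pmu p := by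
    refine (Real.log_le_log ((pav p).pos hxy) h1).trans ?_
    rw [Real.log_mul (by norm_num) (Real.exp_ne_zero _), Real.log_exp]
  rw [lv]
  calc pmu p * Real.log (pav p (x - y)) ≤ pmu p * (Real.log 2 + c / pmu p) :=
        mul_le_mul_of_nonneg_left h2 hmu0.le
    _ = _ := by field_simp

lemma lv_one {T : Finset (HeightOneSpectrum (𝓞 K))} (p : Pl T) : lv p (1 : K) = 0 := by simp [lv]

lemma po_le {u : K} (hu1 : u ≠ 1) : po T u ≤ hh T u + CC K T := by
  rw [po, hh, CC, ← Finset.sum_add_distrib]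
  apply Finset.sum_le_sum
  intro p _
  have hl : 0 ≤ pmu p * Real.log 2 := mul_nonneg (by linarith [pmu_pos p]) (Real.log_nonneg (by norm_num))
  have := lv_sub p (x := 1) (y := u) (c := max (lv p u) 0) (sub_ne_zero.mpr hu1.symm)
    (fun _ => by rw [lv_one]; exact le_max_right _ _) (fun _ => le_max_left _ _)
  have h2 := le_max_right (lv p u) 0
  exact max_le (by linarith) (by linarith)

lemma hh_le {u : K} (hu : u ≠ 0) : hh T u ≤ po T u + CC K T := by
  rw [po, hh, CC, ← Finset.sum_add_distrib]
  apply Finset.sum_le_sum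
  intro p _
  have hl : 0 ≤ pmu p * Real.log 2 := mul_nonneg (by linarith [pmu_pos p]) (Real.log_nonneg (by norm_num))
  have := lv_sub p (x := 1) (y := 1 - u) (c := max (lv p (1 - u)) 0) (by simpa using hu)
    (fun _ => by rw [lv_one]; exact le_max_right _ _) (fun _ => le_max_left _ _)
  rw [sub_sub_cancel] at this
  have h2 := le_max_right (lv p (1 - u)) 0
  exact max_le (by linarith) (by linarith)

lemma OO_nonneg {u : K} (hu : SU T u) (hu1 : u ≠ 1) : 0 ≤ OO T u := by
  apply PF T (sub_ne_zero.mpr hu1.symm)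
  intro v hv
  refine (av_sub v _ _).trans ?_
  rw [hu.2 v hv]; simp

lemma SU_sum {u : K} (hu : SU T u) : ∑ p : Pl T, lv p u = 0 := PFeq T hu.1 hu.2

lemma OO_inv {u : K} (hu : SU T u) (hu1 : u ≠ 1) : OO T u⁻¹ = OO T u := by
  have h1 : (1 - u⁻¹) = -((1 - u) / u) := by
    have := hu.1
    field_simp; ring
  rw [OO, OO, h1]
  have h2 : ∀ p : Pl T, lv p (-((1 - u) / u)) = lv p (1 - u) - lv p u := by
    intro p
    rw [lv_neg, lv_div p (sub_ne_zero.mpr hu1.symm) hu.1]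
  simp only [h2]
  rw [Finset.sum_sub_distrib, SU_sum T hu, sub_zero]

lemma OO_swap {x y : K} (hx : SU T x) (hy : SU T y) (h : x ≠ y) : OO T (x / y) = OO T (y / x) := by
  rw [← inv_div, OO_inv T (hy.div hx)]
  intro h1
  rw [div_eq_one_iff_eq hx.1] at h1
  exact h h1.symm

lemma hh_inv {u : K} (hu : SU T u) : hh T u⁻¹ = hh T u := by
  have h1 : hh T u - hh T u⁻¹ = ∑ p : Pl T, lv p u := by
    rw [hh, hh, ← Finset.sum_sub_distrib]
    apply Finset.sum_congr rfl
    intro p _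
    rw [lv_inv]
    rcases le_total (lv p u) 0 with h | h
    · rw [max_eq_right h, max_eq_left (by linarith)]; ring
    · rw [max_eq_left h, max_eq_right (by linarith)]; ring
  rw [SU_sum T hu] at h1
  linarith

lemma hh_two {u : K} (hu : SU T u) : ∑ p : Pl T, |lv p u| = 2 * hh T u := by
  have h1 : hh T u + hh T u⁻¹ = ∑ p : Pl T, |lv p u| := by
    rw [hh, hh, ← Finset.sum_add_distrib]
    apply Finset.sum_congr rfl
    intro p _
    rw [lv_inv]
    rcases le_total (lv p u) 0 with h | h
    · rw [max_eq_right h, max_eq_left (by linarith), abs_of_nonpos h]; ring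
    · rw [max_eq_left h, max_eq_right (by linarith), abs_of_nonneg h]; ring
  rw [hh_inv T hu] at h1
  linarith

lemma hh_mul {x y : K} (hx : SU T x) (hy : SU T y) : hh T (x * y) ≤ hh T x + hh T y := by
  rw [hh, hh, hh, ← Finset.sum_add_distrib]
  apply Finset.sum_le_sum
  intro p _
  rw [lv_mul p hx.1 hy.1]
  have h1 := le_max_left (lv p x) 0
  have h2 := le_max_left (lv p y) 0
  have h3 := le_max_right (lv p x) 0
  have h4 := le_max_right (lv p y) 0
  exact max_le (by linarith) (by linarith)

lemma hh_div {x y : K} (hx : SU T x) (hy : SU T y) : hh T (x / y) ≤ hh T x + hh T y := by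
  rw [div_eq_mul_inv, ← hh_inv T hy]
  exact hh_mul T hx hy.inv

lemma hh_of_div {x y : K} (hx : SU T x) (hy : SU T y) : hh T x ≤ hh T y + hh T (x / y) := by
  have := hh_mul T hy (hx.div hy)
  rwa [mul_div_cancel₀ _ hy.1] at this

lemma div_ne_one' {x y : K} (hy : SU T y) (h : x ≠ y) : x / y ≠ 1 := by
  rw [Ne, div_eq_one_iff_eq hy.1]; exact h

lemma hh_le_OO {u : K} (hu : SU T u) : hh T u ≤ OO T u + ng T u + CC K T := by
  have := hh_le T hu.1
  have := po_ng T u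
  linarith

lemma OO_le_hh {u : K} (hu1 : u ≠ 1) : OO T u ≤ hh T u + CC K T := by
  have := po_le T hu1
  have := po_ng T u
  have := ng_nonneg T u
  linarith

lemma LL_le {u : K} (hu : SU T u) (hu1 : u ≠ 1) : ∑ p : Pl T, |lv p (1 - u)| ≤ 2 * hh T u + 2 * CC K T := by
  have h1 := po_le T hu1
  have h2 := po_ng T u
  have h3 := OO_nonneg T hu hu1
  have h4 := po_add_ng T u
  linarith

lemma LV {x z z' : K} (hz : SU T z) (hz' : SU T z') (hzz : z ≠ z') (hxz : x ≠ z) (hxz' : x ≠ z') :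
    ng T (x / z) ≤ CC K T + ∑ p : Pl T, |lv p z - lv p z'| + ∑ p : Pl T, |lv p (1 - x / z) - lv p (1 - x / z')| := by
  have h0 := OO_nonneg T (hz.div hz') (div_ne_one' T hz' hzz)
  have key : OO T (z / z') ≤ ∑ p : Pl T, (pmu p * Real.log 2 + |lv p z - lv p z'| +
      |lv p (1 - x / z) - lv p (1 - x / z')| - max (-lv p (1 - x / z)) 0) := by
    apply Finset.sum_le_sum
    intro p _
    have n1 : 1 - x / z ≠ 0 := sub_ne_zero.mpr (div_ne_one' T hz hxz).symm
    have n1' : 1 - x / z' ≠ 0 := sub_ne_zero.mpr (div_ne_one' T hz' hxz').symm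
    have n2 : 1 - z / z' ≠ 0 := sub_ne_zero.mpr (div_ne_one' T hz' hzz).symm
    have a1 := neg_abs_le (lv p z - lv p z')
    have a2 := le_abs_self (lv p z - lv p z')
    have a3 := neg_abs_le (lv p (1 - x / z) - lv p (1 - x / z'))
    have a4 := abs_nonneg (lv p z - lv p z')
    have a5 := abs_nonneg (lv p (1 - x / z) - lv p (1 - x / z'))
    have ed := lv_div p hz.1 hz'.1
    rcases le_total (lv p (1 - x / z)) 0 with h | h
    · rw [max_eq_left (by linarith)]
      have e : 1 - z / z' = (1 - x / z') - (z / z') * (1 - x / z) := by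
        have := hz.1; have := hz'.1
        field_simp; ring
      have := lv_sub p (x := 1 - x / z') (y := (z / z') * (1 - x / z))
        (c := |lv p z - lv p z'| + |lv p (1 - x / z) - lv p (1 - x / z')| + lv p (1 - x / z)) (by rw [← e]; exact n2)
        (fun _ => by linarith) (fun _ => by rw [lv_mul p (hz.div hz').1 n1, ed]; linarith)
      rw [← e] at this
      linarith
    · rw [max_eq_right (by linarith)]
      have := lv_sub p (x := 1) (y := z / z') (c := |lv p z - lv p z'|) n2
        (fun _ => by rw [lv_one]; linarith) (fun _ => by rw [ed]; linarith)
      linarith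
  rw [Finset.sum_sub_distrib, Finset.sum_add_distrib, Finset.sum_add_distrib] at key
  rw [ng, CC]
  linarith

end units

lemma unit_close (X Z : ℂ) (hX : X ≠ 0) (hZ : Z ≠ 0) (hl : |Real.log ‖X‖ - Real.log ‖Z‖| ≤ 1 / 4)
    (hre : |(X / ‖X‖).re - (Z / ‖Z‖).re| ≤ 1 / 8) (him : |(X / ‖X‖).im - (Z / ‖Z‖).im| ≤ 1 / 8) :
    ‖X / Z - 1‖ < 1 := by
  have nX : 0 < ‖X‖ := norm_pos_iff.mpr hX
  have nZ : 0 < ‖Z‖ := norm_pos_iff.mpr hZ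
  have nX' : (‖X‖ : ℂ) ≠ 0 := by exact_mod_cast nX.ne'
  have nZ' : (‖Z‖ : ℂ) ≠ 0 := by exact_mod_cast nZ.ne'
  have e1 : X / Z - 1 = (X - Z) / Z := by field_simp
  rw [e1, norm_div, div_lt_one nZ]
  have e2 : X - Z = ‖Z‖ * (X / ‖X‖ - Z / ‖Z‖) + (‖X‖ - ‖Z‖) * (X / ‖X‖) := by field_simp; ring
  have h1 : ‖X / ‖X‖ - Z / ‖Z‖‖ ≤ 1 / 4 := by
    refine (Complex.norm_le_abs_re_add_abs_im _).trans ?_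
    rw [Complex.sub_re, Complex.sub_im]; linarith
  have h2 : ‖X / ‖X‖‖ = 1 := by
    rw [norm_div, Complex.norm_real, norm_norm, div_self nX.ne']
  have h3 : |‖X‖ - ‖Z‖| ≤ 1 / 2 * ‖Z‖ := by
    have h4 := Real.abs_exp_sub_one_le (x := Real.log ‖X‖ - Real.log ‖Z‖) (by linarith)
    rw [Real.exp_sub, Real.exp_log nX, Real.exp_log nZ, div_sub_one nZ.ne', abs_div, abs_of_pos nZ, div_le_iff₀ nZ] at h4
    refine h4.trans ?_
    nlinarith
  rw [e2]
  refine lt_of_le_of_lt (norm_add_le _ _) ?_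
  rw [norm_mul, norm_mul, h2, Complex.norm_real, norm_norm, ← Complex.ofReal_sub, Complex.norm_real, Real.norm_eq_abs]
  nlinarith

section small
variable {K : Type*} [Field K] [NumberField K] (T : Finset (HeightOneSpectrum (𝓞 K)))

lemma Pl_nonempty : Nonempty (Pl T) := by
  obtain ⟨w⟩ := (inferInstance : Nonempty (InfinitePlace K))
  exact ⟨Sum.inl w⟩

lemma small_count {ι : Type*} (x : ι → K) (I : Finset ι) (hx : ∀ i ∈ I, SU T (x i))
    (hinj : ∀ i ∈ I, ∀ j ∈ I, x i = x j → i = j) (k : ℕ) {R : ℝ} (hR : ∀ i ∈ I, hh T (x i) ≤ R)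
    (hRk : 2 * R ≤ k * sCard K T * (1 / 4)) : I.card ≤ 2 ^ ((k + 25) * sCard K T) := by
  classical
  by_contra hlt
  push Not at hlt
  have hs := card_Pl T
  set s := sCard K T
  obtain ⟨J1, hJ1, c1, h1⟩ := PH (fun i (p : Pl T) => lv p (x i)) k (2 ^ (11 * s) * (2 ^ (11 * s) * 1)) (g := 1 / 4) (R := 2 * R) (by norm_num) I
    (fun i hi => by rw [hh_two T (hx i hi)]; linarith [hR i hi]) (by rw [hs]; exact hRk) (by
      rw [hs]; refine lt_of_le_of_lt (le_of_eq ?_) hlt; ring)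
  let U : ι → Pl T → ℂ := fun i p => Sum.elim (fun w => w.embedding (x i) / ‖w.embedding (x i)‖) (fun _ => 0) p
  have hU : ∀ i p, ‖U i p‖ ≤ 1 := by
    rintro i (w | v)
    · simp only [U, Sum.elim_inl, norm_div, Complex.norm_real, norm_norm]
      exact div_self_le_one _
    · simp [U]
  obtain ⟨J2, hJ2, c2, h2⟩ := PH (fun i (p : Pl T) => (U i p).re) 8 (2 ^ (11 * s) * 1) (g := 1 / 8) (R := s) (by norm_num) J1
    (fun i hi => by
      refine (Finset.sum_le_card_nsmul _ _ 1 (fun p _ => (Complex.abs_re_le_norm _).trans (hU i p))).trans ?_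
      rw [Finset.card_univ, hs]; simp) (by rw [hs]; apply le_of_eq; push_cast; ring) (by rw [hs]; exact c1)
  obtain ⟨J3, hJ3, c3, h3⟩ := PH (fun i (p : Pl T) => (U i p).im) 8 1 (g := 1 / 8) (R := s) (by norm_num) J2
    (fun i hi => by
      refine (Finset.sum_le_card_nsmul _ _ 1 (fun p _ => (Complex.abs_im_le_norm _).trans (hU i p))).trans ?_
      rw [Finset.card_univ, hs]; simp) (by rw [hs]; apply le_of_eq; push_cast; ring) (by rw [hs]; exact c2)
  obtain ⟨i, hi, j, hj, hij⟩ := Finset.one_lt_card.mp c3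
  have hi2 := hJ3 hi
  have hj2 := hJ3 hj
  have hi1 := hJ2 hi2
  have hj1 := hJ2 hj2
  have Hi := hx i (hJ1 hi1)
  have Hj := hx j (hJ1 hj1)
  have hlog : ∀ p : Pl T, |Real.log (pav p (x i)) - Real.log (pav p (x j))| ≤ 1 / 4 := by
    intro p
    have h := h1 i hi1 j hj1 p
    simp only [lv] at h
    rw [← mul_sub, abs_mul, abs_of_pos (by linarith [pmu_pos p])] at h
    nlinarith [pmu_pos p, abs_nonneg (Real.log (pav p (x i)) - Real.log (pav p (x j)))]
  apply hij
  apply hinj i (hJ1 hi1) j (hJ1 hj1)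
  rw [← div_eq_one_iff_eq Hj.1]
  apply eq_one_of_close
  · intro v
    have hv1 : av v (x i / x j) = 1 := by
      by_cases hv : v ∈ T
      · apply av_discrete v (Hi.div Hj).1
        have h := hlog (Sum.inr ⟨v, hv⟩)
        simp only [pav] at h
        rw [map_div₀, Real.log_div (by simpa using Hi.1) (by simpa using Hj.1)]
        have := Real.log_two_gt_d9
        exact lt_of_le_of_lt h (by linarith)
      · exact (Hi.div Hj).2 v hv
    refine (av_sub v _ _).trans ?_
    rw [hv1]; simp
  · intro w
    rw [← InfinitePlace.norm_embedding_eq, map_sub, map_div₀, map_one]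
    apply unit_close
    · simpa using Hi.1
    · simpa using Hj.1
    · have h := hlog (Sum.inl w)
      simp only [InfinitePlace.norm_embedding_eq]
      exact h
    · exact h2 i hi2 j hj2 (Sum.inl w)
    · exact h3 i hi j hj (Sum.inl w)

end small

section NF
variable {K : Type*} [Field K] [NumberField K] (T : Finset (HeightOneSpectrum (𝓞 K)))

lemma l1_div {z z' : K} (hz : SU T z) (hz' : SU T z') : ∑ p : Pl T, |lv p z - lv p z'| = 2 * hh T (z / z') := by
  rw [← hh_two T (hz.div hz')]
  apply Finset.sum_congr rfl
  intro p _
  rw [lv_div p hz.1 hz'.1]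

lemma far_lemma {ι : Type*} (z : ι → K) (X : K) (I : Finset ι) (hz : ∀ i ∈ I, SU T (z i))
    (hinj : ∀ i ∈ I, ∀ j ∈ I, z i = z j → i = j) (hX : SU T X) (hXz : ∀ i ∈ I, X ≠ z i) {H B : ℝ} (hH : 0 < H)
    (hC : CC K T ≤ H / 1000) (hzH : ∀ i ∈ I, hh T (z i) ≤ H / 30) (hXH : hh T X ≤ H)
    (hB : ∀ i ∈ I, OO T (X / z i) ≤ B) (hI : 2 ^ (3003 * sCard K T) < I.card) :
    hh T X ≤ B + H / 6 + 3 * (H / 1000) := by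
  have := Pl_nonempty T
  have hs := card_Pl T
  obtain ⟨J, hJ, c, h⟩ := PH1 (fun i (p : Pl T) => lv p (1 - X / z i)) 3000 1 (r := H / 1000) (R := 3 * H) (by positivity) I
    (fun i hi => by
      have h1 := LL_le T (hX.div (hz i hi)) (div_ne_one' T (hz i hi) (hXz i hi))
      have h2 := hh_div T hX (hz i hi)
      have h3 := hzH i hi
      linarith) (by push_cast; linarith) (by rw [hs, mul_one]; exact hI)
  obtain ⟨i, hi, j, hj, hij⟩ := Finset.one_lt_card.mp c
  have Hi := hz i (hJ hi)
  have Hj := hz j (hJ hj)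
  have h1 := LV T (x := X) Hi Hj (fun h => hij (hinj i (hJ hi) j (hJ hj) h)) (hXz i (hJ hi)) (hXz j (hJ hj))
  have h2 := h i hi j hj
  rw [l1_div T Hi Hj] at h1
  have h3 := hh_div T Hi Hj
  have h4 := hh_le_OO T (hX.div Hi)
  have h5 := hh_of_div T hX Hi
  have h6 := hzH i (hJ hi)
  have h7 := hzH j (hJ hj)
  have h8 := hB i (hJ hi)
  linarith

/-- data for the fixed-class bound -/
structure NFdata {ι : Type*} (I : Finset ι) (x y q : ι → K) (a : ι → ℕ) (Θ : ℝ) : Prop where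
  hx : ∀ i ∈ I, SU T (x i)
  hy : ∀ i ∈ I, SU T (y i)
  hq : ∀ i ∈ I, SU T (q i)
  x1 : ∀ i ∈ I, x i ≠ 1
  y1 : ∀ i ∈ I, y i ≠ 1
  q1 : ∀ i ∈ I, q i ≠ 1
  xinj : ∀ i ∈ I, ∀ j ∈ I, x i = x j → i = j
  yinj : ∀ i ∈ I, ∀ j ∈ I, y i = y j → i = j
  yq : ∀ i ∈ I, ∀ j ∈ I, y i ≠ q j
  xx : ∀ i ∈ I, ∀ j ∈ I, a i ≠ a j → x i ≠ x j
  yy : ∀ i ∈ I, ∀ j ∈ I, a i ≠ a j → y i ≠ y j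
  yx : ∀ i ∈ I, ∀ j ∈ I, a i + 1 ≠ a j → y i ≠ x j
  Tx : ∀ i ∈ I, ∀ j ∈ I, i ≠ j → Θ ≤ OO T (x i / x j)
  Ty : ∀ i ∈ I, ∀ j ∈ I, i ≠ j → Θ ≤ OO T (y i / y j)
  A1 : ∀ i ∈ I, ∀ J ⊆ I, (∀ j ∈ J, a j ≤ a i) → ∑ j ∈ J, OO T (y i / x j) ≤ OO T (q i) + J.card * Θ
  A2 : ∀ i ∈ I, 2 * OO T (y i) ≤ OO T (x i) + Θ
  A3 : ∀ i ∈ I, ∀ k ∈ I, OO T (y i / q k) ≤ OO T (x i) + Θ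
  Axx : ∀ i ∈ I, ∀ j ∈ I, a i ≠ a j → ∃ k ∈ I, OO T (x i / x j) ≤ OO T (q k) + Θ
  Ayy : ∀ i ∈ I, ∀ j ∈ I, a i ≠ a j → ∃ k ∈ I, OO T (y i / y j) ≤ OO T (q k) + Θ
  Ayx : ∀ i ∈ I, ∀ j ∈ I, a i + 1 ≠ a j → ∃ k ∈ I, OO T (y i / x j) ≤ OO T (q k) + Θ

variable {T}
lemma near_lemma {ι : Type*} {I : Finset ι} {x y q : ι → K} {a : ι → ℕ} {Θ : ℝ} (D : NFdata T I x y q a Θ)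
    {H : ℝ} (hH : 0 < H) (hC : CC K T ≤ H / 1000) (hxH : ∀ i ∈ I, hh T (x i) ≤ H) (hyH : ∀ i ∈ I, hh T (y i) ≤ H)
    (hqH : ∀ i ∈ I, hh T (q i) ≤ H) (N : Finset ι) (hN : N ⊆ I)
    (hn : ∀ i ∈ N, H / 30 < hh T (x i) ∨ H / 30 < hh T (y i)) :
    N.card ≤ 2 ^ (10012 * sCard K T) * (1001 + 2 ^ (5003 * sCard K T)) := by
  classical
  by_contra hlt
  push Not at hlt
  have := Pl_nonempty T
  have hs := card_Pl T
  set s := sCard K T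
  set e := H / 1000 with he
  have hepos : 0 < e := by positivity
  have hHe : H = 1000 * e := by rw [he]; ring
  have hSy : ∀ {u : K}, SU T u → u ≠ 1 → (1:K) / u ≠ 1 := fun hu h1 => div_ne_one' T hu h1.symm
  set M0 := 1001 + 2 ^ (5003 * s)
  obtain ⟨J1, hJ1, c1, h1⟩ := PH1 (fun i (p : Pl T) => lv p (x i)) 2000 (2 ^ (2003 * s) * (2 ^ (3003 * s) * (2 ^ (3003 * s) * M0)))
    (R := 2 * H) hepos N
    (fun i hi => by rw [hh_two T (D.hx i (hN hi))]; linarith [hxH i (hN hi)]) (by push_cast; linarith) (by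
      rw [hs]; refine lt_of_le_of_lt (le_of_eq ?_) hlt; ring)
  obtain ⟨J2, hJ2, c2, h2⟩ := PH1 (fun i (p : Pl T) => lv p (y i)) 2000 (2 ^ (3003 * s) * (2 ^ (3003 * s) * M0))
    (R := 2 * H) hepos J1
    (fun i hi => by rw [hh_two T (D.hy i (hN (hJ1 hi)))]; linarith [hyH i (hN (hJ1 hi))]) (by push_cast; linarith) (by
      rw [hs]; exact c1)
  have inv1 : ∀ {u : K}, SU T u → hh T (1 / u) = hh T u := fun hu => by rw [one_div, hh_inv T hu]
  obtain ⟨J3, hJ3, c3, h3⟩ := PH1 (fun i (p : Pl T) => lv p (1 - 1 / x i)) 3000 (2 ^ (3003 * s) * M0)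
    (R := 3 * H) hepos J2
    (fun i hi => by
      have hi' := hN (hJ1 (hJ2 hi))
      have t := LL_le T (SU.one.div (D.hx i hi')) (hSy (D.hx i hi') (D.x1 i hi'))
      rw [inv1 (D.hx i hi')] at t
      linarith [hxH i hi']) (by push_cast; linarith) (by
      rw [hs]; exact c2)
  obtain ⟨J, hJ4, c4, h4⟩ := PH1 (fun i (p : Pl T) => lv p (1 - 1 / y i)) 3000 M0
    (R := 3 * H) hepos J3
    (fun i hi => by
      have hi' := hN (hJ1 (hJ2 (hJ3 hi)))
      have t := LL_le T (SU.one.div (D.hy i hi')) (hSy (D.hy i hi') (D.y1 i hi'))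
      rw [inv1 (D.hy i hi')] at t
      linarith [hyH i hi']) (by push_cast; linarith) (by
      rw [hs]; exact c3)
  have hJN : J ⊆ N := fun i hi => hJ1 (hJ2 (hJ3 (hJ4 hi)))
  have hJI : J ⊆ I := fun i hi => hN (hJN hi)
  have dx : ∀ i ∈ J, ∀ j ∈ J, ∑ p : Pl T, |lv p (x i) - lv p (x j)| ≤ e :=
    fun i hi j hj => h1 i (hJ2 (hJ3 (hJ4 hi))) j (hJ2 (hJ3 (hJ4 hj)))
  have dy : ∀ i ∈ J, ∀ j ∈ J, ∑ p : Pl T, |lv p (y i) - lv p (y j)| ≤ e :=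
    fun i hi j hj => h2 i ((hJ3 (hJ4 hi))) j ((hJ3 (hJ4 hj)))
  have hM1 : 1 ≤ M0 := le_trans (by norm_num) (Nat.le_add_right 1001 _)
  obtain ⟨i0, hi0, hmax⟩ := J.exists_max_image a (Finset.card_pos.mp (by omega))
  obtain ⟨j0, hj0, hne⟩ := Finset.exists_mem_ne (show 1 < J.card by omega) i0
  have Xi := D.hx i0 (hJI hi0)
  have Yi := D.hy i0 (hJI hi0)
  have Xj := D.hx j0 (hJI hj0)
  have Yj := D.hy j0 (hJI hj0)
  have nx : x i0 ≠ x j0 := fun h => hne (D.xinj i0 (hJI hi0) j0 (hJI hj0) h).symm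
  have ny : y i0 ≠ y j0 := fun h => hne (D.yinj i0 (hJI hi0) j0 (hJI hj0) h).symm
  -- negative parts at 1
  have gx := LV T (x := 1) Xi Xj nx (D.x1 i0 (hJI hi0)).symm (D.x1 j0 (hJI hj0)).symm
  have gy := LV T (x := 1) Yi Yj ny (D.y1 i0 (hJI hi0)).symm (D.y1 j0 (hJI hj0)).symm
  have h3' := h3 i0 (hJ4 hi0) j0 (hJ4 hj0)
  have h4' := h4 i0 hi0 j0 hj0
  have dx0 := dx i0 hi0 j0 hj0
  have dy0 := dy i0 hi0 j0 hj0
  have hOx := hh_le_OO T (SU.one.div Xi)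
  have hOy := hh_le_OO T (SU.one.div Yi)
  rw [inv1 Xi, one_div, OO_inv T Xi (D.x1 i0 (hJI hi0)), ← one_div] at hOx
  rw [inv1 Yi, one_div, OO_inv T Yi (D.y1 i0 (hJI hi0)), ← one_div] at hOy
  have hT := D.Ty i0 (hJI hi0) j0 (hJI hj0) hne.symm
  have hT2 := OO_le_hh T (div_ne_one' T Yj ny)
  have hT3 := l1_div T Yi Yj
  have hTh : Θ ≤ 2 * e := by linarith
  have hA2 := D.A2 i0 (hJI hi0)
  have hOx2 := OO_le_hh T (D.x1 i0 (hJI hi0))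
  have key1 : 2 * hh T (y i0) ≤ hh T (x i0) + 11 * e := by linarith
  -- most j are close to y i0
  have hle : ∀ j ∈ J, a j ≤ a i0 := hmax
  set Bd := J.filter (fun j => 3 * e < OO T (y i0 / x j)) with hBd
  have hBc : Bd.card ≤ 1001 := by
    have t1 := D.A1 i0 (hJI hi0) Bd (fun j hj => hJI (Finset.filter_subset _ _ hj))
      (fun j hj => hle j (Finset.filter_subset _ _ hj))
    have t2 : Bd.card • (3 * e) ≤ ∑ j ∈ Bd, OO T (y i0 / x j) :=
      Finset.card_nsmul_le_sum _ _ _ (fun j hj => ((Finset.mem_filter.mp hj).2).le)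
    have t3 := OO_le_hh T (D.q1 i0 (hJI hi0))
    have t4 := hqH i0 (hJI hi0)
    rw [nsmul_eq_mul] at t2
    have t5 : (Bd.card : ℝ) * Θ ≤ Bd.card * (2 * e) := mul_le_mul_of_nonneg_left hTh (Nat.cast_nonneg _)
    have t6 : (Bd.card : ℝ) * e ≤ 1001 * e := by nlinarith
    have t7 : (Bd.card : ℝ) ≤ 1001 := le_of_mul_le_mul_right t6 hepos
    exact_mod_cast t7
  set Gd := J.filter (fun j => ¬ 3 * e < OO T (y i0 / x j)) with hGd
  have hGc : 2 ^ (5003 * s) * 1 < Gd.card := by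
    have h1 : Bd.card + Gd.card = J.card :=
      Finset.card_filter_add_card_filter_not (s := J) (fun j => 3 * e < OO T (y i0 / x j))
    have h2 : 1001 + 2 ^ (5003 * s) < J.card := c4
    clear_value Bd Gd M0 s
    clear c1 c2 c3 c4 hlt
    generalize 2 ^ (5003 * s) = Z at *
    omega
  have hGJ : Gd ⊆ J := Finset.filter_subset _ _
  have nyx : ∀ j ∈ J, y i0 ≠ x j := fun j hj => D.yx i0 (hJI hi0) j (hJI hj) (by have := hle j hj; omega)
  obtain ⟨L, hL, c5, h5⟩ := PH1 (fun j (p : Pl T) => lv p (1 - y i0 / x j)) 5000 1 (R := 5 * H) hepos Gd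
    (fun j hj => by
      have hj' := hJI (hGJ hj)
      have t1 := LL_le T (Yi.div (D.hx j hj')) (div_ne_one' T (D.hx j hj') (nyx j (hGJ hj)))
      have t2 := hh_div T Yi (D.hx j hj')
      have t3 := hxH j hj'
      have t4 := hyH i0 (hJI hi0)
      linarith) (by push_cast; linarith) (by rw [hs]; exact hGc)
  obtain ⟨j, hj, j', hj', hjj⟩ := Finset.one_lt_card.mp c5
  have jJ := hGJ (hL hj)
  have jJ' := hGJ (hL hj')
  have Hj := D.hx j (hJI jJ)
  have Hj' := D.hx j' (hJI jJ')
  have g1 := LV T (x := y i0) Hj Hj' (fun h => hjj (D.xinj j (hJI jJ) j' (hJI jJ') h)) (nyx j jJ) (nyx j' jJ')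
  have g2 := h5 j hj j' hj'
  have g3 := dx j jJ j' jJ'
  have g4 := hh_le_OO T (Yi.div Hj)
  have g5 : OO T (y i0 / x j) ≤ 3 * e := not_lt.mp (Finset.mem_filter.mp (hL hj)).2
  have g6 : hh T (y i0 / x j) ≤ 7 * e := by linarith
  have g7 := hh_of_div T Hj Yi
  have g8 : hh T (x j / y i0) = hh T (y i0 / x j) := by rw [← inv_div, hh_inv T (Yi.div Hj)]
  have g9 := hh_of_div T Xi Hj
  have g10 := l1_div T Xi Hj
  have g11 := dx i0 hi0 j jJ
  rcases hn i0 (hJN hi0) with h | h <;> linarith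

lemma NF_main {ι : Type*} {I : Finset ι} {x y q : ι → K} {a : ι → ℕ} {Θ : ℝ} (D : NFdata T I x y q a Θ) :
    I.card ≤ 2 ^ (20000 * sCard K T) := by
  classical
  have hs1 : 1 ≤ sCard K T := by
    have := Pl_nonempty T
    rw [← card_Pl T]; exact Fintype.card_pos
  obtain ⟨s, hs⟩ : ∃ s, s = sCard K T := ⟨_, rfl⟩
  rw [← hs] at hs1 ⊢
  rcases I.eq_empty_or_nonempty with rfl | hne
  · simp
  -- the max
  let g : ι → ℝ := fun i => max (hh T (q i)) (max (hh T (x i)) (hh T (y i)))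
  obtain ⟨k, hk, hmax⟩ := I.exists_max_image g hne
  set H := g k with hH
  have hqH : ∀ i ∈ I, hh T (q i) ≤ H := fun i hi => (le_max_left _ _).trans (hmax i hi)
  have hxH : ∀ i ∈ I, hh T (x i) ≤ H := fun i hi => ((le_max_left _ _).trans (le_max_right _ _)).trans (hmax i hi)
  have hyH : ∀ i ∈ I, hh T (y i) ≤ H := fun i hi => ((le_max_right _ _).trans (le_max_right _ _)).trans (hmax i hi)
  rcases le_or_gt (CC K T) (H / 1000) with hC | hC
  swap
  · have hCs := CC_le (K := K) T
    have hl2 := Real.log_two_lt_d9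
    have hc := small_count T x I D.hx D.xinj 11200 hxH (by
      rw [← hs] at hCs
      have : (1:ℝ) ≤ s := by exact_mod_cast hs1
      rw [← hs]; push_cast
      nlinarith)
    rw [← hs] at hc
    refine hc.trans (Nat.pow_le_pow_right (by norm_num) (Nat.mul_le_mul_right _ (by norm_num)))
  have hHpos : 0 < H := by
    have h1 := CC_pos (K := K) T
    have : 0 < CC K T := by
      obtain ⟨p0⟩ := Pl_nonempty T
      exact Finset.sum_pos (fun p _ => mul_pos (by linarith [pmu_pos p]) (Real.log_pos (by norm_num))) ⟨p0, Finset.mem_univ _⟩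
    linarith
  set Nr := I.filter (fun i => H / 30 < hh T (x i) ∨ H / 30 < hh T (y i)) with hNr
  set Fr := I.filter (fun i => ¬ (H / 30 < hh T (x i) ∨ H / 30 < hh T (y i))) with hFr
  have hsum : Nr.card + Fr.card = I.card := Finset.card_filter_add_card_filter_not (s := I) (fun i => H / 30 < hh T (x i) ∨ H / 30 < hh T (y i))
  have hN := near_lemma D hHpos hC hxH hyH hqH Nr (Finset.filter_subset _ _) (fun i hi => (Finset.mem_filter.mp hi).2)
  rw [← hs] at hN
  have hFI : Fr ⊆ I := Finset.filter_subset _ _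
  have fx : ∀ i ∈ Fr, hh T (x i) ≤ H / 30 := fun i hi => by
    have := (Finset.mem_filter.mp hi).2; push Not at this; exact this.1
  have fy : ∀ i ∈ Fr, hh T (y i) ≤ H / 30 := fun i hi => by
    have := (Finset.mem_filter.mp hi).2; push Not at this; exact this.2
  have hF : Fr.card ≤ 2 * 2 ^ (3003 * s) := by
    by_contra hlt
    push Not at hlt
    have hpos : 0 < 2 ^ (3003 * s) := by positivity
    obtain ⟨i, hi, j, hj, hij⟩ := Finset.one_lt_card.mp (show 1 < Fr.card by generalize 2 ^ (3003 * s) = Z at *; omega)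
    have hTh : Θ ≤ H / 15 + H / 1000 := by
      have h1 := D.Ty i (hFI hi) j (hFI hj) hij
      have h2 := OO_le_hh T (div_ne_one' T (D.hy j (hFI hj)) (fun h => hij (D.yinj i (hFI hi) j (hFI hj) h)))
      have h3 := hh_div T (D.hy i (hFI hi)) (D.hy j (hFI hj))
      linarith [fy i hi, fy j hj]
    by_cases hq : ∃ k ∈ I, 3 / 10 * H ≤ hh T (q k)
    · obtain ⟨k, hk, hkq⟩ := hq
      have := far_lemma T y (q k) Fr (fun i hi => D.hy i (hFI hi))
        (fun i hi j hj => D.yinj i (hFI hi) j (hFI hj)) (D.hq k hk) (fun i hi => (D.yq i (hFI hi) k hk).symm) hHpos hC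
        fy (hqH k hk) (B := H / 10 + 2 * (H / 1000)) (fun i hi => by
          rw [OO_swap T (D.hq k hk) (D.hy i (hFI hi)) (D.yq i (hFI hi) k hk).symm]
          have h1 := D.A3 i (hFI hi) k hk
          have h2 := OO_le_hh T (D.x1 i (hFI hi))
          have h3 := fx i hi
          linarith) (by rw [← hs]; generalize 2 ^ (3003 * s) = Z at *; omega)
      linarith
    · push Not at hq
      have hOq : ∀ k ∈ I, OO T (q k) ≤ 3 / 10 * H + H / 1000 := fun k hk => by
        have h1 := OO_le_hh T (D.q1 k hk)
        have h2 := hq k hk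
        linarith
      have hatt : hh T (x k) = H ∨ hh T (y k) = H := by
        have h1 : max (hh T (q k)) (max (hh T (x k)) (hh T (y k))) = H := rfl
        have h2 := hq k hk
        rcases max_choice (hh T (q k)) (max (hh T (x k)) (hh T (y k))) with h | h
        · rw [h] at h1; linarith
        · rw [h] at h1
          rcases max_choice (hh T (x k)) (hh T (y k)) with h' | h'
          · left; rw [h'] at h1; exact h1
          · right; rw [h'] at h1; exact h1
      rcases hatt with hX | hX
      · have hsp := Finset.card_filter_add_card_filter_not (s := Fr) (fun i => a i ≠ a k)
        rcases lt_or_ge (2 ^ (3003 * s)) (Fr.filter (fun i => a i ≠ a k)).card with hc | hc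
        · have mem : ∀ i ∈ Fr.filter (fun i => a i ≠ a k), i ∈ Fr ∧ i ∈ I ∧ a i ≠ a k := fun i hi =>
            ⟨(Finset.mem_filter.mp hi).1, hFI (Finset.mem_filter.mp hi).1, (Finset.mem_filter.mp hi).2⟩
          have := far_lemma T x (x k) (Fr.filter (fun i => a i ≠ a k)) (fun i hi => D.hx i (mem i hi).2.1)
            (fun i hi j hj => D.xinj i (mem i hi).2.1 j (mem j hj).2.1) (D.hx k hk)
            (fun i hi => D.xx k hk i (mem i hi).2.1 (mem i hi).2.2.symm) hHpos hC (fun i hi => fx i (mem i hi).1) (hxH k hk)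
            (B := 3 / 10 * H + H / 15 + 2 * (H / 1000)) (fun i hi => by
              obtain ⟨l, hl, h⟩ := D.Axx k hk i (mem i hi).2.1 (mem i hi).2.2.symm
              linarith [hOq l hl]) (by rw [← hs]; exact hc)
          linarith
        · have mem : ∀ i ∈ Fr.filter (fun i => ¬ a i ≠ a k), i ∈ Fr ∧ i ∈ I ∧ a i + 1 ≠ a k := fun i hi =>
            ⟨(Finset.mem_filter.mp hi).1, hFI (Finset.mem_filter.mp hi).1, by
              have := (Finset.mem_filter.mp hi).2; push Not at this; omega⟩
          have := far_lemma T y (x k) (Fr.filter (fun i => ¬ a i ≠ a k)) (fun i hi => D.hy i (mem i hi).2.1)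
            (fun i hi j hj => D.yinj i (mem i hi).2.1 j (mem j hj).2.1) (D.hx k hk)
            (fun i hi => (D.yx i (mem i hi).2.1 k hk (mem i hi).2.2).symm) hHpos hC (fun i hi => fy i (mem i hi).1) (hxH k hk)
            (B := 3 / 10 * H + H / 15 + 2 * (H / 1000)) (fun i hi => by
              obtain ⟨l, hl, h⟩ := D.Ayx i (mem i hi).2.1 k hk (mem i hi).2.2
              rw [OO_swap T (D.hx k hk) (D.hy i (mem i hi).2.1) (D.yx i (mem i hi).2.1 k hk (mem i hi).2.2).symm]
              linarith [hOq l hl]) (by rw [← hs]; generalize 2 ^ (3003 * s) = Z at *; omega)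
          linarith
      · have hsp := Finset.card_filter_add_card_filter_not (s := Fr) (fun i => a i ≠ a k)
        rcases lt_or_ge (2 ^ (3003 * s)) (Fr.filter (fun i => a i ≠ a k)).card with hc | hc
        · have mem : ∀ i ∈ Fr.filter (fun i => a i ≠ a k), i ∈ Fr ∧ i ∈ I ∧ a i ≠ a k := fun i hi =>
            ⟨(Finset.mem_filter.mp hi).1, hFI (Finset.mem_filter.mp hi).1, (Finset.mem_filter.mp hi).2⟩
          have := far_lemma T y (y k) (Fr.filter (fun i => a i ≠ a k)) (fun i hi => D.hy i (mem i hi).2.1)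
            (fun i hi j hj => D.yinj i (mem i hi).2.1 j (mem j hj).2.1) (D.hy k hk)
            (fun i hi => D.yy k hk i (mem i hi).2.1 (mem i hi).2.2.symm) hHpos hC (fun i hi => fy i (mem i hi).1) (hyH k hk)
            (B := 3 / 10 * H + H / 15 + 2 * (H / 1000)) (fun i hi => by
              obtain ⟨l, hl, h⟩ := D.Ayy k hk i (mem i hi).2.1 (mem i hi).2.2.symm
              linarith [hOq l hl]) (by rw [← hs]; exact hc)
          linarith
        · have mem : ∀ i ∈ Fr.filter (fun i => ¬ a i ≠ a k), i ∈ Fr ∧ i ∈ I ∧ a k + 1 ≠ a i := fun i hi =>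
            ⟨(Finset.mem_filter.mp hi).1, hFI (Finset.mem_filter.mp hi).1, by
              have := (Finset.mem_filter.mp hi).2; push Not at this; omega⟩
          have := far_lemma T x (y k) (Fr.filter (fun i => ¬ a i ≠ a k)) (fun i hi => D.hx i (mem i hi).2.1)
            (fun i hi j hj => D.xinj i (mem i hi).2.1 j (mem j hj).2.1) (D.hy k hk)
            (fun i hi => D.yx k hk i (mem i hi).2.1 (mem i hi).2.2) hHpos hC (fun i hi => fx i (mem i hi).1) (hyH k hk)
            (B := 3 / 10 * H + H / 15 + 2 * (H / 1000)) (fun i hi => by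
              obtain ⟨l, hl, h⟩ := D.Ayx k hk i (mem i hi).2.1 (mem i hi).2.2
              linarith [hOq l hl]) (by rw [← hs]; generalize 2 ^ (3003 * s) = Z at *; omega)
          linarith
  have hfin : 2 ^ (10012 * s) * (1001 + 2 ^ (5003 * s)) + 2 * 2 ^ (3003 * s) ≤ 2 ^ (20000 * s) := by
    have p : ∀ a b : ℕ, a ≤ b → 2 ^ (a * s) ≤ 2 ^ (b * s) := fun a b h =>
      Nat.pow_le_pow_right (by norm_num) (Nat.mul_le_mul_right _ h)
    have q10 : 2 ^ 10 ≤ 2 ^ (10 * s) := Nat.pow_le_pow_right (by norm_num) (by omega)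
    have e1 : 2 ^ (20000 * s) = 2 ^ (10012 * s) * 2 ^ (10 * s) * 2 ^ (9978 * s) := by
      rw [← pow_add, ← pow_add]; congr 1; ring
    have h1 := p 3003 9978 (by norm_num)
    have h2 := p 5003 9978 (by norm_num)
    have h3 : 1 ≤ 2 ^ (10012 * s) := Nat.one_le_two_pow
    have h4 : 1 ≤ 2 ^ (9978 * s) := Nat.one_le_two_pow
    have h5 : 10 ≤ 2 ^ (9978 * s) := le_trans (by norm_num : 10 ≤ 2 ^ 10) (q10.trans (p 10 9978 (by norm_num)))
    rw [e1]
    generalize 2 ^ (9978 * s) = A at *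
    generalize 2 ^ (10012 * s) = B at *
    generalize 2 ^ (5003 * s) = C at *
    generalize 2 ^ (3003 * s) = E at *
    generalize 2 ^ (10 * s) = F at *
    have t1 : B * (1001 + C) + 2 * E ≤ B * (1001 + A) + B * (2 * A) := by
      have : B * (1001 + C) ≤ B * (1001 + A) := Nat.mul_le_mul_left _ (by omega)
      have : 2 * E ≤ 2 * A := by omega
      have : 1 * (2 * A) ≤ B * (2 * A) := Nat.mul_le_mul_right _ h3
      omega
    have t2 : B * (1001 + A) + B * (2 * A) = B * (1001 + 3 * A) := by ring
    have t3 : 1001 + 3 * A ≤ F * A := by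
      have : 1024 * A ≤ F * A := Nat.mul_le_mul_right _ (by simpa using q10)
      omega
    have t4 : B * (1001 + 3 * A) ≤ B * (F * A) := Nat.mul_le_mul_left _ t3
    rw [mul_assoc]; omega
  rw [← hsum]
  exact (Nat.add_le_add hN hF).trans hfin

end NF

section coord
variable {K : Type*} [Field K] [NumberField K]

/-- determinant of two points -/
noncomputable def dt (A B : P1 K) : K := A.rep 0 * B.rep 1 - A.rep 1 * B.rep 0

lemma dt_ne {A B : P1 K} (h : A ≠ B) : dt A B ≠ 0 := by
  intro h0
  apply h
  rw [← A.mk_rep, ← B.mk_rep, mk_eq_iff_det]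
  exact h0

lemma av_dt (v : HeightOneSpectrum (𝓞 K)) (A B : P1 K) : av v (dt A B) = dd v A B * (mx v A.rep * mx v B.rep) := by
  have h1 := mx_pos v A.rep_nonzero
  have h2 := mx_pos v B.rep_nonzero
  rw [dd, dt]
  field_simp

/-- coordinate sending `R0, P, R1` to `0, 1, ∞` -/
noncomputable def uc (P R0 R1 Q : P1 K) : K := dt Q R0 * dt P R1 / (dt Q R1 * dt P R0)

variable {P R0 R1 : P1 K} (h0 : P ≠ R0) (h1 : P ≠ R1)

lemma uc_self (h0 : P ≠ R0) (h1 : P ≠ R1) : uc P R0 R1 P = 1 := by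
  have a := dt_ne h0
  have b := dt_ne h1
  rw [uc]; field_simp

lemma uc_av (h0 : P ≠ R0) (h1 : P ≠ R1) (v : HeightOneSpectrum (𝓞 K)) (Q : P1 K) (hq1 : Q ≠ R1) :
    av v (uc P R0 R1 Q) = dd v Q R0 * dd v P R1 / (dd v Q R1 * dd v P R0) := by
  have m1 := mx_pos v P.rep_nonzero
  have m2 := mx_pos v Q.rep_nonzero
  have m3 := mx_pos v R0.rep_nonzero
  have m4 := mx_pos v R1.rep_nonzero
  have n1 := dd_pos v hq1
  have n2 := dd_pos v h0
  rw [uc, map_div₀, map_mul, map_mul, av_dt, av_dt, av_dt, av_dt]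
  field_simp

lemma uc_ne_zero (h0 : P ≠ R0) (h1 : P ≠ R1) {Q : P1 K} (hq0 : Q ≠ R0) (hq1 : Q ≠ R1) : uc P R0 R1 Q ≠ 0 :=
  div_ne_zero (mul_ne_zero (dt_ne hq0) (dt_ne h1)) (mul_ne_zero (dt_ne hq1) (dt_ne h0))

lemma uc_sub (h0 : P ≠ R0) (h1 : P ≠ R1) {Q Z : P1 K} (hq1 : Q ≠ R1) (hz0 : Z ≠ R0) (hz1 : Z ≠ R1) :
    1 - uc P R0 R1 Q / uc P R0 R1 Z = - (dt Q Z * dt R0 R1) / (dt Q R1 * dt Z R0) := by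
  have a := dt_ne h0
  have b := dt_ne h1
  have c := dt_ne hq1
  have e := dt_ne hz0
  have g := dt_ne hz1
  rw [uc, uc]
  field_simp
  simp only [dt]
  ring

lemma uc_ne (h0 : P ≠ R0) (h1 : P ≠ R1) (hR : R0 ≠ R1) {Q Z : P1 K} (hq1 : Q ≠ R1) (hz0 : Z ≠ R0) (hz1 : Z ≠ R1)
    (h : Q ≠ Z) : uc P R0 R1 Q ≠ uc P R0 R1 Z := by
  intro he
  have := uc_sub h0 h1 hq1 hz0 hz1
  rw [he, div_self (uc_ne_zero h0 h1 hz0 hz1), sub_self] at this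
  have h2 := div_ne_zero (neg_ne_zero.mpr (mul_ne_zero (dt_ne h) (dt_ne hR))) (mul_ne_zero (dt_ne hq1) (dt_ne hz0))
  exact h2 this.symm

lemma uc_av_sub (h0 : P ≠ R0) (h1 : P ≠ R1) (v : HeightOneSpectrum (𝓞 K)) {Q Z : P1 K} (hq1 : Q ≠ R1) (hz0 : Z ≠ R0) (hz1 : Z ≠ R1) :
    av v (1 - uc P R0 R1 Q / uc P R0 R1 Z) = dd v Q Z * dd v R0 R1 / (dd v Q R1 * dd v Z R0) := by
  rw [uc_sub h0 h1 hq1 hz0 hz1]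
  have m1 := mx_pos v Z.rep_nonzero
  have m2 := mx_pos v Q.rep_nonzero
  have m3 := mx_pos v R0.rep_nonzero
  have m4 := mx_pos v R1.rep_nonzero
  have n1 := dd_pos v hq1
  have n2 := dd_pos v hz0
  rw [map_div₀, map_mul, AbsoluteValue.map_neg, map_mul, av_dt, av_dt, av_dt, av_dt]
  field_simp

end coord

section inst
variable {K : Type*} [Field K] [NumberField K] {d : ℕ} (T : Finset (HeightOneSpectrum (𝓞 K))) (φ : P1Map K d)

lemma W_bound (hgr : GoodReductionOutside φ T) {P R0 : P1 K} (hP : φ.toFun P = P)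
    (hR0 : R0 ∈ Function.periodicPts φ.toFun) (hR0' : φ.toFun R0 ≠ R0) (W : Finset (P1 K)) (a : P1 K → ℕ) (Y : P1 K → P1 K)
    (ha : ∀ w ∈ W, 1 ≤ a w) (hW : ∀ w ∈ W, Rl φ.toFun w (a w) P) (hY : ∀ w ∈ W, Rl φ.toFun (Y w) (a w + 1) P)
    (hYw : ∀ w ∈ W, φ.toFun (Y w) = w) : W.card ≤ 2 ^ (20000 * sCard K T) := by
  classical
  rcases Nat.lt_or_ge 1 W.card with hcard | hcard
  swap
  · exact hcard.trans Nat.one_le_two_pow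
  obtain ⟨f, hf⟩ : ∃ f, f = φ.toFun := ⟨_, rfl⟩
  rw [← hf] at hP hR0 hR0'
  simp only [← hf] at hW hY hYw
  have hPit : ∀ n, f^[n] P = P := fun n => Function.iterate_fixed hP n
  have hPp : P ∈ Function.periodicPts f := ⟨1, one_pos, hP⟩
  set R1 := f R0 with hR1
  have hR1p : R1 ∈ Function.periodicPts f := per_iter hR0 1
  have h0 : P ≠ R0 := fun h => hR0' (by rw [hR1, ← h]; exact hP)
  have h1 : P ≠ R1 := fun h => h0 (per_inj hPp hR0 1 (by simpa [hP] using h))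
  have hR : R0 ≠ R1 := hR0'.symm
  have td : ∀ {Q : P1 K} {l : ℕ}, 1 ≤ l → Rl f Q l P → Q ≠ R0 ∧ Q ≠ R1 ∧ Q ≠ P := by
    intro Q l hl h
    obtain ⟨m, rfl⟩ := Nat.exists_eq_add_of_le' hl
    have := Rl_nonper h
    exact ⟨fun e => this (e ▸ hR0), fun e => this (e ▸ hR1p), fun e => this (e ▸ hPp)⟩
  let u : P1 K → K := uc P R0 R1
  let θ : HeightOneSpectrum (𝓞 K) → ℝ := fun v => dd v R0 R1
  let ε : HeightOneSpectrum (𝓞 K) → ℝ := fun v => dd v P R0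
  have hθ : ∀ v, 0 < θ v := fun v => dd_pos v hR
  have hε : ∀ v, 0 < ε v := fun v => dd_pos v h0
  have hε1 : ∀ v, ε v ≤ 1 := fun v => dd_le_one v _ _
  have hεe : ∀ v ∉ T, dd v P R1 = ε v := fun v hv => by
    have := dd_isom φ (hgr v hv) 1 (A := P) (B := R0) (hf ▸ hPp) (hf ▸ hR0)
    rw [← hf] at this
    simpa [hP] using this
  have hθε : ∀ v ∉ T, θ v ≤ ε v := fun v hv => by
    have := dd_ultra v R0 P R1
    rw [hεe v hv, dd_comm v R0 P, max_self] at this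
    exact this
  have dR : ∀ {Q : P1 K} {l : ℕ}, 1 ≤ l → Rl f Q l P → ∀ v ∉ T, dd v Q R0 = 1 ∧ dd v Q R1 = 1 := by
    intro Q l hl h v hv
    obtain ⟨m, rfl⟩ := Nat.exists_eq_add_of_le' hl
    rw [hf] at h
    exact ⟨lemmaA φ (hgr v hv) h (hf ▸ hR0) h0.symm, lemmaA φ (hgr v hv) h (hf ▸ hR1p) h1.symm⟩
  have hSU : ∀ {Q : P1 K} {l : ℕ}, 1 ≤ l → Rl f Q l P → SU T (u Q) := by
    intro Q l hl h
    obtain ⟨t0, t1, -⟩ := td hl h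
    refine ⟨uc_ne_zero h0 h1 t0 t1, fun v hv => ?_⟩
    obtain ⟨d0, d1⟩ := dR hl h v hv
    have := hε v
    rw [uc_av h0 h1 v Q t1, d0, d1, hεe v hv]
    simp only [one_mul]
    exact div_self this.ne'
  have hu1 : ∀ {Q : P1 K} {l : ℕ}, 1 ≤ l → Rl f Q l P → u Q ≠ 1 := by
    intro Q l hl h
    obtain ⟨t0, t1, t2⟩ := td hl h
    have := uc_ne h0 h1 hR t1 h0 h1 t2
    rwa [uc_self h0 h1] at this
  have hinj : ∀ {Q Z : P1 K} {l m : ℕ}, 1 ≤ l → Rl f Q l P → 1 ≤ m → Rl f Z m P → Q ≠ Z → u Q ≠ u Z := by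
    intro Q Z l m hl h hm hz hne
    obtain ⟨t0, t1, -⟩ := td hl h
    obtain ⟨s0, s1, -⟩ := td hm hz
    exact uc_ne h0 h1 hR t1 s0 s1 hne
  have av1 : ∀ {Q : P1 K} {l : ℕ}, 1 ≤ l → Rl f Q l P → ∀ v ∉ T, av v (1 - u Q) = dd v Q P * θ v / ε v := by
    intro Q l hl h v hv
    obtain ⟨t0, t1, t2⟩ := td hl h
    have := uc_av_sub h0 h1 v t1 h0 h1
    rw [uc_self h0 h1, div_one, (dR hl h v hv).2, one_mul] at this
    exact this
  have av2 : ∀ {Q Z : P1 K} {l m : ℕ}, 1 ≤ l → Rl f Q l P → 1 ≤ m → Rl f Z m P → ∀ v ∉ T,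
      av v (1 - u Q / u Z) = dd v Q Z * θ v := by
    intro Q Z l m hl h hm hz v hv
    obtain ⟨t0, t1, t2⟩ := td hl h
    obtain ⟨s0, s1, -⟩ := td hm hz
    have := uc_av_sub h0 h1 v t1 s0 s1
    rw [(dR hl h v hv).2, (dR hm hz v hv).1, one_mul, div_one] at this
    exact this
  have lvne : ∀ {Q Z : P1 K} {l m : ℕ}, Rl f Q l P → Rl f Z m P → l ≠ m → Q ≠ Z := by
    intro Q Z l m h hz hlm he
    rw [he] at h
    exact hlm (Rl_unique h hz).1
  have hY1 : ∀ w ∈ W, 1 ≤ a w + 1 := fun w _ => by omega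
  have hYinj : ∀ w ∈ W, ∀ w' ∈ W, w ≠ w' → Y w ≠ Y w' := fun w hw w' hw' hne he =>
    hne (by rw [← hYw w hw, he, hYw w' hw'])
  let q : P1 K → P1 K := fun w => f^[a w - 1] w
  have hq : ∀ w ∈ W, Rl f (q w) 1 P := fun w hw => by
    have := Rl_iter (a w - 1) (l := 1) (f := f) (Q := w) (P := P) (by
      rw [add_comm, Nat.sub_add_cancel (ha w hw)]; exact hW w hw)
    rwa [hPit] at this
  have hqY : ∀ w ∈ W, f^[a w] (Y w) = q w := fun w hw => by
    obtain ⟨m, hm⟩ := Nat.exists_eq_add_of_le' (ha w hw)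
    simp only [q]
    rw [hm, Function.iterate_succ_apply, hYw w hw, Nat.add_sub_cancel]
  have hit : ∀ {Q : P1 K} {l n : ℕ}, Rl f Q l P → l ≤ n → f^[n] Q = P := by
    intro Q l n h hn
    obtain ⟨m, rfl⟩ := Nat.exists_eq_add_of_le' hn
    rw [Function.iterate_add_apply, h.2.1, hPit, hPit]
  -- the minimal value
  obtain ⟨Θ, z, z', lz, lz', hlz, hz, hlz', hz', hzz, hΘ, hΘx, hΘy⟩ : ∃ (Θ : ℝ) (z z' : P1 K) (lz lz' : ℕ), 1 ≤ lz ∧ Rl f z lz P ∧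
      1 ≤ lz' ∧ Rl f z' lz' P ∧ z ≠ z' ∧ Θ = OO T (u z / u z') ∧
      (∀ i ∈ W, ∀ j ∈ W, i ≠ j → Θ ≤ OO T (u i / u j)) ∧
      (∀ i ∈ W, ∀ j ∈ W, i ≠ j → Θ ≤ OO T (u (Y i) / u (Y j))) := by
    have hne : W.offDiag.Nonempty := by
      obtain ⟨i, hi, j, hj, hij⟩ := Finset.one_lt_card.mp hcard
      exact ⟨(i, j), Finset.mem_offDiag.mpr ⟨hi, hj, hij⟩⟩
    obtain ⟨⟨i, j⟩, hij, hmin⟩ := W.offDiag.exists_min_image (fun p => min (OO T (u p.1 / u p.2)) (OO T (u (Y p.1) / u (Y p.2)))) hne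
    obtain ⟨hi, hj, hne'⟩ := Finset.mem_offDiag.mp hij
    simp only at hi hj hne' hmin
    rcases le_total (OO T (u i / u j)) (OO T (u (Y i) / u (Y j))) with h | h
    · refine ⟨_, i, j, a i, a j, ha i hi, hW i hi, ha j hj, hW j hj, hne', rfl, ?_, ?_⟩ <;>
      · intro k hk l hl hkl
        have := hmin (k, l) (Finset.mem_offDiag.mpr ⟨hk, hl, hkl⟩)
        rw [min_eq_left h] at this
        first
        | exact this.trans (min_le_left _ _)
        | exact this.trans (min_le_right _ _)
    · refine ⟨_, Y i, Y j, a i + 1, a j + 1, hY1 i hi, hY i hi, hY1 j hj, hY j hj, hYinj i hi j hj hne', rfl, ?_, ?_⟩ <;>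
      · intro k hk l hl hkl
        have := hmin (k, l) (Finset.mem_offDiag.mpr ⟨hk, hl, hkl⟩)
        rw [min_eq_right h] at this
        first
        | exact this.trans (min_le_left _ _)
        | exact this.trans (min_le_right _ _)
  have hZne : 1 - u z / u z' ≠ 0 := sub_ne_zero.mpr (div_ne_one' T (hSU hlz' hz') (hinj hlz hz hlz' hz' hzz)).symm
  have hZav : ∀ v ∉ T, av v (1 - u z / u z') ≤ θ v := fun v hv => by
    rw [av2 hlz hz hlz' hz' v hv]
    exact mul_le_of_le_one_left (hθ v).le (dd_le_one v _ _)
  -- general comparison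
  have cmp : ∀ {A B Q : P1 K} {lA lB lQ : ℕ}, 1 ≤ lA → Rl f A lA P → 1 ≤ lB → Rl f B lB P → 1 ≤ lQ → Rl f Q lQ P →
      A ≠ B → (∀ v ∉ T, dd v Q P ≤ dd v A B) → OO T (u A / u B) ≤ OO T (u Q) + Θ := by
    intro A B Q lA lB lQ hlA hA hlB hB hlQ hQ hAB hle
    have n1 : 1 - u A / u B ≠ 0 := sub_ne_zero.mpr (div_ne_one' T (hSU hlB hB) (hinj hlA hA hlB hB hAB)).symm
    have n2 : 1 - u Q ≠ 0 := sub_ne_zero.mpr (hu1 hlQ hQ).symm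
    have := PF T (x := (1 - u Q) * (1 - u z / u z') / (1 - u A / u B)) (div_ne_zero (mul_ne_zero n2 hZne) n1) (by
      intro v hv
      have p1 := dd_pos v hAB
      have p2 := hθ v
      have p3 := hε v
      rw [map_div₀, map_mul, av1 hlQ hQ v hv, av2 hlA hA hlB hB v hv, div_le_one (by positivity)]
      have e1 : dd v Q P * θ v / ε v ≤ dd v A B := by
        rw [div_le_iff₀ p3]
        exact mul_le_mul (hle v hv) (hθε v hv) p2.le p1.le
      exact mul_le_mul e1 (hZav v hv) ((av v).nonneg _) p1.le)
    have e : ∀ p : Pl T, lv p ((1 - u Q) * (1 - u z / u z') / (1 - u A / u B)) =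
        lv p (1 - u Q) + lv p (1 - u z / u z') - lv p (1 - u A / u B) := fun p => by
      rw [lv_div p (mul_ne_zero n2 hZne) n1, lv_mul p n2 hZne]
    simp only [e, Finset.sum_sub_distrib, Finset.sum_add_distrib] at this
    rw [hΘ]
    simp only [OO]
    linarith
  have hiA : ∀ {A B : P1 K} {lA lB : ℕ}, 1 ≤ lB → lB < lA → Rl f A lA P → Rl f B lB P → Rl f (f^[lA - 1] A) 1 P →
      OO T (u A / u B) ≤ OO T (u (f^[lA - 1] A)) + Θ := by
    intro A B lA lB hlB hlt hA hB hQ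
    refine cmp (by omega) hA hlB hB le_rfl hQ (lvne hA hB (by omega)) (fun v hv => ?_)
    have := dd_mono φ (hgr v hv) (lA - 1) A B
    rw [← hf, hit hB (show lB ≤ lA - 1 by omega)] at this
    exact this
  have hYq : ∀ w ∈ W, f^[a w + 1 - 1] (Y w) = q w := fun w hw => by rw [Nat.add_sub_cancel]; exact hqY w hw
  refine NF_main (T := T) (I := W) (x := u) (y := fun w => u (Y w)) (q := fun w => u (q w)) (a := a) (Θ := Θ)
    { hx := fun w hw => hSU (ha w hw) (hW w hw)
      hy := fun w hw => hSU (hY1 w hw) (hY w hw)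
      hq := fun w hw => hSU le_rfl (hq w hw)
      x1 := fun w hw => hu1 (ha w hw) (hW w hw)
      y1 := fun w hw => hu1 (hY1 w hw) (hY w hw)
      q1 := fun w hw => hu1 le_rfl (hq w hw)
      xinj := fun i hi j hj h => by
        by_contra hne
        exact hinj (ha i hi) (hW i hi) (ha j hj) (hW j hj) hne h
      yinj := fun i hi j hj h => by
        by_contra hne
        exact hinj (hY1 i hi) (hY i hi) (hY1 j hj) (hY j hj) (hYinj i hi j hj hne) h
      yq := fun i hi j hj => hinj (hY1 i hi) (hY i hi) le_rfl (hq j hj)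
        (lvne (hY i hi) (hq j hj) (by have := ha i hi; omega))
      xx := fun i hi j hj h => hinj (ha i hi) (hW i hi) (ha j hj) (hW j hj) (lvne (hW i hi) (hW j hj) h)
      yy := fun i hi j hj h => hinj (hY1 i hi) (hY i hi) (hY1 j hj) (hY j hj) (lvne (hY i hi) (hY j hj) (by omega))
      yx := fun i hi j hj h => hinj (hY1 i hi) (hY i hi) (ha j hj) (hW j hj) (lvne (hY i hi) (hW j hj) h)
      Tx := hΘx
      Ty := hΘy
      A1 := ?_
      A2 := ?_
      A3 := ?_
      Axx := ?_
      Ayy := ?_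
      Ayx := ?_ }
  · -- A1
    intro i hi J hJ hJa
    have ne : ∀ j ∈ J, Y i ≠ j := fun j hj => lvne (hY i hi) (hW j (hJ hj)) (by have := hJa j hj; omega)
    have n1 : ∀ j ∈ J, 1 - u (Y i) / u j ≠ 0 := fun j hj =>
      sub_ne_zero.mpr (div_ne_one' T (hSU (ha j (hJ hj)) (hW j (hJ hj))) (hinj (hY1 i hi) (hY i hi) (ha j (hJ hj)) (hW j (hJ hj)) (ne j hj))).symm
    have n2 : 1 - u (q i) ≠ 0 := sub_ne_zero.mpr (hu1 le_rfl (hq i hi)).symm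
    have n3 : (1 - u z / u z') ^ J.card ≠ 0 := pow_ne_zero _ hZne
    have n4 : ∏ j ∈ J, (1 - u (Y i) / u j) ≠ 0 := Finset.prod_ne_zero_iff.mpr n1
    have := PF T (x := (1 - u (q i)) * (1 - u z / u z') ^ J.card / ∏ j ∈ J, (1 - u (Y i) / u j))
      (div_ne_zero (mul_ne_zero n2 n3) n4) (by
      intro v hv
      have p2 := hθ v
      have p3 := hε v
      have e0 : ∏ j ∈ J, av v (1 - u (Y i) / u j) = (∏ j ∈ J, dd v (Y i) j) * θ v ^ J.card := by
        rw [← Finset.prod_const, ← Finset.prod_mul_distrib]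
        exact Finset.prod_congr rfl (fun j hj => av2 (hY1 i hi) (hY i hi) (ha j (hJ hj)) (hW j (hJ hj)) v hv)
      have p1 : 0 < ∏ j ∈ J, dd v (Y i) j := Finset.prod_pos (fun j hj => dd_pos v (ne j hj))
      rw [map_div₀, map_mul, map_pow, map_prod, av1 le_rfl (hq i hi) v hv, e0, div_le_one (mul_pos p1 (pow_pos p2 _))]
      have key := iter_sum φ (hgr v hv) (a i) J P (fun j hj => by
        rw [← hf]; exact hit (hW j (hJ hj)) (hJa j hj)) (Y i)
      rw [← hf, hqY i hi] at key
      have e1 : dd v (q i) P * θ v / ε v ≤ ∏ j ∈ J, dd v (Y i) j := by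
        rw [div_le_iff₀ p3]
        exact mul_le_mul key (hθε v hv) p2.le p1.le
      exact mul_le_mul e1 (pow_le_pow_left₀ ((av v).nonneg _) (hZav v hv) _) (pow_nonneg ((av v).nonneg _) _) p1.le)
    have lvprod : ∀ (p : Pl T) (J' : Finset (P1 K)) (g : P1 K → K), (∀ j ∈ J', g j ≠ 0) → lv p (∏ j ∈ J', g j) = ∑ j ∈ J', lv p (g j) := by
      intro p J' g
      induction J' using Finset.induction_on with
      | empty => intro _; simp [lv_one]
      | insert b s hb ih =>
        intro hg
        rw [Finset.prod_insert hb, Finset.sum_insert hb, lv_mul p (hg b (Finset.mem_insert_self _ _))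
          (Finset.prod_ne_zero_iff.mpr (fun j hj => hg j (Finset.mem_insert_of_mem hj))),
          ih (fun j hj => hg j (Finset.mem_insert_of_mem hj))]
    have e : ∀ p : Pl T, lv p ((1 - u (q i)) * (1 - u z / u z') ^ J.card / ∏ j ∈ J, (1 - u (Y i) / u j)) =
        lv p (1 - u (q i)) + J.card * lv p (1 - u z / u z') - ∑ j ∈ J, lv p (1 - u (Y i) / u j) := fun p => by
      rw [lv_div p (mul_ne_zero n2 n3) n4, lv_mul p n2 n3, lvprod p J _ n1, ← Finset.prod_const,
        lvprod p J _ (fun _ _ => hZne), Finset.sum_const, nsmul_eq_mul]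
    simp only [e, Finset.sum_sub_distrib, Finset.sum_add_distrib, ← Finset.mul_sum] at this
    rw [Finset.sum_comm] at this
    rw [hΘ]
    simp only [OO]
    linarith
  · -- A2
    intro i hi
    have n1 : 1 - u (Y i) ≠ 0 := sub_ne_zero.mpr (hu1 (hY1 i hi) (hY i hi)).symm
    have n2 : 1 - u i ≠ 0 := sub_ne_zero.mpr (hu1 (ha i hi) (hW i hi)).symm
    have := PF T (x := (1 - u i) * (1 - u z / u z') / ((1 - u (Y i)) * (1 - u (Y i))))
      (div_ne_zero (mul_ne_zero n2 hZne) (mul_ne_zero n1 n1)) (by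
      intro v hv
      have p1 := dd_pos v (td (hY1 i hi) (hY i hi)).2.2
      have p2 := hθ v
      have p3 := hε v
      have key : dd v i P ≤ dd v (Y i) P * dd v (Y i) P := by
        have hqP : P ≠ q i := (td le_rfl (hq i hi)).2.2.symm
        have k1 := sum_lemma φ (hgr v hv) {P, q i} P (by
          intro b hb
          rw [← hf]
          rcases Finset.mem_insert.mp hb with rfl | hb
          · exact hP
          · rw [Finset.mem_singleton.mp hb]
            exact hit (hq i hi) (le_refl 1)) (Y i)
        rw [← hf, hYw i hi, Finset.prod_pair hqP] at k1
        have k2 := dd_ultra v (Y i) P (q i)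
        have k3 : dd v P (q i) ≤ dd v i P := by
          have := dd_mono φ (hgr v hv) (a i - 1) i P
          rw [← hf, hPit] at this
          rw [dd_comm]; exact this
        have k4 := dd_pos v (td (ha i hi) (hW i hi)).2.2
        have hle : dd v i P ≤ dd v (Y i) P := by
          have := dd_mono φ (hgr v hv) 1 (Y i) P
          rw [← hf, hPit] at this
          simpa [hYw i hi] using this
        exact k1.trans (mul_le_mul_of_nonneg_left (k2.trans (max_le le_rfl (k3.trans hle))) p1.le)
      rw [map_div₀, map_mul, map_mul, av1 (ha i hi) (hW i hi) v hv, av1 (hY1 i hi) (hY i hi) v hv, div_le_one (by positivity)]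
      have e1 : dd v i P * θ v / ε v ≤ dd v (Y i) P * dd v (Y i) P * θ v / (ε v * ε v) := by
        rw [div_le_div_iff₀ p3 (by positivity)]
        have : dd v i P * ε v ≤ dd v (Y i) P * dd v (Y i) P * 1 := mul_le_mul key (hε1 v) p3.le (by positivity)
        nlinarith [mul_pos p2 p3]
      refine (mul_le_mul e1 (hZav v hv) ((av v).nonneg _) (by positivity)).trans (le_of_eq ?_)
      field_simp)
    have e : ∀ p : Pl T, lv p ((1 - u i) * (1 - u z / u z') / ((1 - u (Y i)) * (1 - u (Y i)))) =
        lv p (1 - u i) + lv p (1 - u z / u z') - (lv p (1 - u (Y i)) + lv p (1 - u (Y i))) := fun p => by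
      rw [lv_div p (mul_ne_zero n2 hZne) (mul_ne_zero n1 n1), lv_mul p n2 hZne, lv_mul p n1 n1]
    simp only [e, Finset.sum_sub_distrib, Finset.sum_add_distrib] at this
    rw [hΘ]
    simp only [OO]
    linarith
  · -- A3
    intro i hi k hk
    refine cmp (hY1 i hi) (hY i hi) le_rfl (hq k hk) (ha i hi) (hW i hi) (lvne (hY i hi) (hq k hk) (by have := ha i hi; omega)) (fun v hv => ?_)
    have := dd_mono φ (hgr v hv) 1 (Y i) (q k)
    rw [← hf, hit (hq k hk) le_rfl] at this
    simpa [hYw i hi] using this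
  · intro i hi j hj hne
    rcases lt_or_gt_of_ne hne with h | h
    · refine ⟨j, hj, ?_⟩
      rw [OO_swap T (hSU (ha i hi) (hW i hi)) (hSU (ha j hj) (hW j hj)) (hinj (ha i hi) (hW i hi) (ha j hj) (hW j hj) (lvne (hW i hi) (hW j hj) hne))]
      exact hiA (ha i hi) h (hW j hj) (hW i hi) (hq j hj)
    · exact ⟨i, hi, hiA (ha j hj) h (hW i hi) (hW j hj) (hq i hi)⟩
  · intro i hi j hj hne
    have hne' : a i + 1 ≠ a j + 1 := by omega
    have qi := hq i hi
    have qj := hq j hj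
    rcases lt_or_gt_of_ne hne with h | h
    · refine ⟨j, hj, ?_⟩
      rw [OO_swap T (hSU (hY1 i hi) (hY i hi)) (hSU (hY1 j hj) (hY j hj)) (hinj (hY1 i hi) (hY i hi) (hY1 j hj) (hY j hj) (lvne (hY i hi) (hY j hj) hne'))]
      rw [← hYq j hj] at qj ⊢
      exact hiA (hY1 i hi) (by omega) (hY j hj) (hY i hi) qj
    · refine ⟨i, hi, ?_⟩
      rw [← hYq i hi] at qi ⊢
      exact hiA (hY1 j hj) (by omega) (hY i hi) (hY j hj) qi
  · intro i hi j hj hne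
    have qi := hq i hi
    rcases lt_or_gt_of_ne hne with h | h
    · refine ⟨j, hj, ?_⟩
      rw [OO_swap T (hSU (hY1 i hi) (hY i hi)) (hSU (ha j hj) (hW j hj)) (hinj (hY1 i hi) (hY i hi) (ha j hj) (hW j hj) (lvne (hY i hi) (hW j hj) hne))]
      exact hiA (hY1 i hi) h (hW j hj) (hY i hi) (hq j hj)
    · refine ⟨i, hi, ?_⟩
      rw [← hYq i hi] at qi ⊢
      exact hiA (ha j hj) h (hY i hi) (hW j hj) qi

end inst

section fin
variable {K : Type*} [Field K] [NumberField K] {d : ℕ} (T : Finset (HeightOneSpectrum (𝓞 K))) (φ : P1Map K d)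

lemma image_count (hd : 2 ≤ d) (A : Finset (P1 K)) : A.card ≤ (d + 2) * (A.image φ.toFun).card := by
  apply Finset.card_le_mul_card_image
  intro b _
  exact pre_count φ hd b _ (fun R hR => (Finset.mem_filter.mp hR).2)

lemma half_class (hd : 2 ≤ d) (hgr : GoodReductionOutside φ T) {P : P1 K} (hP : φ.toFun P ≠ P) (A : Finset (P1 K)) (lev : P1 K → ℕ)
    (hA : ∀ Q ∈ A, Rl φ.toFun Q (lev Q + 2) P) (hpar : ∀ Q ∈ A, ∀ Q' ∈ A, lev Q % 2 = lev Q' % 2) :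
    A.card ≤ (d + 2) * (2 * (2 ^ 22) ^ (sCard K T) + 1) := by
  classical
  refine (image_count φ hd A).trans (Nat.mul_le_mul_left _ ?_)
  by_contra hlt
  push Not at hlt
  have hB : ∀ b ∈ A.image φ.toFun, ∃ Q ∈ A, Rl φ.toFun b (lev Q + 1) (φ.toFun P) := by
    intro b hb
    obtain ⟨Q, hQ, rfl⟩ := Finset.mem_image.mp hb
    exact ⟨Q, hQ, Rl_iter 1 (hA Q hQ)⟩
  refine BZ T A (A.image φ.toFun) ?_ ?_ (hlt.le.trans Finset.card_image_le) hlt.le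
  · intro v hv a ha b hb
    obtain ⟨Q, hQ, hb⟩ := hB b hb
    have := hpar a ha Q hQ
    exact lemmaA2 φ (hgr v hv) (hA a ha) hb hP.symm (by omega)
  · intro a ha b hb he
    obtain ⟨Q, hQ, hb⟩ := hB b hb
    rw [← he] at hb
    exact hP.symm (Rl_unique (hA a ha) hb).2

lemma class_one (hd : 2 ≤ d) (hgr : GoodReductionOutside φ T) {P : P1 K} (hP : φ.toFun P ≠ P) (A : Finset (P1 K))
    (hA : ∀ Q ∈ A, ∃ l, Rl φ.toFun Q (l + 1) P) :
    A.card ≤ (d + 2) * (2 * (2 * (2 ^ 22) ^ (sCard K T) + 1) + 1) := by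
  classical
  choose! lev hlev using hA
  set A0 := A.filter (fun Q => lev Q = 0)
  set A1 := A.filter (fun Q => lev Q ≠ 0 ∧ lev Q % 2 = 0)
  set A2 := A.filter (fun Q => lev Q ≠ 0 ∧ lev Q % 2 = 1)
  have hsub : A ⊆ A0 ∪ (A1 ∪ A2) := by
    intro Q hQ
    simp only [A0, A1, A2, Finset.mem_union, Finset.mem_filter, hQ, true_and]
    omega
  have c0 : A0.card ≤ d + 2 := by
    refine pre_count φ hd (φ.toFun P) A0 (fun R hR => ?_)
    obtain ⟨h1, h2⟩ := Finset.mem_filter.mp hR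
    have := hlev R h1
    rw [h2] at this
    exact this.2.1
  have c1 : A1.card ≤ (d + 2) * (2 * (2 ^ 22) ^ (sCard K T) + 1) := by
    refine half_class T φ hd hgr hP A1 (fun Q => lev Q - 1) (fun Q hQ => ?_) (fun Q hQ Q' hQ' => ?_)
    · obtain ⟨h1, h2, h3⟩ := Finset.mem_filter.mp hQ
      have e : lev Q - 1 + 2 = lev Q + 1 := by omega
      rw [e]; exact hlev Q h1
    · obtain ⟨h1, h2, h3⟩ := Finset.mem_filter.mp hQ
      obtain ⟨h1', h2', h3'⟩ := Finset.mem_filter.mp hQ'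
      omega
  have c2 : A2.card ≤ (d + 2) * (2 * (2 ^ 22) ^ (sCard K T) + 1) := by
    refine half_class T φ hd hgr hP A2 (fun Q => lev Q - 1) (fun Q hQ => ?_) (fun Q hQ Q' hQ' => ?_)
    · obtain ⟨h1, h2, h3⟩ := Finset.mem_filter.mp hQ
      have e : lev Q - 1 + 2 = lev Q + 1 := by omega
      rw [e]; exact hlev Q h1
    · obtain ⟨h1, h2, h3⟩ := Finset.mem_filter.mp hQ
      obtain ⟨h1', h2', h3'⟩ := Finset.mem_filter.mp hQ'
      omega
  have h1 := Finset.card_le_card hsub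
  have h2 := Finset.card_union_le A0 (A1 ∪ A2)
  have h3 := Finset.card_union_le A1 A2
  calc A.card ≤ A0.card + (A1.card + A2.card) := by omega
    _ ≤ (d + 2) + ((d + 2) * (2 * (2 ^ 22) ^ (sCard K T) + 1) + (d + 2) * (2 * (2 ^ 22) ^ (sCard K T) + 1)) := by
      exact Nat.add_le_add c0 (Nat.add_le_add c1 c2)
    _ = _ := by ring

lemma class_fix (hd : 2 ≤ d) (hgr : GoodReductionOutside φ T) {P R0 : P1 K} (hP : φ.toFun P = P)
    (hR0 : R0 ∈ Function.periodicPts φ.toFun) (hR0' : φ.toFun R0 ≠ R0) (A : Finset (P1 K))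
    (hA : ∀ Q ∈ A, ∃ l, Rl φ.toFun Q (l + 1) P) :
    A.card ≤ (d + 2) * (2 ^ (20000 * sCard K T) + 1) := by
  classical
  choose! lev hlev using hA
  refine (image_count φ hd A).trans (Nat.mul_le_mul_left _ ?_)
  set W := (A.image φ.toFun).erase P
  have hc : (A.image φ.toFun).card ≤ W.card + 1 := by
    have := Finset.pred_card_le_card_erase (s := A.image φ.toFun) (a := P)
    simp only [W]
    omega
  have hw : ∀ w ∈ W, ∃ Q ∈ A, φ.toFun Q = w := fun w hw => Finset.mem_image.mp (Finset.mem_of_mem_erase hw)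
  choose! Y hYA hYw using hw
  have hl : ∀ w ∈ W, Rl φ.toFun w (lev (Y w)) P := by
    intro w hw
    have := Rl_iter 1 (hlev (Y w) (hYA w hw))
    simpa [hYw w hw, hP] using this
  have := W_bound T φ hgr hP hR0 hR0' W (fun w => lev (Y w)) Y (fun w hw => by
    by_contra h
    have h0 : lev (Y w) = 0 := by omega
    have h1 := hl w hw
    rw [h0, Rl_zero] at h1
    exact Finset.ne_of_mem_erase hw h1.2) hl (fun w hw => hlev (Y w) (hYA w hw)) hYw
  exact hc.trans (Nat.add_le_add_right this 1)

lemma class_all (hd : 2 ≤ d) (hgr : GoodReductionOutside φ T) {P R0 : P1 K}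
    (hR0 : R0 ∈ Function.periodicPts φ.toFun) (hR0' : φ.toFun R0 ≠ R0) (A : Finset (P1 K))
    (hA : ∀ Q ∈ A, ∃ l, Rl φ.toFun Q (l + 1) P) :
    A.card ≤ (d + 2) * 2 ^ (20001 * sCard K T) := by
  have hs1 : 1 ≤ sCard K T := by
    have := Pl_nonempty T
    rw [← card_Pl T]; exact Fintype.card_pos
  by_cases hP : φ.toFun P = P
  · refine (class_fix T φ hd hgr hP hR0 hR0' A hA).trans (Nat.mul_le_mul_left _ ?_)
    obtain ⟨s, hs⟩ : ∃ s, s = sCard K T := ⟨_, rfl⟩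
    rw [← hs] at hs1 ⊢
    have h1 : 2 ^ (20001 * s) = 2 ^ (20000 * s) * 2 ^ s := by rw [← pow_add]; congr 1; ring
    have h2 : 1 ≤ 2 ^ (20000 * s) := Nat.one_le_two_pow
    have h3 : 2 ^ 1 ≤ 2 ^ s := Nat.pow_le_pow_right (by norm_num) hs1
    rw [h1]
    generalize 2 ^ (20000 * s) = Z at *
    generalize 2 ^ s = Y at *
    nlinarith
  · refine (class_one T φ hd hgr hP A hA).trans (Nat.mul_le_mul_left _ ?_)
    obtain ⟨s, hs⟩ : ∃ s, s = sCard K T := ⟨_, rfl⟩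
    rw [← hs] at hs1 ⊢
    have h1 : 2 ^ (20001 * s) = (2 ^ 22) ^ s * 2 ^ (19979 * s) := by rw [← pow_mul, ← pow_add]; congr 1; ring
    have h2 : 1 ≤ (2 ^ 22) ^ s := Nat.one_le_pow _ _ (by norm_num)
    have h3 : 2 ^ 3 ≤ 2 ^ (19979 * s) := Nat.pow_le_pow_right (by norm_num) (by omega)
    rw [h1]
    generalize (2 ^ 22) ^ s = Z at *
    generalize 2 ^ (19979 * s) = Y at *
    nlinarith

lemma tails_bound (hd : 2 ≤ d) (hgr : GoodReductionOutside φ T) {R0 : P1 K}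
    (hR0 : R0 ∈ Function.periodicPts φ.toFun) (hR0' : φ.toFun R0 ≠ R0) (A : Finset (P1 K))
    (hA : ∀ Q ∈ A, ∃ P l, Rl φ.toFun Q (l + 1) P) :
    A.card ≤ (d + 2) * 2 ^ (20001 * sCard K T) * (2 * (2 * (2 ^ 22) ^ (sCard K T) + 1)) := by
  classical
  choose! cl hcl using hA
  set M := 2 * (2 ^ 22) ^ (sCard K T) + 1 with hM
  rcases le_or_gt (A.image cl).card (2 * M) with hc | hc
  · refine (Finset.card_le_mul_card_image (f := cl) A ((d + 2) * 2 ^ (20001 * sCard K T)) ?_).trans (Nat.mul_le_mul_left _ hc)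
    intro P hP
    refine class_all T φ hd hgr (P := P) hR0 hR0' _ (fun Q hQ => ?_)
    obtain ⟨h1, h2⟩ := Finset.mem_filter.mp hQ
    rw [← h2]; exact hcl Q h1
  · obtain ⟨B1, hB1, cB1⟩ := Finset.exists_subset_card_eq (show M ≤ (A.image cl).card by omega)
    obtain ⟨B2, hB2, cB2⟩ := Finset.exists_subset_card_eq (s := A.image cl \ B1) (n := M) (by
      rw [Finset.card_sdiff_of_subset hB1]; omega)
    have hper : ∀ b ∈ A.image cl, b ∈ Function.periodicPts φ.toFun := by
      intro b hb
      obtain ⟨Q, hQ, rfl⟩ := Finset.mem_image.mp hb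
      obtain ⟨l, hl⟩ := hcl Q hQ
      exact hl.1
    have key : ∀ B : Finset (P1 K), B ⊆ A.image cl → B.card = M → (A.filter (fun Q => cl Q ∉ B)).card ≤ M := by
      intro B hB hBc
      by_contra hlt
      push Not at hlt
      refine BZ T (A.filter (fun Q => cl Q ∉ B)) B ?_ ?_ hlt.le hBc.ge
      · intro v hv a ha b hb
        obtain ⟨h1, h2⟩ := Finset.mem_filter.mp ha
        obtain ⟨l, hl⟩ := hcl a h1
        exact lemmaA φ (hgr v hv) hl (hper b (hB hb)) (fun h => h2 (h ▸ hb))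
      · intro a ha b hb he
        obtain ⟨h1, h2⟩ := Finset.mem_filter.mp ha
        obtain ⟨l, hl⟩ := hcl a h1
        exact Rl_nonper hl (he ▸ hper b (hB hb))
    have k1 := key B1 hB1 cB1
    have k2 := key B2 (fun x hx => (Finset.mem_sdiff.mp (hB2 hx)).1) cB2
    have hsub : A ⊆ A.filter (fun Q => cl Q ∉ B1) ∪ A.filter (fun Q => cl Q ∉ B2) := by
      intro Q hQ
      simp only [Finset.mem_union, Finset.mem_filter, hQ, true_and]
      by_contra h
      push Not at h
      exact (Finset.mem_sdiff.mp (hB2 h.2)).2 h.1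
    have h1 := (Finset.card_le_card hsub).trans (Finset.card_union_le _ _)
    have h2 : A.card ≤ 2 * M := by omega
    refine h2.trans (Nat.le_mul_of_pos_left _ (by positivity))

lemma preper_finset (hd : 2 ≤ d) (hgr : GoodReductionOutside φ T) {R0 : P1 K}
    (hR0 : R0 ∈ Function.periodicPts φ.toFun) (hR0' : φ.toFun R0 ≠ R0) (X : Finset (P1 K))
    (hX : ∀ Q ∈ X, IsPreperiodicPoint φ Q) :
    X.card ≤ 2 ^ (30000 * sCard K T) * d := by
  classical
  have hs1 : 1 ≤ sCard K T := by
    have := Pl_nonempty T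
    rw [← card_Pl T]; exact Fintype.card_pos
  have h1 := per_bound' T φ hd hgr (X.filter (fun Q => Q ∈ Function.periodicPts φ.toFun)) (fun P hP => (Finset.mem_filter.mp hP).2)
  have h2 := tails_bound T φ hd hgr hR0 hR0' (X.filter (fun Q => ¬ Q ∈ Function.periodicPts φ.toFun)) (by
    intro Q hQ
    obtain ⟨q1, q2⟩ := Finset.mem_filter.mp hQ
    obtain ⟨l, P, h⟩ := Rl_exists (f := φ.toFun) (hX Q q1)
    rcases l with _ | l
    · rw [Rl_zero] at h
      exact absurd (h.2 ▸ h.1) q2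
    · exact ⟨P, l, h⟩)
  have h3 := Finset.card_filter_add_card_filter_not (s := X) (fun Q => Q ∈ Function.periodicPts φ.toFun)
  obtain ⟨s, hs⟩ : ∃ s, s = sCard K T := ⟨_, rfl⟩
  rw [← hs] at hs1 h1 h2 ⊢
  rw [← h3]
  refine (Nat.add_le_add h1 h2).trans ?_
  have e1 : 2 ^ (30000 * s) = ((2 ^ 22) ^ s) ^ 6 * 2 ^ (20001 * s) * 2 ^ (9867 * s) := by
    rw [← pow_mul, ← pow_mul, ← pow_add, ← pow_add]; congr 1; ring
  have e2 : (2 ^ 22) ^ (2 * s) = ((2 ^ 22) ^ s) ^ 2 := by rw [mul_comm, pow_mul]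
  have p1 : 1 ≤ (2 ^ 22) ^ s := Nat.one_le_pow _ _ (by norm_num)
  have p2 : 1 ≤ 2 ^ (20001 * s) := Nat.one_le_two_pow
  have p3 : 2 ^ 13 ≤ 2 ^ (9867 * s) := Nat.pow_le_pow_right (by norm_num) (by omega)
  rw [e1, e2]
  generalize (2 ^ 22) ^ s = Z at *
  generalize 2 ^ (20001 * s) = U at *
  generalize 2 ^ (9867 * s) = V at *
  clear h1 h2 h3 e1 e2 hX
  have z6 : 1 ≤ Z ^ 6 := Nat.one_le_pow _ _ p1
  have z2 : Z ^ 2 ≤ Z ^ 6 := Nat.pow_le_pow_right p1 (by norm_num)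
  have z1 : Z ≤ Z ^ 6 := by simpa using Nat.pow_le_pow_right p1 (show 1 ≤ 6 by norm_num)
  have e3 : (4 * Z ^ 2) ^ 3 = 64 * Z ^ 6 := by ring
  rw [e3]
  generalize Z ^ 6 = Y at *
  have w1 : Y ≤ Y * U := Nat.le_mul_of_pos_right _ p2
  have w2 : 1 ≤ Y * U := z6.trans w1
  have t1 : 4 * Z ^ 2 + 64 * Y * (d + 1) + 2 ≤ (Y * U) * (150 * d) := by
    have : 64 * Y * (d + 1) ≤ 64 * (Y * U) * (d + 1) := Nat.mul_le_mul_right _ (by omega)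
    have : (Y * U) * (4 + 64 * (d + 1) + 2) ≤ (Y * U) * (150 * d) := Nat.mul_le_mul_left _ (by omega)
    nlinarith
  have t2 : (d + 2) * U * (2 * (2 * Z + 1)) ≤ (Y * U) * (12 * d) := by
    have : U * (2 * (2 * Z + 1)) ≤ U * (6 * Y) := Nat.mul_le_mul_left _ (by omega)
    calc (d + 2) * U * (2 * (2 * Z + 1)) = (d + 2) * (U * (2 * (2 * Z + 1))) := by ring
      _ ≤ (2 * d) * (U * (6 * Y)) := Nat.mul_le_mul (by omega) this
      _ = _ := by ring
  refine (Nat.add_le_add t1 t2).trans ?_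
  calc Y * U * (150 * d) + Y * U * (12 * d) = Y * U * 162 * d := by ring
    _ ≤ _ := Nat.mul_le_mul_right _ (Nat.mul_le_mul_left _ (by omega))

end fin

/-- **Theorem (linear bound on preperiodic points).**
If `φ : ℙ¹ → ℙ¹` of degree `d ≥ 2` is defined over a number field `K`, has good reduction
outside a finite set `S` of places of `K` containing all archimedean ones, and has a
`K`-rational periodic point of period at least two, then
`|PrePer(φ,K)| ≤ max{T(|S|) + CV(d,|S|), L₄(d,|S|) + 2L₂(d,|S|) + 3, 3L₃(d,|S|) + 3}`,
a linear polynomial in `d` whose coefficients depend only on `|S|`. -/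
theorem preper_bound_linear
    {K : Type*} [Field K] [NumberField K]
    (T : Finset (HeightOneSpectrum (𝓞 K))) {d : ℕ} (hd : 2 ≤ d)
    (φ : P1Map K d) (hgr : GoodReductionOutside φ T)
    (P₀ : P1 K) (hP₀ : IsPeriodicPoint φ P₀) (hP₀' : φ.toFun P₀ ≠ P₀) :
    {P : P1 K | IsPreperiodicPoint φ P}.Finite ∧
      ({P : P1 K | IsPreperiodicPoint φ P}.ncard : ℝ) ≤
        max ((12 * 7 ^ (4 * sCard K T) : ℝ) + CVconst d (sCard K T))
          (max (L4const d (sCard K T) + 2 * L2const d (sCard K T) + 3)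
            (3 * (L3const d (sCard K T) : ℝ) + 3)) := by
  have hs1 : 1 ≤ sCard K T := by
    have := Pl_nonempty T
    rw [← card_Pl T]; exact Fintype.card_pos
  have hb := fun X hX => preper_finset T φ hd hgr (R0 := P₀) hP₀ hP₀' X hX
  have hfin : {P : P1 K | IsPreperiodicPoint φ P}.Finite := by
    by_contra hinf
    obtain ⟨X, hX, hc⟩ := Set.Infinite.exists_subset_card_eq hinf (2 ^ (30000 * sCard K T) * d + 1)
    have := hb X (fun Q hQ => hX hQ)
    rw [hc] at this
    exact Nat.not_succ_le_self _ this
  refine ⟨hfin, ?_⟩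
  have h1 : {P : P1 K | IsPreperiodicPoint φ P}.ncard ≤ 2 ^ (30000 * sCard K T) * d := by
    rw [Set.ncard_eq_toFinset_card _ hfin]
    exact hb _ (fun Q hQ => by simpa using hQ)
  refine le_trans ?_ ((le_max_left _ _).trans (le_max_right _ _))
  obtain ⟨s, hs⟩ : ∃ s, s = sCard K T := ⟨_, rfl⟩
  rw [← hs] at hs1 h1 ⊢
  have hd' : (2:ℝ) ≤ d := by exact_mod_cast hd
  have hs' : (1:ℝ) ≤ s := by exact_mod_cast hs1
  have hC0 : 0 < Cconst 3 s := Real.exp_pos _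
  have hL2 : (2 * (Cconst 3 s + 2) + 1) * d + 1 ≤ L2const d s := le_max_left _ _
  have hL4 : 0 ≤ L4const d s := mul_nonneg (by linarith) (by linarith)
  have hC : (2:ℝ) ^ (30000 * s) ≤ Cconst 3 s := by
    have e2 : (2:ℝ) ≤ Real.exp 1 := by
      have := Real.add_one_le_exp (1:ℝ)
      linarith
    calc (2:ℝ) ^ (30000 * s) ≤ (Real.exp 1) ^ (30000 * s) := pow_le_pow_left₀ (by norm_num) e2 _
      _ = Real.exp ((30000 * s : ℕ) : ℝ) := by rw [← Real.exp_nat_mul, mul_one]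
      _ ≤ _ := by
        rw [Cconst, Real.exp_le_exp]
        push_cast
        norm_num
        nlinarith
  have h2 : ({P : P1 K | IsPreperiodicPoint φ P}.ncard : ℝ) ≤ 2 ^ (30000 * s) * d := by exact_mod_cast h1
  have h3 : (2:ℝ) ^ (30000 * s) * d ≤ Cconst 3 s * d := mul_le_mul_of_nonneg_right hC (by linarith)
  have h4 : 0 ≤ Cconst 3 s * d := by positivity
  nlinarith
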